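/- arXiv:0711.3488 — 2 statements merged into one kernel-verified Lean document; each statement's English description precedes it below -/
import Mathlib

section
/- Let r ≥ 2, c = r^{-(2r+9)(r+1)}, n ≥ e^{2/c}, and let G be a graph of order n. If μ(G) > μ(T_r(n)), then G contains a copy of K_r^+(⌊c ln n⌋, …, ⌊c ln n⌋), the complete r-partite graph with all r parts of size ⌊c ln n⌋ and one extra edge added inside the first part. -/
/-!
The proof has a spectral half, which finds a dense induced subgraph containing `K_{r+1}`, and a
combinatorial half, which finds `K_r^+` in such a subgraph.

*Spectral half.* Let `lam` be slightly smaller than `1 - 1/r`. As long as some vertex has degree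
noticeably below `lam` times the order, deleting the vertex with the smallest entry in the Perron
eigenvector lowers the largest eigenvalue by at most `lam` (`exists_delete`), so that `specMax -
lam * order` does not decrease. The process stops at an induced subgraph `H` whose minimum degree
is nearly `(1 - 1/r)` times its order (`exists_induced_minDegree`); the order of `H` is linear
because it is at least `specMax`, which exceeds a fixed multiple of the order of `G`. If `H` had no
`K_{r+1}`, then by the Andrásfai–Erdős–Sós theorem it would be `r`-colourable. The eigenvector
equation, summed over the colour classes of sizes `nᵢ`, gives `∑ nᵢ / (μ + nᵢ) ≥ 1`
(`one_le_sum_of_coloring`); by concavity this implies `μ ≤ (1 - 1/r) m` for a graph of order `m`,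
and `μ ≤ μ(T_r(m))`, because the left-hand side decreases in `μ` and is largest for balanced
classes, for which it equals `1` at `μ = μ(T_r(m))`. The first bound is violated if at least one
vertex was deleted, the second if `H` is `G` itself. Hence `H` contains `K_{r+1}`
(`exists_dense_induced`).

*Combinatorial half.* Starting from a clique `S` of order `r + 1` and an empty clique `T`, vertices
of `S` are traded for vertices of `T`: by the minimum degree, a positive proportion of all vertices
is joined to all of `T` and to all but at most one vertex of `S` (`card_almost_common`). By
averaging, there are an edge `uv` and a positive proportion of `(r-1)`-tuples which form cliques in
the common neighbourhood of `u` and `v` (`exists_cliqueExt_large`). Each of these cliques extends by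
one more vertex in a positive proportion of ways. The resulting dense family of `r`-cliques contains
logarithmically many disjoint ones that span a complete `r`-partite graph (`exists_diagonal`), and
placing `u` and `v` in the part of the last added vertices gives `K_r^+`
(`containsPlus_of_diagonal`).
-/

/-- The largest adjacency eigenvalue of a finite simple graph. -/
noncomputable def SimpleGraph.specMax {V : Type*} [Fintype V] [DecidableEq V]
    (G : SimpleGraph V) : ℝ :=
  letI := Classical.decRel G.Adj
  ⨆ i, (Matrix.IsHermitian.eigenvalues
    (A := G.adjMatrix ℝ)
    (by rw [Matrix.IsHermitian, Matrix.conjTranspose_eq_transpose_of_trivial]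
        exact SimpleGraph.isSymm_adjMatrix G)) i

/-- `G` contains a copy of the complete multipartite graph whose parts have
sizes `s 0, …, s (r-1)`, with one extra edge added inside part `i₀`. -/
def SimpleGraph.ContainsKPartitePlus {V : Type*} (G : SimpleGraph V) {r : ℕ}
    (s : Fin r → ℕ) (i₀ : Fin r) : Prop :=
  ∃ A : Fin r → Finset V,
    (Pairwise fun i j => Disjoint (A i) (A j)) ∧
    (∀ i, (A i).card = s i) ∧
    (∀ i j, i ≠ j → ∀ x ∈ A i, ∀ y ∈ A j, G.Adj x y) ∧
    (∃ x ∈ A i₀, ∃ y ∈ A i₀, x ≠ y ∧ G.Adj x y)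

/-! ### The largest eigenvalue -/

open Classical in
/-- The `(u, v)` entry of the adjacency matrix of `G`, as a real number. -/
noncomputable def adjInd {V : Type*} (G : SimpleGraph V) (u v : V) : ℝ :=
  if G.Adj u v then 1 else 0

theorem adjInd_of_adj {V : Type*} {G : SimpleGraph V} {u v : V} (h : G.Adj u v) :
    adjInd G u v = 1 := by simp [adjInd, h]

theorem adjInd_of_not {V : Type*} {G : SimpleGraph V} {u v : V} (h : ¬ G.Adj u v) :
    adjInd G u v = 0 := by simp [adjInd, h]

theorem adjInd_nonneg {V : Type*} (G : SimpleGraph V) (u v : V) : 0 ≤ adjInd G u v := by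
  unfold adjInd; split_ifs <;> norm_num

theorem adjInd_le_one {V : Type*} (G : SimpleGraph V) (u v : V) : adjInd G u v ≤ 1 := by
  unfold adjInd; split_ifs <;> norm_num

theorem adjInd_comm {V : Type*} (G : SimpleGraph V) (u v : V) : adjInd G u v = adjInd G v u := by
  by_cases h : G.Adj u v
  · rw [adjInd_of_adj h, adjInd_of_adj h.symm]
  · rw [adjInd_of_not h, adjInd_of_not (fun h' => h h'.symm)]

theorem adjInd_self {V : Type*} (G : SimpleGraph V) (u : V) : adjInd G u u = 0 :=
  adjInd_of_not (G.loopless.irrefl u)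

/-- The two consequences of the spectral theorem from which every other fact about `specMax` is
derived: `μ - A` is positive semidefinite, and `μ` has a unit eigenvector. -/
theorem specMax_basic {V : Type*} [Fintype V] [DecidableEq V] (G : SimpleGraph V) :
    ∃ A : Matrix V V ℝ, (∀ u v, A u v = adjInd G u v) ∧
      (G.specMax • (1 : Matrix V V ℝ) - A).PosSemidef ∧
      (Nonempty V → ∃ x : V → ℝ, ∑ v, x v ^ 2 = 1 ∧ A.mulVec x = G.specMax • x) := by
  classical
  let d := Classical.decRel G.Adj
  have hA : (G.adjMatrix ℝ).IsHermitian := by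
    rw [Matrix.IsHermitian, Matrix.conjTranspose_eq_transpose_of_trivial]
    exact SimpleGraph.isSymm_adjMatrix G
  have hdef : G.specMax = ⨆ i, hA.eigenvalues i := rfl
  refine ⟨G.adjMatrix ℝ, fun u v => ?_, ?_, ?_⟩
  · rw [SimpleGraph.adjMatrix_apply, adjInd]
  · have hH : (G.specMax • (1 : Matrix V V ℝ) - G.adjMatrix ℝ).IsHermitian := by
      refine Matrix.IsHermitian.sub ?_ hA
      simp [Matrix.IsHermitian]
    rw [Matrix.posSemidef_iff_isHermitian_and_spectrum_nonneg]
    refine ⟨hH, ?_⟩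
    rw [← Algebra.algebraMap_eq_smul_one, ← spectrum.singleton_sub_eq,
      hA.spectrum_real_eq_range_eigenvalues]
    rintro a ⟨b, hb, e, ⟨i, rfl⟩, rfl⟩
    rw [Set.mem_singleton_iff] at hb
    subst hb
    simp only [Set.mem_ofPred_eq, sub_nonneg]
    rw [hdef]
    exact le_ciSup (Set.finite_range _).bddAbove i
  · intro hne
    obtain ⟨i, hi⟩ := exists_eq_ciSup_of_finite (f := hA.eigenvalues)
    refine ⟨hA.eigenvectorBasis i, ?_, ?_⟩
    · have := hA.eigenvectorBasis.orthonormal.1 i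
      rw [EuclideanSpace.norm_eq, Real.sqrt_eq_one] at this
      simpa using this
    · rw [hdef, ← hi]; exact hA.mulVec_eigenvectorBasis i

theorem specMax_quad {V : Type*} [Fintype V] [DecidableEq V] {G : SimpleGraph V}
    {A : Matrix V V ℝ} (hA : ∀ u v, A u v = adjInd G u v) (μ : ℝ) (x : V → ℝ) :
    x ⬝ᵥ (μ • (1 : Matrix V V ℝ) - A).mulVec x =
      μ * ∑ u, x u ^ 2 - ∑ u, ∑ v, adjInd G u v * (x u * x v) := by
  rw [Matrix.sub_mulVec, dotProduct_sub, Matrix.smul_mulVec, Matrix.one_mulVec]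
  simp only [dotProduct, Matrix.mulVec, hA, Pi.smul_apply, smul_eq_mul, Finset.mul_sum]
  congr 1
  · exact Finset.sum_congr rfl fun u _ => by ring
  · exact Finset.sum_congr rfl fun u _ => Finset.sum_congr rfl fun v _ => by ring

theorem specMax_rayleigh {V : Type*} [Fintype V] [DecidableEq V] (G : SimpleGraph V)
    (x : V → ℝ) :
    ∑ u, ∑ v, adjInd G u v * (x u * x v) ≤ G.specMax * ∑ u, x u ^ 2 := by
  obtain ⟨A, hA, hP, -⟩ := specMax_basic G
  have := hP.dotProduct_mulVec_nonneg x
  rw [star_trivial, specMax_quad hA] at this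
  linarith

/-- A nonnegative unit eigenvector for the largest eigenvalue: if `y` is any unit eigenvector then
`|y|` still maximizes the Rayleigh quotient, hence lies in the kernel of `μ - A`. -/
theorem specMax_eigen {V : Type*} [Fintype V] [DecidableEq V] [Nonempty V] (G : SimpleGraph V) :
    ∃ x : V → ℝ, (∀ v, 0 ≤ x v) ∧ ∑ v, x v ^ 2 = 1 ∧
      ∀ u, ∑ v, adjInd G u v * x v = G.specMax * x u := by
  obtain ⟨A, hA, hP, hE⟩ := specMax_basic G
  obtain ⟨y, hy1, hy⟩ := hE inferInstance
  have hn : ∑ v, |y v| ^ 2 = 1 := by simpa using hy1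
  have hyq : ∑ u, ∑ v, adjInd G u v * (y u * y v) = G.specMax := by
    have h0 : y ⬝ᵥ (G.specMax • (1 : Matrix V V ℝ) - A).mulVec y = 0 := by
      rw [Matrix.sub_mulVec, hy, Matrix.smul_mulVec, Matrix.one_mulVec, sub_self, dotProduct_zero]
    rw [specMax_quad hA, hy1] at h0
    linarith
  have hle : G.specMax ≤ ∑ u, ∑ v, adjInd G u v * (|y u| * |y v|) := by
    rw [← hyq]
    refine Finset.sum_le_sum fun u _ => Finset.sum_le_sum fun v _ => ?_
    refine mul_le_mul_of_nonneg_left ?_ (adjInd_nonneg _ _ _)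
    rw [← abs_mul]; exact le_abs_self _
  have hz : (fun v => |y v|) ⬝ᵥ
      (G.specMax • (1 : Matrix V V ℝ) - A).mulVec (fun v => |y v|) = 0 := by
    refine le_antisymm ?_ (by simpa using hP.dotProduct_mulVec_nonneg (fun v => |y v|))
    rw [specMax_quad hA, hn]; linarith
  have := (hP.dotProduct_mulVec_zero_iff (fun v => |y v|)).1 (by simpa using hz)
  refine ⟨fun v => |y v|, fun v => abs_nonneg _, hn, fun u => ?_⟩
  have hu := congrFun this u
  rw [Matrix.sub_mulVec, Matrix.smul_mulVec, Matrix.one_mulVec] at hu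
  simp only [Pi.sub_apply, Pi.smul_apply, smul_eq_mul, Matrix.mulVec, dotProduct, hA,
    Pi.zero_apply] at hu
  linarith

/-! ### Colourable graphs and Turán graphs -/

/-- If `G` is properly coloured by `c` with class sizes `nᵢ`, and `μ` is its largest eigenvalue,
then `∑ nᵢ / (μ + nᵢ) ≥ 1`. Summing the eigenvector equation over class `i` gives
`μ Sᵢ ≤ nᵢ (S - Sᵢ)` for the sums `Sᵢ` of the eigenvector over the classes. -/
theorem one_le_sum_of_coloring {V : Type*} [Fintype V] [DecidableEq V] [Nonempty V]
    (G : SimpleGraph V) {r : ℕ} (c : V → Fin r) (hc : ∀ u v, G.Adj u v → c u ≠ c v)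
    (hμ : 0 < G.specMax) :
    1 ≤ ∑ i, ((Finset.univ.filter (fun v => c v = i)).card : ℝ) /
      (G.specMax + (Finset.univ.filter (fun v => c v = i)).card) := by
  obtain ⟨x, hx0, hx1, hx⟩ := specMax_eigen G
  set μ := G.specMax
  set S := ∑ v, x v with hS
  have hSpos : 0 < S := by
    refine lt_of_le_of_ne (Finset.sum_nonneg fun v _ => hx0 v) fun h => ?_
    have h0 := (Finset.sum_eq_zero_iff_of_nonneg (fun v _ => hx0 v)).1 h.symm
    rw [Finset.sum_eq_zero (fun v hv => by rw [h0 v hv]; norm_num)] at hx1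
    norm_num at hx1
  have key : ∀ i, (∑ v with c v = i, x v) ≤ ((Finset.univ.filter (fun v => c v = i)).card : ℝ) /
      (μ + (Finset.univ.filter (fun v => c v = i)).card) * S := by
    intro i
    set N := Finset.univ.filter (fun v => c v = i)
    set Si := ∑ v ∈ N, x v with hSi
    have h1 : ∀ v ∈ N, μ * x v ≤ S - Si := by
      intro v hv
      rw [← hx v, hSi, Finset.sum_filter, ← Finset.sum_sub_distrib]
      refine Finset.sum_le_sum fun w _ => ?_
      have hv' : c v = i := by simpa [N] using hv
      by_cases hw : c w = i
      · rw [adjInd_of_not (fun h => hc v w h (by rw [hv', hw]))]; simp [hw]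
      · simp only [hw, if_false, sub_zero]
        exact mul_le_of_le_one_left (hx0 w) (adjInd_le_one _ _ _)
    have h2 := Finset.sum_le_sum h1
    rw [← Finset.mul_sum, Finset.sum_const, nsmul_eq_mul, ← hSi] at h2
    have hp : 0 < μ + (N.card : ℝ) := by positivity
    rw [div_mul_eq_mul_div, le_div_iff₀ hp]
    linarith
  have hsum := Finset.sum_le_sum (fun i (_ : i ∈ Finset.univ) => key i)
  rw [Finset.sum_fiberwise, ← Finset.sum_mul, ← hS] at hsum
  exact le_of_mul_le_mul_right (by linarith) hSpos

theorem sum_class_card {V : Type*} [Fintype V] {r : ℕ} (c : V → Fin r) :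
    ∑ i, ((Finset.univ.filter (fun v => c v = i)).card : ℝ) = Fintype.card V := by
  have := Finset.card_eq_sum_card_fiberwise (f := c) (s := Finset.univ) (t := Finset.univ)
    (fun _ _ => Finset.mem_coe.2 (Finset.mem_univ _))
  rw [← Finset.card_univ, this]; push_cast; rfl

/-- An `r`-colourable graph of order `m` has largest eigenvalue at most `(1 - 1/r) m`. -/
theorem specMax_le_of_coloring {V : Type*} [Fintype V] [DecidableEq V] [Nonempty V]
    (G : SimpleGraph V) {r : ℕ} (hr : 1 ≤ r) (c : V → Fin r)
    (hc : ∀ u v, G.Adj u v → c u ≠ c v) :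
    (r : ℝ) * G.specMax ≤ (r - 1) * Fintype.card V := by
  have hr' : (1 : ℝ) ≤ r := by exact_mod_cast hr
  rcases le_or_gt G.specMax 0 with hμ | hμ
  · have : 0 ≤ ((r : ℝ) - 1) * Fintype.card V :=
      mul_nonneg (by linarith) (Nat.cast_nonneg _)
    nlinarith
  have h1 := one_le_sum_of_coloring G c hc hμ
  have hs := sum_class_card c
  set μ := G.specMax
  set N : Fin r → ℝ := fun i => ((Finset.univ.filter (fun v => c v = i)).card : ℝ) with hN
  have hN0 : ∀ i, 0 ≤ N i := fun i => Nat.cast_nonneg _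
  change 1 ≤ ∑ i, N i / (μ + N i) at h1
  change ∑ i, N i = _ at hs
  have h2 := Finset.sq_sum_div_le_sum_sq_div (R := ℝ) Finset.univ (fun _ : Fin r => (1 : ℝ))
    (g := fun i => μ + N i) (fun i _ => by have := hN0 i; positivity)
  have h3 : ∑ i, N i / (μ + N i) = r - μ * ∑ i, (1 : ℝ) ^ 2 / (μ + N i) := by
    have : (r : ℝ) = ∑ i : Fin r, 1 := by simp
    rw [this, Finset.mul_sum, ← Finset.sum_sub_distrib]
    refine Finset.sum_congr rfl fun i _ => ?_
    have : μ + N i ≠ 0 := by have := hN0 i; positivity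
    field_simp; ring
  simp only [Finset.sum_add_distrib, Finset.sum_const, Finset.card_univ, Fintype.card_fin,
    nsmul_eq_mul, hs, mul_one] at h2
  have hpos : 0 < (r : ℝ) * μ + Fintype.card V := by positivity
  rw [div_le_iff₀ hpos] at h2
  set Q := ∑ i, (1 : ℝ) ^ 2 / (μ + N i)
  have h4 : μ * Q ≤ r - 1 := by linarith
  have h5 : μ * (r : ℝ) ^ 2 ≤ (r - 1) * (r * μ + Fintype.card V) := by
    calc μ * (r : ℝ) ^ 2 ≤ μ * (Q * (r * μ + Fintype.card V)) := by gcongr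
      _ = (μ * Q) * (r * μ + Fintype.card V) := by ring
      _ ≤ _ := by gcongr
  nlinarith

/-- If `G` is complete multipartite with class sizes `tᵢ` and `∑ tᵢ / (μ + tᵢ) ≥ 1`, then `μ` is at
most the largest eigenvalue of `G`: test the Rayleigh quotient on `1 / (μ + tᵢ)`. -/
theorem le_specMax_of_multipartite {V : Type*} [Fintype V] [DecidableEq V]
    (G : SimpleGraph V) {r : ℕ} (c : V → Fin r) (hc : ∀ u v, G.Adj u v ↔ c u ≠ c v)
    {μ : ℝ} (hμ : 0 < μ)
    (h : 1 ≤ ∑ i, ((Finset.univ.filter (fun v => c v = i)).card : ℝ) /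
      (μ + (Finset.univ.filter (fun v => c v = i)).card)) :
    μ ≤ G.specMax := by
  set N : Fin r → ℝ := fun i => ((Finset.univ.filter (fun v => c v = i)).card : ℝ) with hN
  have hN0 : ∀ i, 0 ≤ N i := fun i => Nat.cast_nonneg _
  have hp : ∀ i, 0 < μ + N i := fun i => by have := hN0 i; positivity
  change 1 ≤ ∑ i, N i / (μ + N i) at h
  set y : V → ℝ := fun v => 1 / (μ + N (c v)) with hy
  have hclass : ∀ u, ∑ v, (if c v = c u then y v else 0) = N (c u) * y u := by
    intro u
    rw [← Finset.sum_filter, Finset.sum_congr rfl (g := fun _ => y u), Finset.sum_const,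
      nsmul_eq_mul]
    intro v hv
    simp only [hy, (Finset.mem_filter.1 hv).2]
  have hX : ∑ v, y v = ∑ i, N i / (μ + N i) := by
    rw [← Finset.sum_fiberwise Finset.univ c y]
    refine Finset.sum_congr rfl fun i _ => ?_
    rw [Finset.sum_congr rfl (g := fun _ => 1 / (μ + N i)), Finset.sum_const, nsmul_eq_mul]
    · simp only [hN]; ring
    · intro v hv
      simp only [hy, (Finset.mem_filter.1 hv).2]
  have hR := specMax_rayleigh G y
  have hq : ∑ u, ∑ v, adjInd G u v * (y u * y v) = (∑ v, y v) ^ 2 - ∑ u, N (c u) * y u ^ 2 := by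
    rw [sq, Finset.sum_mul, ← Finset.sum_sub_distrib]
    refine Finset.sum_congr rfl fun u _ => ?_
    have : N (c u) * y u ^ 2 = y u * (N (c u) * y u) := by ring
    rw [this, ← hclass u, ← mul_sub, ← Finset.sum_sub_distrib, Finset.mul_sum]
    refine Finset.sum_congr rfl fun v _ => ?_
    by_cases h' : c v = c u
    · rw [adjInd_of_not (by rw [hc]; simp [h'])]; simp [h']
    · rw [adjInd_of_adj ((hc u v).2 (Ne.symm h'))]; simp [h']
  have hsum : ∑ u, N (c u) * y u ^ 2 = ∑ u, y u - μ * ∑ u, y u ^ 2 := by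
    rw [Finset.mul_sum, ← Finset.sum_sub_distrib]
    refine Finset.sum_congr rfl fun u _ => ?_
    have := (hp (c u)).ne'
    simp only [hy]; field_simp; ring
  rw [hq, hsum] at hR
  rw [← hX] at h
  have hpos : 0 < ∑ u, y u ^ 2 := by
    have hne : (Finset.univ : Finset V).Nonempty := by
      by_contra hem
      rw [Finset.not_nonempty_iff_eq_empty.1 hem] at h
      norm_num at h
    exact Finset.sum_pos (fun u _ => by have := hp (c u); positivity) hne
  refine le_of_mul_le_mul_right ?_ hpos
  nlinarith

/-- The class of a vertex of the Turán graph. -/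
def turanClass (n : ℕ) {r : ℕ} (hr : 0 < r) (v : Fin n) : Fin r := ⟨v % r, Nat.mod_lt _ hr⟩

theorem turanGraph_adj_iff_class {n r : ℕ} (hr : 0 < r) (u v : Fin n) :
    (SimpleGraph.turanGraph n r).Adj u v ↔ turanClass n hr u ≠ turanClass n hr v := by
  rw [SimpleGraph.turanGraph_adj]; simp [turanClass]

theorem turanClass_card {n r : ℕ} (hr : 0 < r) (i : Fin r) :
    (Finset.univ.filter (fun v => turanClass n hr v = i)).card = n / r ∨
    (Finset.univ.filter (fun v => turanClass n hr v = i)).card = n / r + 1 := by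
  have h : (Finset.univ.filter (fun v => turanClass n hr v = i)).card
      = n.count (· ≡ i.1 [MOD r]) := by
    rw [Nat.count_eq_card_filter_range]
    refine Finset.card_bij (fun v _ => v.1) ?_ ?_ ?_
    · intro v hv
      have : v.1 % r = i.1 := by simpa [turanClass, Fin.ext_iff] using hv
      simp [Nat.ModEq, this, Nat.mod_eq_of_lt i.2]
    · intro a _ b _ h; exact Fin.ext h
    · intro b hb
      simp only [Finset.mem_filter, Finset.mem_range, Nat.ModEq, Nat.mod_eq_of_lt i.2] at hb
      exact ⟨⟨b, hb.1⟩, by simp [turanClass, Fin.ext_iff, hb.2], rfl⟩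
  rw [h, Nat.count_modEq_card _ hr]
  split_ifs <;> simp

/-- Among integer vectors of given sum, `∑ nᵢ / (μ + nᵢ)` is largest for balanced ones: the concave
function `x / (μ + x)` lies below its chord through `q` and `q + 1` at all integers. -/
theorem sum_div_le_of_balanced {r q : ℕ} {μ : ℝ} (hμ : 0 < μ) (N t : Fin r → ℕ)
    (ht : ∀ i, t i = q ∨ t i = q + 1) (hs : ∑ i, (N i : ℝ) = ∑ i, (t i : ℝ)) :
    ∑ i, (N i : ℝ) / (μ + N i) ≤ ∑ i, (t i : ℝ) / (μ + t i) := by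
  set s : ℝ := μ / ((μ + q) * (μ + q + 1)) with hsdef
  have hq : 0 < μ + q := by positivity
  have h1 : ∀ m : ℕ, (m : ℝ) / (μ + m) ≤ q / (μ + q) + s * (m - q) := by
    intro m
    have hm : 0 < μ + m := by positivity
    have e : q / (μ + q) + s * (m - q) - (m : ℝ) / (μ + m)
        = μ * ((m - q) * (m - q - 1)) / ((μ + q) * (μ + q + 1) * (μ + m)) := by
      rw [hsdef]; field_simp; ring
    have : 0 ≤ ((m : ℝ) - q) * (m - q - 1) := by
      rcases le_or_gt m q with h | h
      · have : (m : ℝ) ≤ q := by exact_mod_cast h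
        nlinarith
      · have : (q : ℝ) + 1 ≤ m := by exact_mod_cast h
        nlinarith
    have : 0 ≤ μ * (((m : ℝ) - q) * (m - q - 1)) / ((μ + q) * (μ + q + 1) * (μ + m)) := by
      positivity
    linarith
  have h2 : ∀ i, (t i : ℝ) / (μ + t i) = q / (μ + q) + s * (t i - q) := by
    intro i
    rcases ht i with h | h
    · rw [h]; ring
    · rw [h, hsdef]; push_cast; field_simp; ring
  rw [Finset.sum_congr rfl fun i _ => h2 i]
  refine (Finset.sum_le_sum fun i _ => h1 (N i)).trans (le_of_eq ?_)
  simp only [Finset.sum_add_distrib, ← Finset.mul_sum, Finset.sum_sub_distrib, hs]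

/-- Among the `r`-colourable graphs of given order with an edge, the Turán graph has the largest
`specMax`. -/
theorem specMax_le_turan_of_coloring {V : Type*} [Fintype V] [DecidableEq V] [Nonempty V]
    (G : SimpleGraph V) {r : ℕ} (hr : 1 ≤ r) (c : V → Fin r)
    (hc : ∀ u v, G.Adj u v → c u ≠ c v) (hμ : 0 < G.specMax) :
    G.specMax ≤ (SimpleGraph.turanGraph (Fintype.card V) r).specMax := by
  have h1 := one_le_sum_of_coloring G c hc hμ
  refine le_specMax_of_multipartite _ (turanClass _ hr) (turanGraph_adj_iff_class hr) hμ
    (h1.trans ?_)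
  refine sum_div_le_of_balanced hμ _ _ (turanClass_card hr) ?_
  rw [sum_class_card, sum_class_card, Fintype.card_fin]

/-- The all-ones vector as a test vector: the classes have sizes within `1` of `n / r`, so the Turán
graph has average degree at least `(1 - 1/r) n - r / n`. -/
theorem le_specMax_turan {n r : ℕ} (hr : 1 ≤ r) (hn : 0 < n) :
    (1 - 1 / (r : ℝ)) * n - r / n ≤ (SimpleGraph.turanGraph n r).specMax := by
  have hR := specMax_rayleigh (SimpleGraph.turanGraph n r) (fun _ => 1)
  have hr0 : (0 : ℝ) < r := by exact_mod_cast hr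
  have hn0 : (0 : ℝ) < n := by exact_mod_cast hn
  set t : Fin r → ℝ := fun i => ((Finset.univ.filter (fun v => turanClass n hr v = i)).card : ℝ)
    with ht
  have hsum : ∑ i, t i = n := by
    have := sum_class_card (turanClass n hr)
    rwa [Fintype.card_fin] at this
  have hrow : ∀ u, ∑ v, adjInd (SimpleGraph.turanGraph n r) u v = n - t (turanClass n hr u) := by
    intro u
    have e : ∀ v, adjInd (SimpleGraph.turanGraph n r) u v
        = 1 - if turanClass n hr v = turanClass n hr u then 1 else 0 := by
      intro v
      by_cases h' : turanClass n hr v = turanClass n hr u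
      · rw [adjInd_of_not (by rw [turanGraph_adj_iff_class hr]; simp [h'])]; simp [h']
      · rw [adjInd_of_adj ((turanGraph_adj_iff_class hr u v).2 (Ne.symm h'))]; simp [h']
    simp only [e, Finset.sum_sub_distrib, ht]
    simp
  have hquad : ∑ u, ∑ v, adjInd (SimpleGraph.turanGraph n r) u v * ((1 : ℝ) * 1)
      = n ^ 2 - ∑ i, t i ^ 2 := by
    simp only [mul_one, hrow, Finset.sum_sub_distrib]
    have : ∑ u, t (turanClass n hr u) = ∑ i, t i ^ 2 := by
      rw [← Finset.sum_fiberwise Finset.univ (turanClass n hr)]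
      refine Finset.sum_congr rfl fun i _ => ?_
      rw [Finset.sum_congr rfl (g := fun _ => t i), Finset.sum_const, nsmul_eq_mul, sq]
      intro v hv
      rw [(Finset.mem_filter.1 hv).2]
    rw [this]; simp; ring
  have hdev : ∀ i, t i ^ 2 ≤ 1 + 2 * (n / r) * t i - (n / r) ^ 2 := by
    intro i
    have h1 : (n / r : ℕ) ≤ (n : ℝ) / r := Nat.cast_div_le
    have h2 : (n : ℝ) / r < (n / r : ℕ) + 1 := by
      rw [div_lt_iff₀ hr0, mul_comm]; exact_mod_cast Nat.lt_mul_div_succ n hr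
    have : (t i - n / r) ^ 2 ≤ 1 := by
      rw [sq_le_one_iff_abs_le_one, abs_le]
      rcases turanClass_card (n := n) hr i with h | h <;> simp only [ht, h] <;> push_cast <;>
        constructor <;> linarith
    nlinarith
  have hsq : ∑ i, t i ^ 2 ≤ n ^ 2 / r + r := by
    refine (Finset.sum_le_sum fun i _ => hdev i).trans (le_of_eq ?_)
    simp only [Finset.sum_sub_distrib, Finset.sum_add_distrib, ← Finset.mul_sum, hsum]
    simp
    field_simp; ring
  rw [hquad] at hR
  simp only [one_pow, Finset.sum_const, Finset.card_univ, Fintype.card_fin, nsmul_eq_mul,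
    mul_one] at hR
  refine le_of_mul_le_mul_right ?_ hn0
  calc ((1 - 1 / (r : ℝ)) * n - r / n) * n = n ^ 2 - (n ^ 2 / r + r) := by field_simp; ring
    _ ≤ _ := by linarith

/-! ### Deleting vertices -/

theorem sum_ne_subtype {V : Type*} [Fintype V] [DecidableEq V] (u : V) (f : V → ℝ) :
    ∑ p : {w : V | w ≠ u}, f p = ∑ w, f w - f u := by
  rw [← Finset.sum_erase_eq_sub (Finset.mem_univ u)]
  exact (Finset.sum_subtype (Finset.univ.erase u) (by simp) f).symm

/-- If some vertex has small degree, then deleting the vertex `u` with the smallest entry in the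
Perron eigenvector decreases the largest eigenvalue by at most `lam`. Indeed, the loss is about
`μ z`, where `z` is the square of that entry, and the eigenvector equation at a vertex of small
degree forces `z` to be well below `1 / m`, where `m` is the order of `G`. -/
theorem exists_delete {V : Type*} [Fintype V] [DecidableEq V] (G : SimpleGraph V)
    {lam β : ℝ} (hlam : 0 < lam) (hβ0 : 0 ≤ β) (hβ1 : β ≤ 1) (hβ2 : β ≤ 2 * lam)
    (hV : 2 ≤ Fintype.card V) (v : V)
    (hv : ∑ w, adjInd G v w < β * (lam * (Fintype.card V - 1))) :
    ∃ u : V, G.specMax - lam ≤ (G.induce {w | w ≠ u}).specMax := by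
  have : Nonempty V := ⟨v⟩
  obtain ⟨x, hx0, hx1, hx⟩ := specMax_eigen G
  obtain ⟨u, hu⟩ := Finite.exists_min x
  refine ⟨u, ?_⟩
  by_contra hcon
  push Not at hcon
  set μ := G.specMax
  set μ' := (G.induce {w | w ≠ u}).specMax
  set m : ℝ := (Fintype.card V : ℝ) with hm
  set δ := ∑ w, adjInd G v w with hδ
  set z := x u ^ 2 with hz
  have hm2 : (2 : ℝ) ≤ m := by rw [hm]; exact_mod_cast hV
  have hz0 : 0 ≤ z := sq_nonneg _
  have hzle : ∀ w, z ≤ x w ^ 2 := fun w => pow_le_pow_left₀ (hx0 u) (hu w) 2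
  have hmz : m * z ≤ 1 := by
    rw [← hx1]
    have := Finset.sum_le_sum fun w (_ : w ∈ Finset.univ) => hzle w
    simpa [hm] using this
  have hδ0 : 0 ≤ δ := Finset.sum_nonneg fun w _ => adjInd_nonneg _ _ _
  have hδm : δ ≤ m := by
    have := Finset.sum_le_sum fun w (_ : w ∈ Finset.univ) => adjInd_le_one G v w
    simpa [hm] using this
  -- the Rayleigh bound for `G - u`, tested on the restriction of `x`
  have hray : μ - 2 * μ * z ≤ μ' * (1 - z) := by
    have h := specMax_rayleigh (G.induce {w | w ≠ u}) (fun p => x p)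
    rw [sum_ne_subtype u (fun w => x w ^ 2), hx1] at h
    refine le_trans (le_of_eq ?_) h
    have hin : ∀ p : {w : V | w ≠ u}, ∑ q : {w : V | w ≠ u},
        adjInd (G.induce {w | w ≠ u}) p q * (x p * x q)
        = μ * x p ^ 2 - adjInd G u p * (x p * x u) := by
      intro p
      have e : ∀ q : {w : V | w ≠ u}, adjInd (G.induce {w | w ≠ u}) p q * (x p * x q)
        = x p * (adjInd G p q * x q) := by
        intro q
        have : adjInd (G.induce {w | w ≠ u}) p q = adjInd G p q := by
          by_cases h : G.Adj p q
          · rw [adjInd_of_adj h, adjInd_of_adj (by simpa using h)]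
          · rw [adjInd_of_not h, adjInd_of_not (by simpa using h)]
        rw [this]; ring
      rw [Finset.sum_congr rfl fun q _ => e q,
        sum_ne_subtype u (fun w => x p * (adjInd G p w * x w)),
        ← Finset.mul_sum, hx, adjInd_comm G u p]
      ring
    rw [Finset.sum_congr rfl fun p _ => hin p,
      sum_ne_subtype u (fun w => μ * x w ^ 2 - adjInd G u w * (x w * x u)), Finset.sum_sub_distrib,
      ← Finset.mul_sum, hx1, adjInd_self]
    have : ∑ w, adjInd G u w * (x w * x u) = μ * x u * x u := by
      rw [← hx u, Finset.sum_mul]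
      exact Finset.sum_congr rfl fun w _ => by ring
    rw [this]; simp only [hz]; ring
  -- Cauchy-Schwarz for the eigenvector equation at `v`
  have hcs : z * (μ ^ 2 + δ * (m - δ)) ≤ δ := by
    have h1 := Finset.sum_mul_sq_le_sq_mul_sq Finset.univ (fun w => adjInd G v w)
      (fun w => adjInd G v w * x w)
    have hsq : ∀ w, adjInd G v w ^ 2 = adjInd G v w := by
      intro w; unfold adjInd; split_ifs <;> norm_num
    have e1 : ∀ w, adjInd G v w * (adjInd G v w * x w) = adjInd G v w * x w := by
      intro w; rw [← mul_assoc, ← sq, hsq]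
    simp only [e1, hsq, mul_pow] at h1
    rw [hx v, ← hδ] at h1
    have h2 : ∑ w, adjInd G v w * x w ^ 2 ≤ 1 - (m - δ) * z := by
      have : ∑ w, (1 - adjInd G v w) * z ≤ ∑ w, (1 - adjInd G v w) * x w ^ 2 :=
        Finset.sum_le_sum fun w _ =>
          mul_le_mul_of_nonneg_left (hzle w) (by linarith [adjInd_le_one G v w])
      rw [← Finset.sum_mul, Finset.sum_sub_distrib, ← hδ] at this
      simp only [sub_mul, Finset.sum_sub_distrib, one_mul, hx1] at this
      simp only [Finset.sum_const, Finset.card_univ, nsmul_eq_mul, mul_one, ← hm] at this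
      linarith
    have h3 : μ ^ 2 * z ≤ μ ^ 2 * x v ^ 2 := mul_le_mul_of_nonneg_left (hzle v) (sq_nonneg _)
    have h4 := mul_le_mul_of_nonneg_left h2 hδ0
    nlinarith
  have h1z : 0 < 1 - z := by nlinarith
  -- if the loss exceeded `lam`, the Rayleigh bound would give a lower bound for `z`
  have hzl : lam < z * (μ + lam) := by nlinarith
  have hμl : 0 < μ + lam := by
    by_contra h
    push Not at h
    nlinarith
  have hml : lam * m < μ + lam := by
    have : m * lam < m * (z * (μ + lam)) := by gcongr
    nlinarith
  have hA : 0 ≤ μ ^ 2 + δ * (m - δ) :=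
    add_nonneg (sq_nonneg _) (mul_nonneg hδ0 (by linarith))
  have hf : lam * (μ ^ 2 + δ * (m - δ)) ≤ δ * (μ + lam) := by
    calc lam * (μ ^ 2 + δ * (m - δ)) ≤ (z * (μ + lam)) * (μ ^ 2 + δ * (m - δ)) := by gcongr
      _ = (z * (μ ^ 2 + δ * (m - δ))) * (μ + lam) := by ring
      _ ≤ _ := by gcongr
  -- with `p = lam * (m - 1)` and `e = μ - p > 0`, the two bounds for `z` contradict `δ < β * p`
  set p := lam * (m - 1) with hp
  have hp0 : 0 < p := mul_pos hlam (by linarith)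
  set e := μ - p with he
  have he0 : 0 < e := by rw [he, hp]; linarith
  have hμe : μ = p + e := by rw [he]; ring
  have hf2 : lam * μ ^ 2 ≤ δ * e + lam * δ ^ 2 := by
    have : μ + lam - lam * m = e := by rw [he, hp]; ring
    nlinarith
  have hδ1 : δ * e ≤ β * p * e := by gcongr
  have hδ2 : lam * δ ^ 2 ≤ lam * (β * p) ^ 2 := by gcongr
  have hb : 0 ≤ lam * p ^ 2 * (1 - β ^ 2) :=
    mul_nonneg (by positivity) (by nlinarith)
  have hb2 : 0 ≤ p * e * (2 * lam - β) := mul_nonneg (by positivity) (by linarith)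
  have hb3 : 0 < lam * e ^ 2 := by positivity
  rw [hμe] at hf2
  nlinarith

/-- Repeated deletion: `G` has an induced subgraph `H` of large minimum degree for which
`specMax - lam * order` is at least as large as for `G`. -/
theorem exists_induced_minDegree.{u} {lam β : ℝ} (hlam : 0 < lam) (hβ0 : 0 ≤ β)
    (hβ1 : β ≤ 1) (hβ2 : β ≤ 2 * lam) (n : ℕ) :
    ∀ (V : Type u) [Fintype V] [DecidableEq V] (G : SimpleGraph V), Fintype.card V = n →
    ∃ (W : Type u) (_ : Fintype W) (_ : DecidableEq W) (H : SimpleGraph W),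
      Nonempty (H ↪g G) ∧
      G.specMax - lam * Fintype.card V ≤ H.specMax - lam * Fintype.card W ∧
      ∀ v, β * (lam * (Fintype.card W - 1)) ≤ ∑ w, adjInd H v w := by
  induction n with
  | zero =>
    intro V _ _ G hV
    refine ⟨V, inferInstance, inferInstance, G, ⟨SimpleGraph.Embedding.refl⟩, le_rfl, fun v => ?_⟩
    exact ((Fintype.card_eq_zero_iff.1 hV).false v).elim
  | succ n ih =>
    intro V _ _ G hV
    by_cases hd : ∀ v, β * (lam * (Fintype.card V - 1)) ≤ ∑ w, adjInd G v w
    · exact ⟨V, inferInstance, inferInstance, G, ⟨SimpleGraph.Embedding.refl⟩, le_rfl, hd⟩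
    push Not at hd
    obtain ⟨v, hv⟩ := hd
    have h2 : 2 ≤ Fintype.card V := by
      by_contra h
      have h1 : Fintype.card V = 1 := by omega
      rw [h1] at hv
      have : 0 ≤ ∑ w, adjInd G v w := Finset.sum_nonneg fun w _ => adjInd_nonneg _ _ _
      norm_num at hv
      linarith
    obtain ⟨u, hu⟩ := exists_delete G hlam hβ0 hβ1 hβ2 h2 v hv
    have hc : Fintype.card {w : V | w ≠ u} = n := by
      have := Set.card_ne_eq u
      rw [this, hV]; rfl
    obtain ⟨W, i1, i2, H, ⟨f⟩, h3, h4⟩ := ih {w : V | w ≠ u} (G.induce {w | w ≠ u}) hc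
    refine ⟨W, i1, i2, H, ⟨(SimpleGraph.Embedding.induce _).comp f⟩, ?_, h4⟩
    rw [hc] at h3
    rw [hV]
    push_cast
    linarith

/-! ### Extending cliques -/

/-- The tuples in `P`, counted by their tails. -/
theorem card_eq_sum_vecCons {W : Type*} [Fintype W] [DecidableEq W] {j : ℕ}
    (P : Finset (Fin (j + 1) → W)) :
    P.card = ∑ T : Fin j → W, (Finset.univ.filter (fun x => Matrix.vecCons x T ∈ P)).card := by
  have h1 : P.card = ∑ t : Fin (j + 1) → W, if t ∈ P then 1 else 0 := by simp
  rw [h1, ← (Fin.consEquiv (fun _ : Fin (j + 1) => W)).sum_comp, Fintype.sum_prod_type_right]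
  refine Finset.sum_congr rfl fun T _ => ?_
  rw [Finset.card_filter]
  rfl

open Classical in
/-- The ordered `j`-cliques all of whose vertices are adjacent to every vertex of `S`. -/
noncomputable def cliqueExt {W : Type*} [Fintype W] (G : SimpleGraph W) (S : Finset W) (j : ℕ) :
    Finset (Fin j → W) :=
  Finset.univ.filter fun T =>
    (∀ a b, a ≠ b → G.Adj (T a) (T b)) ∧ ∀ s ∈ S, ∀ a, G.Adj s (T a)

theorem mem_cliqueExt {W : Type*} [Fintype W] {G : SimpleGraph W} {S : Finset W} {j : ℕ}
    {T : Fin j → W} : T ∈ cliqueExt G S j ↔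
      (∀ a b, a ≠ b → G.Adj (T a) (T b)) ∧ ∀ s ∈ S, ∀ a, G.Adj s (T a) := by
  simp [cliqueExt]

theorem pairwise_vecCons {W : Type*} {G : SimpleGraph W} {j : ℕ} {x : W} {T : Fin j → W}
    (hT : ∀ a b, a ≠ b → G.Adj (T a) (T b)) (hx : ∀ a, G.Adj x (T a)) :
    ∀ a b, a ≠ b → G.Adj (Matrix.vecCons x T a) (Matrix.vecCons x T b) := by
  intro a b
  refine Fin.cases ?_ (fun a => ?_) a <;> refine Fin.cases ?_ (fun b => ?_) b
  · simp
  · intro _; simpa using hx b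
  · intro _; simpa using (hx a).symm
  · intro h; simpa using hT a b (fun e => h (by rw [e]))

/-- The vertices adjacent to all of `T` and to all but at most one vertex of `S` are numerous:
any other vertex is missed at least twice when non-neighbours of `T` are counted with weight two
and those of `S` with weight one. -/
theorem card_almost_common {W : Type*} [Fintype W] [DecidableEq W] (G : SimpleGraph W) {θm : ℝ}
    (hθ : ∀ v, ∑ w, (1 - adjInd G v w) ≤ θm) {j : ℕ} (T : Fin j → W) (S : Finset W)
    (X : Finset W) (hX : ∀ x, (∀ a, G.Adj (T a) x) → (∃ y, ∀ s ∈ S, s ≠ y → G.Adj s x) → x ∈ X) :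
    2 * (Fintype.card W : ℝ) - (2 * j + S.card) * θm ≤ 2 * X.card := by
  classical
  have hnn : ∀ v w, 0 ≤ 1 - adjInd G v w := fun v w => by linarith [adjInd_le_one G v w]
  have h1 : ∀ x, (2 : ℝ) - 2 * (if x ∈ X then 1 else 0) ≤
      2 * ∑ a, (1 - adjInd G (T a) x) + ∑ s ∈ S, (1 - adjInd G s x) := by
    intro x
    have ha : 0 ≤ ∑ a, (1 - adjInd G (T a) x) := Finset.sum_nonneg fun a _ => hnn _ _
    have hb : 0 ≤ ∑ s ∈ S, (1 - adjInd G s x) := Finset.sum_nonneg fun a _ => hnn _ _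
    by_cases hx : x ∈ X
    · simp only [hx, if_true]; linarith
    simp only [hx, if_false]
    by_cases hT : ∀ a, G.Adj (T a) x
    · have hS : ¬ ∃ y, ∀ s ∈ S, s ≠ y → G.Adj s x := fun h => hx (hX x hT h)
      push Not at hS
      obtain ⟨y, hyS, -, hy⟩ := hS x
      obtain ⟨z, hzS, hzy, hz⟩ := hS y
      have : ∑ s ∈ ({y, z} : Finset W), (1 - adjInd G s x) ≤ ∑ s ∈ S, (1 - adjInd G s x) :=
        Finset.sum_le_sum_of_subset_of_nonneg
          (by intro w; simp only [Finset.mem_insert, Finset.mem_singleton]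
              rintro (rfl | rfl) <;> assumption)
          (fun _ _ _ => hnn _ _)
      rw [Finset.sum_pair hzy.symm, adjInd_of_not hy, adjInd_of_not hz] at this
      linarith
    · push Not at hT
      obtain ⟨a, hTa⟩ := hT
      have := Finset.single_le_sum (f := fun a => 1 - adjInd G (T a) x) (fun a _ => hnn _ _)
        (Finset.mem_univ a)
      simp only [adjInd_of_not hTa] at this
      linarith
  have h2 := Finset.sum_le_sum fun x (_ : x ∈ Finset.univ) => h1 x
  rw [Finset.sum_add_distrib, ← Finset.mul_sum, Finset.sum_comm, Finset.sum_comm (t := S),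
    Finset.sum_sub_distrib, ← Finset.mul_sum] at h2
  have h3 : ∑ a, ∑ x, (1 - adjInd G (T a) x) ≤ j * θm := by
    have := Finset.sum_le_sum fun a (_ : a ∈ Finset.univ) => hθ (T a)
    simpa using this
  have h4 : ∑ s ∈ S, ∑ x, (1 - adjInd G s x) ≤ S.card * θm := by
    have := Finset.sum_le_sum fun s (_ : s ∈ S) => hθ s
    simpa using this
  simp only [Finset.sum_const, Finset.card_univ, nsmul_eq_mul, Finset.sum_ite_mem,
    Finset.univ_inter, mul_one] at h2
  nlinarith

/-- In a graph of large minimum degree that contains `K_{r+1}`, for every `j ≤ r - 1` some clique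
on `r + 1 - j` vertices extends to a positive proportion of the potential `K_{r+1}`'s. Given `S`
and an extension `T`, a vertex `x` joined to `T` and to all of `S` except possibly `y` turns `(S,
T)` into `(S \ y, T ∪ x)`; one `y ∈ S` serves many pairs. -/
theorem exists_cliqueExt_large {W : Type*} [Fintype W] [DecidableEq W] (G : SimpleGraph W) {r : ℕ}
    (hr : 2 ≤ r)
    (hθ : ∀ v, ∑ w, (1 - adjInd G v w) ≤ (1 / (r : ℝ) + 1 / (16 * r ^ 2)) * Fintype.card W)
    (hK : ¬ G.CliqueFree (r + 1)) (j : ℕ) (hj : j + 1 ≤ r) :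
    ∃ S : Finset W, S.card + j = r + 1 ∧ G.IsClique S ∧
      ((r : ℝ) + 1 - j) * (r - j) / ((r + 1) * r) * (Fintype.card W / (4 * r)) ^ j
        ≤ (cliqueExt G S j).card := by
  classical
  have hr2 : (2 : ℝ) ≤ r := by exact_mod_cast hr
  set m : ℝ := (Fintype.card W : ℝ) with hm
  have hm0 : 0 ≤ m := Nat.cast_nonneg _
  induction j with
  | zero =>
    simp only [SimpleGraph.CliqueFree, not_forall, not_not] at hK
    obtain ⟨S, hS⟩ := hK
    refine ⟨S, hS.card_eq, hS.isClique, ?_⟩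
    have : cliqueExt G S 0 = Finset.univ :=
      Finset.eq_univ_of_forall fun T => mem_cliqueExt.2 ⟨fun a => a.elim0, fun _ _ a => a.elim0⟩
    rw [this]
    simp
    rw [div_le_one (by positivity)]
  | succ j ih =>
    obtain ⟨S, hSc, hSq, hS⟩ := ih (by omega)
    have hjr : (j : ℝ) + 2 ≤ r := by exact_mod_cast hj
    have hScR : (S.card : ℝ) = r + 1 - j := by
      have : (S.card : ℝ) + j = r + 1 := by exact_mod_cast hSc
      linarith
    have hSpos : 0 < (S.card : ℝ) := by rw [hScR]; linarith
    have hSne : S.Nonempty := Finset.card_pos.1 (by exact_mod_cast hSpos)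
    -- every extension `T` can be enlarged in many ways
    have hT : ∀ T ∈ cliqueExt G S j, ((r : ℝ) - 1 - j) / (4 * r) * m ≤
        ∑ y ∈ S, ((Finset.univ.filter
          (fun x => Matrix.vecCons x T ∈ cliqueExt G (S.erase y) (j + 1))).card : ℝ) := by
      intro T hT
      rw [mem_cliqueExt] at hT
      set X := S.biUnion fun y => Finset.univ.filter
          (fun x => Matrix.vecCons x T ∈ cliqueExt G (S.erase y) (j + 1)) with hX
      have hXc : (X.card : ℝ) ≤ ∑ y ∈ S, ((Finset.univ.filter
          (fun x => Matrix.vecCons x T ∈ cliqueExt G (S.erase y) (j + 1))).card : ℝ) := by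
        exact_mod_cast Finset.card_biUnion_le
      refine le_trans ?_ hXc
      have h := card_almost_common G hθ T S X (by
        rintro x hxT ⟨y, hy⟩
        have main : ∀ y' ∈ S, (∀ s ∈ S, s ≠ y' → G.Adj s x) → x ∈ X := by
          intro y' hy' hyy
          rw [hX, Finset.mem_biUnion]
          refine ⟨y', hy', ?_⟩
          rw [Finset.mem_filter, mem_cliqueExt]
          refine ⟨Finset.mem_univ _, pairwise_vecCons hT.1 fun a => (hxT a).symm, ?_⟩
          intro s hs a
          rw [Finset.mem_erase] at hs
          refine Fin.cases ?_ (fun a => ?_) a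
          · simpa using hyy s hs.2 hs.1
          · simpa using hT.2 s hs.2 a
        by_cases hyS : y ∈ S
        · exact main y hyS hy
        · obtain ⟨y', hy'⟩ := hSne
          exact main y' hy' fun s hs _ => hy s hs (fun e => hyS (e ▸ hs)))
      rw [hScR, ← hm] at h
      have e : ((r : ℝ) - 1 - j) / (4 * r) * 2 ≤
          2 - (2 * j + (r + 1 - j)) * (1 / (r : ℝ) + 1 / (16 * r ^ 2)) := by
        have hr0 : (0 : ℝ) < r := by linarith
        have hi : 0 ≤ 2 - (2 * j + (r + 1 - j)) * (1 / (r : ℝ) + 1 / (16 * r ^ 2)) -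
          ((r : ℝ) - 1 - j) / (4 * r) * 2 := by
          have : 2 - (2 * j + (r + 1 - j)) * (1 / (r : ℝ) + 1 / (16 * r ^ 2)) -
            ((r : ℝ) - 1 - j) / (4 * r) * 2
            = (8 * r * (r - 1 - j) - (r + 1 + j)) / (16 * r ^ 2) := by
            field_simp; ring
          rw [this]
          refine div_nonneg ?_ (by positivity)
          nlinarith
        linarith
      have := mul_le_mul_of_nonneg_right e hm0
      linarith
    have htot : (((cliqueExt G S j).card : ℝ) * (((r : ℝ) - 1 - j) / (4 * r) * m)) ≤
        ∑ y ∈ S, ((cliqueExt G (S.erase y) (j + 1)).card : ℝ) := by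
      have e : ∀ y, ((cliqueExt G (S.erase y) (j + 1)).card : ℝ) = ∑ T : Fin j → W,
          ((Finset.univ.filter
          (fun x => Matrix.vecCons x T ∈ cliqueExt G (S.erase y) (j + 1))).card : ℝ) := by
        intro y
        exact_mod_cast card_eq_sum_vecCons (cliqueExt G (S.erase y) (j + 1))
      rw [Finset.sum_congr rfl fun y _ => e y, Finset.sum_comm]
      refine le_trans ?_ (Finset.sum_le_sum_of_subset_of_nonneg
        (Finset.subset_univ (cliqueExt G S j)) fun T _ _ => Finset.sum_nonneg fun y _ =>
          Nat.cast_nonneg _)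
      have := Finset.sum_le_sum hT
      rwa [Finset.sum_const, nsmul_eq_mul] at this
    obtain ⟨y, hyS, hy⟩ : ∃ y ∈ S, ((r : ℝ) + 1 - (j + 1 : ℕ)) * (r - (j + 1 : ℕ)) / ((r + 1) * r)
        * (m / (4 * r)) ^ (j + 1) ≤ ((cliqueExt G (S.erase y) (j + 1)).card : ℝ) := by
      refine Finset.exists_le_of_sum_le hSne ?_
      refine le_trans ?_ htot
      rw [Finset.sum_const, nsmul_eq_mul, hScR]
      have hnn : 0 ≤ ((r : ℝ) - 1 - j) / (4 * r) * m :=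
        mul_nonneg (div_nonneg (by linarith) (by linarith)) hm0
      refine le_trans (le_of_eq ?_) (mul_le_mul_of_nonneg_right hS hnn)
      push_cast
      rw [pow_succ]
      ring
    refine ⟨S.erase y, ?_, ?_, hy⟩
    · rw [Finset.card_erase_of_mem hyS]; omega
    · exact hSq.subset (by simp)

/-! ### Complete multipartite graphs of logarithmic size -/

/-- A family `M` of positive density of ordered `(j+1)`-cliques contains a large subfamily `D`
whose members are disjoint and together span a complete `(j+1)`-partite graph. For the inductive
step, `D` is first found among the cliques with one vertex less and many extensions in `M`; by
pigeonhole over the at most `2 ^ L` subsets of `D`, many vertices extend the same large part of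
`D`. -/
theorem exists_diagonal {W : Type*} [Fintype W] [DecidableEq W] (G : SimpleGraph W) {L : ℕ}
    (hL : 1 ≤ L) {κ : ℝ} (hκ : 0 < κ)
    (hbig : (2 : ℝ) ^ L * L ≤ κ / 2 * Fintype.card W) (j : ℕ) :
    ∀ M : Finset (Fin (j + 1) → W), (∀ t ∈ M, ∀ a b, a ≠ b → G.Adj (t a) (t b)) →
    ((j + 1 : ℕ) : ℝ) * κ * (Fintype.card W : ℝ) ^ (j + 1) ≤ M.card →
    ∃ D ⊆ M, L * (κ / 2) ^ j ≤ (D.card : ℝ) ∧ D.card ≤ L ∧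
      (∀ t ∈ D, ∀ t' ∈ D, ∀ a b, a ≠ b → G.Adj (t a) (t' b)) ∧
      (∀ t ∈ D, ∀ t' ∈ D, ∀ a, t a = t' a → t = t') := by
  classical
  set m : ℝ := (Fintype.card W : ℝ) with hm
  have hL1 : (1 : ℝ) ≤ L := by exact_mod_cast hL
  have h2L : (1 : ℝ) ≤ 2 ^ L := one_le_pow₀ (by norm_num)
  have hm0 : 0 < m := by
    by_contra h
    push Not at h
    nlinarith
  induction j with
  | zero =>
    intro M hM hMc
    have : (L : ℝ) ≤ M.card := by
      norm_num at hMc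
      nlinarith
    obtain ⟨D, hD, hDc⟩ := Finset.exists_subset_card_eq (s := M) (n := L) (by exact_mod_cast this)
    refine ⟨D, hD, by simp [hDc], hDc.le, ?_, ?_⟩
    · intro t _ t' _ a b hab
      exact absurd (Subsingleton.elim (α := Fin 1) a b) hab
    · intro t _ t' _ a h
      funext b
      rwa [Subsingleton.elim (α := Fin 1) b a]
  | succ j ih =>
    intro M hM hMc
    set e : (Fin (j + 1) → W) → Finset W :=
      fun T => Finset.univ.filter (fun x => Matrix.vecCons x T ∈ M) with he
    set M' : Finset (Fin (j + 1) → W) := Finset.univ.filter (fun T => κ * m ≤ (e T).card) with hM'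
    have hM'adj : ∀ t ∈ M', ∀ a b, a ≠ b → G.Adj (t a) (t b) := by
      intro T hT a b hab
      have h1 : κ * m ≤ (e T).card := (Finset.mem_filter.1 hT).2
      have h2 : 0 < (e T).card := by
        have : (0 : ℝ) < (e T).card := lt_of_lt_of_le (by positivity) h1
        exact_mod_cast this
      obtain ⟨x, hx⟩ := Finset.card_pos.1 h2
      have := hM _ (Finset.mem_filter.1 hx).2 a.succ b.succ (fun h => hab (Fin.succ_injective _ h))
      simpa using this
    have hM'c : ((j + 1 : ℕ) : ℝ) * κ * m ^ (j + 1) ≤ M'.card := by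
      have h1 : (M.card : ℝ) = ∑ T, ((e T).card : ℝ) := by
        exact_mod_cast card_eq_sum_vecCons M
      have h2 : ∀ T, ((e T).card : ℝ) ≤ (if T ∈ M' then m else 0) + κ * m := by
        intro T
        by_cases hT : T ∈ M'
        · have : ((e T).card : ℝ) ≤ m := by rw [hm]; exact_mod_cast Finset.card_le_univ _
          simp only [hT, if_true]
          have : 0 ≤ κ * m := by positivity
          linarith
        · have : ¬ κ * m ≤ (e T).card := fun h => hT (Finset.mem_filter.2 ⟨Finset.mem_univ _, h⟩)
          simp only [hT, if_false]
          linarith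
      have h3 := Finset.sum_le_sum fun T (_ : T ∈ Finset.univ) => h2 T
      rw [← h1, Finset.sum_add_distrib] at h3
      simp only [Finset.sum_ite_mem, Finset.univ_inter, Finset.sum_const, Finset.card_univ,
        nsmul_eq_mul, Fintype.card_fun, Fintype.card_fin] at h3
      push_cast at h3 hMc ⊢
      rw [← hm] at h3
      have h4 := hMc.trans h3
      refine le_of_mul_le_mul_right ?_ hm0
      have e1 : ((j : ℝ) + 1 + 1) * κ * m ^ (j + 1 + 1)
        = (j + 1) * κ * m ^ (j + 1) * m + m ^ (j + 1) * (κ * m) := by ring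
      linarith
    obtain ⟨D, hDM, hD1, hD2, hD3, hD4⟩ := ih M' hM'adj hM'c
    have hDpos : 0 < (D.card : ℝ) := lt_of_lt_of_le (by positivity) hD1
    -- `E w` is the set of members of `D` which `w` extends within `M`
    set E : W → Finset (Fin (j + 1) → W) :=
      fun w => D.filter (fun T => Matrix.vecCons w T ∈ M) with hE
    set H : Finset W := Finset.univ.filter (fun w => κ / 2 * D.card ≤ (E w).card) with hH
    have hHc : κ / 2 * m ≤ H.card := by
      have h1 : (D.card : ℝ) * (κ * m) ≤ ∑ w, ((E w).card : ℝ) := by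
        have h := Finset.sum_card_bipartiteAbove_eq_sum_card_bipartiteBelow
          (s := D) (t := Finset.univ) (fun (T : Fin (j + 1) → W) (w : W) => Matrix.vecCons w T ∈ M)
        have h' : ∑ w, ((E w).card : ℝ) = ∑ T ∈ D, ((e T).card : ℝ) := by exact_mod_cast h.symm
        rw [h', ← nsmul_eq_mul]
        refine Finset.card_nsmul_le_sum _ _ _ fun T hT => (Finset.mem_filter.1 (hDM hT)).2
      have h2 : ∀ w, ((E w).card : ℝ) ≤ (if w ∈ H then (D.card : ℝ) else 0) + κ / 2 * D.card := by
        intro w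
        by_cases hw : w ∈ H
        · have : ((E w).card : ℝ) ≤ D.card := by
            exact_mod_cast Finset.card_le_card (Finset.filter_subset _ _)
          simp only [hw, if_true]
          have : 0 ≤ κ / 2 * D.card := by positivity
          linarith
        · have : ¬ κ / 2 * D.card ≤ (E w).card :=
            fun h => hw (Finset.mem_filter.2 ⟨Finset.mem_univ _, h⟩)
          simp only [hw, if_false]
          linarith
      have h3 := Finset.sum_le_sum fun w (_ : w ∈ Finset.univ) => h2 w
      rw [Finset.sum_add_distrib] at h3
      simp only [Finset.sum_ite_mem, Finset.univ_inter, Finset.sum_const, Finset.card_univ,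
        nsmul_eq_mul] at h3
      rw [← hm] at h3
      refine le_of_mul_le_mul_right ?_ hDpos
      linarith
    have hpig : (D.powerset).card * L ≤ H.card := by
      rw [Finset.card_powerset]
      have h1 : (2 : ℝ) ^ D.card * L ≤ 2 ^ L * L := by
        have : (2 : ℝ) ^ D.card ≤ 2 ^ L := pow_le_pow_right₀ (by norm_num) hD2
        gcongr
      have : (2 : ℝ) ^ D.card * L ≤ H.card := h1.trans (hbig.trans hHc)
      exact_mod_cast this
    obtain ⟨F, hFD, hF⟩ := Finset.exists_le_card_fiber_of_mul_le_card_of_maps_to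
      (f := E) (s := H) (t := D.powerset)
      (fun w _ => Finset.mem_powerset.2 (Finset.filter_subset _ _)) ⟨∅, by simp⟩ hpig
    rw [Finset.mem_powerset] at hFD
    set U := H.filter (fun w => E w = F) with hU
    have hUM : ∀ w ∈ U, ∀ T ∈ F, Matrix.vecCons w T ∈ M := by
      intro w hw T hT
      rw [← (Finset.mem_filter.1 hw).2] at hT
      exact (Finset.mem_filter.1 hT).2
    have hFc : κ / 2 * D.card ≤ F.card := by
      obtain ⟨w, hw⟩ := Finset.card_pos.1 (lt_of_lt_of_le hL hF)
      rw [← (Finset.mem_filter.1 hw).2]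
      exact (Finset.mem_filter.1 (Finset.mem_filter.1 hw).1).2
    have hFL : F.card ≤ L := (Finset.card_le_card hFD).trans hD2
    obtain ⟨f⟩ : Nonempty (F ↪ U) :=
      Function.Embedding.nonempty_of_card_le (by simpa using hFL.trans hF)
    have hcinj : ∀ t t' : F, ∀ a, Matrix.vecCons (f t).1 t.1 a = Matrix.vecCons (f t').1 t'.1 a →
        t = t' := by
      intro t t' a
      refine Fin.cases ?_ (fun a => ?_) a
      · intro h
        exact f.injective (Subtype.ext (by simpa using h))
      · intro h
        exact Subtype.ext (hD4 _ (hFD t.2) _ (hFD t'.2) a (by simpa using h))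
    refine ⟨Finset.univ.image (fun t : F => Matrix.vecCons (f t).1 t.1), ?_, ?_, ?_, ?_, ?_⟩
    · intro t ht
      obtain ⟨t, -, rfl⟩ := Finset.mem_image.1 ht
      exact hUM _ (f t).2 _ t.2
    · rw [Finset.card_image_of_injective _ fun t t' h => hcinj t t' 0 (congrFun h 0)]
      rw [Finset.card_univ, Fintype.card_coe, pow_succ]
      nlinarith
    · exact Finset.card_image_le.trans (by simpa using hFL)
    · intro t ht t' ht'
      obtain ⟨t, -, rfl⟩ := Finset.mem_image.1 ht
      obtain ⟨t', -, rfl⟩ := Finset.mem_image.1 ht'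
      have hx : ∀ (s s' : F) (a : Fin (j + 1)), G.Adj (f s).1 (s'.1 a) := by
        intro s s' a
        simpa using hM _ (hUM _ (f s).2 _ s'.2) 0 a.succ (Fin.succ_ne_zero a).symm
      intro a b
      refine Fin.cases ?_ (fun a => ?_) a <;> refine Fin.cases ?_ (fun b => ?_) b
      · simp
      · intro _; simpa using hx t t' b
      · intro _; simpa using (hx t' t a).symm
      · intro h
        simpa using hD3 _ (hFD t.2) _ (hFD t'.2) a b (fun e => h (by rw [e]))
    · intro t ht t' ht' a h
      obtain ⟨t, -, rfl⟩ := Finset.mem_image.1 ht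
      obtain ⟨t', -, rfl⟩ := Finset.mem_image.1 ht'
      rw [hcinj t t' a h]

/-- A family of disjoint ordered `(k+1)`-cliques spanning a complete `(k+1)`-partite graph, all of
whose parts but the first lie in the common neighbourhood of an edge `uv`, yields `K_{k+1}^+`: put
`u` and `v` into the first part. -/
theorem containsPlus_of_diagonal {W : Type*} [DecidableEq W] (G : SimpleGraph W) {k s : ℕ}
    (D : Finset (Fin (k + 1) → W)) (hs : 2 ≤ s) (hD : s ≤ D.card)
    (hadj : ∀ t ∈ D, ∀ t' ∈ D, ∀ a b, a ≠ b → G.Adj (t a) (t' b))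
    (hinj : ∀ t ∈ D, ∀ t' ∈ D, ∀ a, t a = t' a → t = t') {u v : W} (huv : G.Adj u v)
    (hu : ∀ t ∈ D, ∀ a : Fin k, G.Adj u (t a.succ))
    (hv : ∀ t ∈ D, ∀ a : Fin k, G.Adj v (t a.succ)) :
    G.ContainsKPartitePlus (fun _ : Fin (k + 1) => s) 0 := by
  obtain ⟨D', hD', hc⟩ := Finset.exists_subset_card_eq hD
  have himg : ∀ a, (D'.image fun t => t a).card = s := by
    intro a
    rw [← hc]
    exact Finset.card_image_of_injOn fun t ht t' ht' h => hinj t (hD' ht) t' (hD' ht') a h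
  have hsub : ({u, v} : Finset W) ⊆ {u, v} ∪ D'.image (fun t => t 0) := Finset.subset_union_left
  obtain ⟨A₀, h1, h2, h3⟩ := Finset.exists_subsuperset_card_eq (n := s) hsub
    (Finset.card_le_two.trans hs)
    ((himg 0).ge.trans (Finset.card_le_card Finset.subset_union_right))
  have hA₀ : ∀ x ∈ A₀, ∀ t ∈ D', ∀ a : Fin k, G.Adj x (t a.succ) := by
    intro x hx t ht a
    have := h2 hx
    simp only [Finset.mem_union, Finset.mem_insert, Finset.mem_singleton, Finset.mem_image] at this
    rcases this with (rfl | rfl) | ⟨t', ht', rfl⟩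
    · exact hu t (hD' ht) a
    · exact hv t (hD' ht) a
    · exact hadj _ (hD' ht') _ (hD' ht) _ _ (Fin.succ_ne_zero a).symm
  set A : Fin (k + 1) → Finset W := Matrix.vecCons A₀ (fun a => D'.image fun t => t a.succ) with hA
  have hA0 : A 0 = A₀ := rfl
  have hAs : ∀ a : Fin k, A a.succ = D'.image fun t => t a.succ := fun a => rfl
  have hAadj : ∀ i j, i ≠ j → ∀ x ∈ A i, ∀ y ∈ A j, G.Adj x y := by
    intro i j
    refine Fin.cases ?_ (fun i => ?_) i <;> refine Fin.cases ?_ (fun j => ?_) j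
    · simp
    · intro _ x hx y hy
      rw [hAs] at hy
      obtain ⟨t, ht, rfl⟩ := Finset.mem_image.1 hy
      exact hA₀ x hx t ht j
    · intro _ x hx y hy
      rw [hAs] at hx
      obtain ⟨t, ht, rfl⟩ := Finset.mem_image.1 hx
      exact (hA₀ y hy t ht i).symm
    · intro hij x hx y hy
      rw [hAs] at hx hy
      obtain ⟨t, ht, rfl⟩ := Finset.mem_image.1 hx
      obtain ⟨t', ht', rfl⟩ := Finset.mem_image.1 hy
      exact hadj _ (hD' ht) _ (hD' ht') _ _ hij
  refine ⟨A, ?_, ?_, hAadj, u, h1 (by simp), v, h1 (by simp), huv.ne, huv⟩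
  · intro i j hij
    rw [Finset.disjoint_left]
    intro x hx hx'
    exact G.loopless.irrefl x (hAadj i j hij x hx x hx')
  · intro i
    refine Fin.cases ?_ (fun i => ?_) i
    · exact h3
    · exact himg _

/-- The combinatorial half of the proof: large minimum degree together with one `K_{r+1}` forces
`K_r^+` with parts of logarithmic size. -/
theorem containsPlus_of_minDegree {W : Type*} [Fintype W] [DecidableEq W] (G : SimpleGraph W)
    {k L s : ℕ} (hk : 1 ≤ k)
    (hθ : ∀ v, ∑ w, (1 - adjInd G v w) ≤
      (1 / ((k + 1 : ℕ) : ℝ) + 1 / (16 * ((k + 1 : ℕ) : ℝ) ^ 2)) * Fintype.card W)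
    (hK : ¬ G.CliqueFree (k + 1 + 1)) {κ : ℝ} (hκ : 0 < κ)
    (hκle : κ * ((k + 1) ^ 3 * (k + 2) * (4 * (k + 1)) ^ k) ≤ 1)
    (hL : 1 ≤ L) (hbig : (2 : ℝ) ^ L * L ≤ κ / 2 * Fintype.card W)
    (hs : 2 ≤ s) (hsL : (s : ℝ) ≤ L * (κ / 2) ^ k) :
    G.ContainsKPartitePlus (fun _ : Fin (k + 1) => s) 0 := by
  classical
  obtain ⟨S, hSc, hSq, hS⟩ := exists_cliqueExt_large G (r := k + 1) (by omega) hθ hK k le_rfl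
  set m : ℝ := (Fintype.card W : ℝ) with hm
  have hm0 : 0 ≤ m := Nat.cast_nonneg _
  obtain ⟨u, v, huv, rfl⟩ := Finset.card_eq_two.1 (show S.card = 2 by omega)
  have huvadj : G.Adj u v := hSq (by simp) (by simp) huv
  set M : Finset (Fin (k + 1) → W) := Finset.univ.filter fun t =>
    (∀ a b, a ≠ b → G.Adj (t a) (t b)) ∧ ∀ s ∈ ({u, v} : Finset W), ∀ a : Fin k, G.Adj s (t a.succ)
    with hM
  have hext : ∀ T ∈ cliqueExt G {u, v} k, m / (2 * (k + 1)) ≤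
      ((Finset.univ.filter (fun x => Matrix.vecCons x T ∈ M)).card : ℝ) := by
    intro T hT
    rw [mem_cliqueExt] at hT
    have h := card_almost_common G hθ T ∅
      (Finset.univ.filter (fun x => Matrix.vecCons x T ∈ M)) (by
        intro x hx _
        rw [Finset.mem_filter, hM, Finset.mem_filter]
        refine ⟨Finset.mem_univ _, Finset.mem_univ _,
          pairwise_vecCons hT.1 fun a => (hx a).symm, ?_⟩
        intro s hs a
        simpa using hT.2 s hs a)
    rw [← hm] at h
    have hk0 : (0 : ℝ) ≤ k := Nat.cast_nonneg _
    have e : 2 / (2 * ((k : ℝ) + 1)) ≤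
        2 - 2 * k * (1 / ((k : ℝ) + 1) + 1 / (16 * (k + 1) ^ 2)) := by
      have : 2 - 2 * k * (1 / ((k : ℝ) + 1) + 1 / (16 * (k + 1) ^ 2)) - 2 / (2 * ((k : ℝ) + 1))
        = (14 * k + 16) / (16 * (k + 1) ^ 2) := by field_simp; ring
      have h' : 0 ≤ (14 * (k : ℝ) + 16) / (16 * (k + 1) ^ 2) := by positivity
      linarith
    have e' := mul_le_mul_of_nonneg_right e hm0
    push_cast at h
    simp only [Finset.card_empty, Nat.cast_zero, add_zero] at h
    have : 2 * (m / (2 * (k + 1))) = 2 / (2 * ((k : ℝ) + 1)) * m := by ring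
    linarith
  have hMc : ((k + 1 : ℕ) : ℝ) * κ * m ^ (k + 1) ≤ M.card := by
    have h1 : (M.card : ℝ) = ∑ T, ((Finset.univ.filter
        (fun x => Matrix.vecCons x T ∈ M)).card : ℝ) := by
      exact_mod_cast card_eq_sum_vecCons M
    have h2 : (cliqueExt G {u, v} k).card * (m / (2 * (k + 1))) ≤ (M.card : ℝ) := by
      rw [h1, ← nsmul_eq_mul]
      refine (Finset.card_nsmul_le_sum _ _ _ hext).trans ?_
      exact Finset.sum_le_sum_of_subset_of_nonneg (Finset.subset_univ _)
        fun _ _ _ => Nat.cast_nonneg _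
    refine le_trans ?_ h2
    refine le_trans ?_ (mul_le_mul_of_nonneg_right hS (by positivity))
    push_cast
    have hq : (0 : ℝ) < (k + 1) ^ 3 * (k + 2) * (4 * (k + 1)) ^ k := by positivity
    have e1 : ((k : ℝ) + 1 + 1 - k) * (k + 1 - k) / ((k + 1 + 1) * (k + 1))
        * (m / (4 * (k + 1))) ^ k * (m / (2 * (k + 1)))
        = (k + 1) * (1 / ((k + 1) ^ 3 * (k + 2) * (4 * (k + 1)) ^ k)) * m ^ (k + 1) := by
      rw [div_pow, pow_succ m k]
      have : ((k : ℝ) + 1 + 1 - k) * (k + 1 - k) = 2 := by ring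
      rw [this]
      have : (k : ℝ) + 1 + 1 = k + 2 := by ring
      rw [this]
      field_simp
    rw [e1]
    have : κ ≤ 1 / ((k + 1) ^ 3 * (k + 2) * (4 * (k + 1)) ^ k) := by
      rwa [le_div_iff₀ hq]
    gcongr
  obtain ⟨D, hDM, hD1, -, hD3, hD4⟩ := exists_diagonal G hL hκ hbig k M
    (fun t ht => (Finset.mem_filter.1 ht).2.1) hMc
  refine containsPlus_of_diagonal G D hs ?_ hD3 hD4 huvadj ?_ ?_
  · exact_mod_cast hsL.trans hD1
  · intro t ht a
    exact (Finset.mem_filter.1 (hDM ht)).2.2 u (by simp) a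
  · intro t ht a
    exact (Finset.mem_filter.1 (hDM ht)).2.2 v (by simp) a

/-! ### A dense induced subgraph and the choice of constants -/

theorem specMax_le_card {V : Type*} [Fintype V] [DecidableEq V] (G : SimpleGraph V) :
    G.specMax ≤ Fintype.card V := by
  rcases isEmpty_or_nonempty V with h | h
  · have : G.specMax = 0 := by
      unfold SimpleGraph.specMax
      exact Real.iSup_of_isEmpty _
    rw [this]
    exact Nat.cast_nonneg _
  · obtain ⟨x, hx0, hx1, hx⟩ := specMax_eigen G
    have h1 : G.specMax ≤ (∑ v, x v) ^ 2 := by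
      calc G.specMax = ∑ u, x u * (G.specMax * x u) := by
            have e : ∑ u, x u * (G.specMax * x u) = G.specMax * ∑ u, x u ^ 2 := by
              rw [Finset.mul_sum]
              exact Finset.sum_congr rfl fun u _ => by ring
            rw [e, hx1, mul_one]
        _ = ∑ u, x u * ∑ v, adjInd G u v * x v := by simp only [hx]
        _ ≤ ∑ u, x u * ∑ v, x v := by
            refine Finset.sum_le_sum fun u _ => mul_le_mul_of_nonneg_left ?_ (hx0 u)
            exact Finset.sum_le_sum fun v _ => mul_le_of_le_one_left (hx0 v) (adjInd_le_one _ _ _)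
        _ = _ := by rw [← Finset.sum_mul, sq]
    have h2 := sq_sum_le_card_mul_sum_sq (s := Finset.univ) (f := x)
    rw [hx1, Finset.card_univ, mul_one] at h2
    exact h1.trans h2

theorem sum_adjInd_eq_degree {V : Type*} [Fintype V] (G : SimpleGraph V) [DecidableRel G.Adj]
    (v : V) : ∑ w, adjInd G v w = G.degree v := by
  rw [← SimpleGraph.card_neighborFinset_eq_degree, SimpleGraph.neighborFinset_eq_filter,
    Finset.card_filter]
  push_cast
  refine Finset.sum_congr rfl fun w _ => ?_
  by_cases h : G.Adj v w
  · simp [adjInd_of_adj h, h]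
  · simp [adjInd_of_not h, h]

theorem containsPlus_of_embedding {V W : Type*} [DecidableEq V] {G : SimpleGraph V}
    {H : SimpleGraph W} (f : H ↪g G) {r : ℕ} {s : Fin r → ℕ} {i : Fin r}
    (h : H.ContainsKPartitePlus s i) : G.ContainsKPartitePlus s i := by
  obtain ⟨A, h1, h2, h3, x, hx, y, hy, hxy, hadj⟩ := h
  refine ⟨fun i => (A i).map f.toEmbedding, fun i j hij => ?_, fun i => ?_, ?_,
    f x, ?_, f y, ?_, f.injective.ne hxy, f.map_adj_iff.2 hadj⟩
  · exact (Finset.disjoint_map _).2 (h1 hij)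
  · simpa using h2 i
  · intro i j hij a ha b hb
    obtain ⟨a, ha', rfl⟩ := Finset.mem_map.1 ha
    obtain ⟨b, hb', rfl⟩ := Finset.mem_map.1 hb
    exact f.map_adj_iff.2 (h3 i j hij a ha' b hb')
  · exact Finset.mem_map_of_mem _ hx
  · exact Finset.mem_map_of_mem _ hy

/-- The Andrásfai–Erdős–Sós theorem under the minimum degree condition used here. -/
theorem colorable_of_cliqueFree_of_sum {W : Type*} [Fintype W] [Nonempty W] (G : SimpleGraph W)
    {r : ℕ} (hr : 2 ≤ r)
    (hθ : ∀ v, ∑ w, (1 - adjInd G v w) ≤ (1 / (r : ℝ) + 1 / (16 * r ^ 2)) * Fintype.card W)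
    (hK : G.CliqueFree (r + 1)) : G.Colorable r := by
  classical
  have hm : (0 : ℝ) < Fintype.card W := by exact_mod_cast Fintype.card_pos
  have hr2 : (2 : ℝ) ≤ r := by exact_mod_cast hr
  refine SimpleGraph.colorable_of_cliqueFree_lt_minDegree hK ?_
  obtain ⟨v, hv⟩ := G.exists_minimal_degree_vertex
  rw [hv, Nat.div_lt_iff_lt_mul (by omega)]
  have h := hθ v
  rw [Finset.sum_sub_distrib, sum_adjInd_eq_degree] at h
  simp only [Finset.sum_const, Finset.card_univ, nsmul_eq_mul, mul_one] at h
  have : (((3 * r - 4) * Fintype.card W : ℕ) : ℝ) < ((G.degree v * (3 * r - 1) : ℕ) : ℝ) := by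
    rw [Nat.cast_mul, Nat.cast_mul, Nat.cast_sub (by omega), Nat.cast_sub (by omega)]
    push_cast
    set m : ℝ := (Fintype.card W : ℝ)
    have h1 : m * (1 - 1 / (r : ℝ) - 1 / (16 * r ^ 2)) ≤ G.degree v := by linarith
    have h2 := mul_le_mul_of_nonneg_right h1 (show (0 : ℝ) ≤ 3 * r - 1 by linarith)
    refine lt_of_lt_of_le ?_ h2
    have e : m * (1 - 1 / (r : ℝ) - 1 / (16 * r ^ 2)) * (3 * r - 1) - (3 * r - 4) * m
      = m * ((13 * r + 1) / (16 * r ^ 2)) := by field_simp; ring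
    have : 0 < m * ((13 * (r : ℝ) + 1) / (16 * r ^ 2)) := by positivity
    linarith
  exact_mod_cast this

theorem four_pow_le (k : ℕ) (hk : 1 ≤ k) : 4 ^ k ≤ (k + 1) ^ (k + 1) := by
  rcases Nat.lt_or_ge k 3 with h | h
  · interval_cases k <;> norm_num
  · exact (Nat.pow_le_pow_left (by omega) k).trans (Nat.pow_le_pow_right (by omega) (by omega))

theorem numeric_P (k : ℕ) (hk : 1 ≤ k) :
    2 * ((k + 1) ^ 3 * (k + 2) * (4 * (k + 1)) ^ k) ≤ (k + 1) ^ (2 * (k + 1) + 5) := by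
  have h2 : k + 2 ≤ (k + 1) ^ 2 := by nlinarith
  calc 2 * ((k + 1) ^ 3 * (k + 2) * (4 * (k + 1)) ^ k)
      = 2 * ((k + 1) ^ 3 * (k + 2) * (4 ^ k * (k + 1) ^ k)) := by rw [mul_pow]
    _ ≤ (k + 1) * ((k + 1) ^ 3 * (k + 1) ^ 2 * ((k + 1) ^ (k + 1) * (k + 1) ^ k)) := by
        exact Nat.mul_le_mul (by omega) (Nat.mul_le_mul (Nat.mul_le_mul le_rfl h2)
          (Nat.mul_le_mul (four_pow_le k hk) le_rfl))
    _ = _ := by ring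

/-- With `r = k + 1`, the right-hand side is `1 / c`, and `(k + 1) ^ 3 * (k + 2) * (4 * (k + 1)) ^ k`
is the reciprocal of the density `κ` of the cliques used in `containsPlus_of_minDegree`. -/
theorem numeric_K (k : ℕ) (hk : 1 ≤ k) :
    8 * (2 * ((k + 1) ^ 3 * (k + 2) * (4 * (k + 1)) ^ k)) ^ k
      ≤ (k + 1) ^ ((2 * (k + 1) + 9) * (k + 1 + 1)) ∧
    128 * (k + 1) ^ 2 * (2 * ((k + 1) ^ 3 * (k + 2) * (4 * (k + 1)) ^ k))
      ≤ (k + 1) ^ ((2 * (k + 1) + 9) * (k + 1 + 1)) ∧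
    8192 * (k + 1) ^ 4 ≤ (k + 1) ^ ((2 * (k + 1) + 9) * (k + 1 + 1)) := by
  have hP := numeric_P k hk
  have hb : 2 ≤ k + 1 := by omega
  refine ⟨?_, ?_, ?_⟩
  · calc _ ≤ (k + 1) ^ 3 * ((k + 1) ^ (2 * (k + 1) + 5)) ^ k := by
          gcongr
          calc 8 = 2 ^ 3 := by norm_num
            _ ≤ _ := by gcongr
      _ = (k + 1) ^ (3 + (2 * (k + 1) + 5) * k) := by rw [← pow_mul, ← pow_add]
      _ ≤ _ := Nat.pow_le_pow_right (by omega) (by nlinarith)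
  · calc _ ≤ (k + 1) ^ 7 * (k + 1) ^ 2 * (k + 1) ^ (2 * (k + 1) + 5) := by
          gcongr
          calc 128 = 2 ^ 7 := by norm_num
            _ ≤ _ := by gcongr
      _ = (k + 1) ^ (7 + 2 + (2 * (k + 1) + 5)) := by rw [← pow_add, ← pow_add]
      _ ≤ _ := Nat.pow_le_pow_right (by omega) (by nlinarith)
  · calc _ ≤ (k + 1) ^ 13 * (k + 1) ^ 4 := by
          gcongr
          calc 8192 = 2 ^ 13 := by norm_num
            _ ≤ _ := by gcongr
      _ = (k + 1) ^ (13 + 4) := by rw [← pow_add]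
      _ ≤ _ := Nat.pow_le_pow_right (by omega) (by nlinarith)

/-- The spectral half of the proof, with `lam = 1 - 1/r - τ` and `τ = 1 / (64 r²)`: `G` has an
induced subgraph `H` of linear order, with large minimum degree, that contains `K_{r+1}`. -/
theorem exists_dense_induced.{u} {V : Type u} [Fintype V] [DecidableEq V] (G : SimpleGraph V)
    {r : ℕ} (hr : 2 ≤ r) (hn : 8192 * r ^ 4 ≤ Fintype.card V)
    (hmu : (SimpleGraph.turanGraph (Fintype.card V) r).specMax < G.specMax) :
    ∃ (W : Type u) (_ : Fintype W) (_ : DecidableEq W) (H : SimpleGraph W),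
      Nonempty (H ↪g G) ∧ (Fintype.card V : ℝ) / (128 * r ^ 2) ≤ Fintype.card W ∧
      (∀ v, ∑ w, (1 - adjInd H v w) ≤ (1 / (r : ℝ) + 1 / (16 * r ^ 2)) * Fintype.card W) ∧
      ¬ H.CliqueFree (r + 1) := by
  have hr2 : (2 : ℝ) ≤ r := by exact_mod_cast hr
  have hn' : 8192 * (r : ℝ) ^ 4 ≤ Fintype.card V := by exact_mod_cast hn
  have hr4 : (0 : ℝ) < r ^ 4 := by positivity
  have hnpos : (0 : ℝ) < Fintype.card V := by linarith
  have hτ0 : (0 : ℝ) < 1 / (64 * r ^ 2) := by positivity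
  have hτ1 : (1 : ℝ) / (64 * r ^ 2) ≤ 1 / 256 := by
    apply one_div_le_one_div_of_le <;> nlinarith
  have hτ4 : 4 * ((1 : ℝ) / (64 * r ^ 2)) = 1 / (16 * r ^ 2) := by field_simp; norm_num
  have hτn : (Fintype.card V : ℝ) / (128 * r ^ 2)
    = 1 / (64 * r ^ 2) * Fintype.card V / 2 := by field_simp; norm_num
  have hrn : (r : ℝ) / Fintype.card V ≤ 1 / (64 * r ^ 2) / 2 := by
    rw [div_le_iff₀ hnpos]
    have e : (1 : ℝ) / (64 * r ^ 2) / 2 * (8192 * (r : ℝ) ^ 4) = 64 * r ^ 2 := by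
      field_simp; norm_num
    have : (1 : ℝ) / (64 * r ^ 2) / 2 * (8192 * (r : ℝ) ^ 4)
      ≤ 1 / (64 * r ^ 2) / 2 * Fintype.card V := by gcongr
    nlinarith
  have hτM : ∀ M : ℝ, (Fintype.card V : ℝ) / (128 * r ^ 2) ≤ M → 1 ≤ 1 / (64 * r ^ 2) * M := by
    intro M hM
    have e : (1 : ℝ) / (64 * r ^ 2) * ((8192 * (r : ℝ) ^ 4) / (128 * r ^ 2)) = 1 := by
      field_simp; norm_num
    calc (1 : ℝ) = 1 / (64 * r ^ 2) * ((8192 * (r : ℝ) ^ 4) / (128 * r ^ 2)) := e.symm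
      _ ≤ 1 / (64 * r ^ 2) * ((Fintype.card V : ℝ) / (128 * r ^ 2)) := by gcongr
      _ ≤ _ := by gcongr
  set τ : ℝ := 1 / (64 * r ^ 2)
  have hi0 : (0 : ℝ) < 1 / r := by positivity
  have hi1 : (1 : ℝ) / r ≤ 1 / 2 := one_div_le_one_div_of_le (by norm_num) hr2
  have hri : (r : ℝ) * (1 / r) = 1 := by field_simp
  set lam : ℝ := 1 - 1 / r - τ with hlam
  have hlam0 : 0 < lam := by rw [hlam]; linarith
  obtain ⟨W, i1, i2, H, hemb, hΦ, hdeg⟩ := exists_induced_minDegree (lam := lam)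
    (β := 1 - 2 * τ) hlam0 (by linarith) (by linarith) (by rw [hlam]; linarith)
    (Fintype.card V) V G rfl
  have hT := le_specMax_turan (n := Fintype.card V) (r := r) (by omega) (by exact_mod_cast hnpos)
  have hHc := specMax_le_card H
  set n : ℝ := (Fintype.card V : ℝ) with hn_def
  set m : ℝ := (Fintype.card W : ℝ) with hm_def
  have hm0 : 0 ≤ m := Nat.cast_nonneg _
  have hH : lam * m + τ * n - r / n < H.specMax := by
    have : lam * n = (1 - 1 / r) * n - τ * n := by rw [hlam]; ring
    linarith
  have hn1 : 1 ≤ n := by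
    have : (1 : ℝ) ≤ r ^ 4 := one_le_pow₀ (by linarith)
    linarith
  have hτn1 : τ ≤ τ * n := le_mul_of_one_le_right hτ0.le hn1
  have hmn : n / (128 * r ^ 2) ≤ m := by
    rw [hτn]
    have : 0 ≤ lam * m := by positivity
    linarith
  have hτm := hτM m hmn
  have hm1 : 0 < m := by
    by_contra h
    push Not at h
    nlinarith
  have hne : Nonempty W := Fintype.card_pos_iff.1 (by rw [hm_def] at hm1; exact_mod_cast hm1)
  have hθ : ∀ v, ∑ w, (1 - adjInd H v w) ≤ (1 / (r : ℝ) + 1 / (16 * r ^ 2)) * m := by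
    intro v
    have h := hdeg v
    rw [Finset.sum_sub_distrib]
    simp only [Finset.sum_const, Finset.card_univ, nsmul_eq_mul, mul_one]
    rw [← hm_def, ← hτ4]
    have h1 : 1 - 1 / r - 3 * τ ≤ (1 - 2 * τ) * lam := by rw [hlam]; nlinarith
    have h2 : (1 - 2 * τ) * lam ≤ 1 := by rw [hlam]; nlinarith
    nlinarith
  refine ⟨W, i1, i2, H, hemb, hmn, hθ, fun hfree => ?_⟩
  -- otherwise `H` is `r`-colourable, which makes its largest eigenvalue too small
  obtain ⟨c⟩ := colorable_of_cliqueFree_of_sum H hr hθ hfree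
  have hc : ∀ u v, H.Adj u v → c u ≠ c v := fun u v h => c.valid h
  obtain ⟨f⟩ := hemb
  have hle : Fintype.card W ≤ Fintype.card V := Fintype.card_le_of_injective f f.injective
  have hHpos : 0 < H.specMax := by
    have : 0 ≤ lam * m := by positivity
    linarith
  rcases hle.lt_or_eq with hlt | heq
  · have h1 := specMax_le_of_coloring H (by omega) c hc
    have h2 : m + 1 ≤ n := by rw [hm_def, hn_def]; exact_mod_cast hlt
    have h3 : τ * (m + 1) ≤ τ * n := by gcongr
    have h4 : (1 - 1 / r) * m < H.specMax := by
      have : lam * m = (1 - 1 / r) * m - τ * m := by rw [hlam]; ring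
      linarith
    have h5 : (r : ℝ) * ((1 - 1 / r) * m) < r * H.specMax := by gcongr
    have h6 : (r : ℝ) * ((1 - 1 / r) * m) = (r - r * (1 / r)) * m := by ring
    rw [h6, hri] at h5
    linarith
  · have h1 := specMax_le_turan_of_coloring H (r := r) (by omega) c hc hHpos
    rw [heq] at h1
    have h2 : m = n := by rw [hm_def, hn_def, heq]
    rw [h2] at hΦ
    linarith

/-- **Theorem 3** (Nikiforov, "Spectral saturation"). Let `r ≥ 2`, `c = r^(-(2r+9)(r+1))`,
`n ≥ e^(2/c)`, and `G` be a graph of order `n`. If `μ(G) > μ(T_r(n))`, then `G` contains a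
copy of `K_r^+(⌊c ln n⌋, …, ⌊c ln n⌋)` (all `r` parts of size `⌊c ln n⌋`). -/
theorem spectral_KrPlus_balanced {V : Type*} [Fintype V] [DecidableEq V] (r n : ℕ)
    (hr : 2 ≤ r) (c : ℝ) (hc : c = ((r : ℝ) ^ ((2 * r + 9) * (r + 1)))⁻¹)
    (hn : Real.exp (2 / c) ≤ (n : ℝ))
    (G : SimpleGraph V) (hcard : Fintype.card V = n)
    (hmu : (SimpleGraph.turanGraph n r).specMax < G.specMax) :
    G.ContainsKPartitePlus (fun _ : Fin r => ⌊c * Real.log n⌋₊) ⟨0, by omega⟩ := by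
  obtain ⟨k, rfl⟩ : ∃ k, r = k + 1 := ⟨r - 1, by omega⟩
  have hk : 1 ≤ k := by omega
  obtain ⟨hK1, hK2, hK3⟩ := numeric_K k hk
  set Kn : ℕ := (k + 1) ^ ((2 * (k + 1) + 9) * (k + 1 + 1)) with hKn
  set Qn : ℕ := (k + 1) ^ 3 * (k + 2) * (4 * (k + 1)) ^ k with hQn
  have hQ1 : 1 ≤ Qn := Nat.one_le_iff_ne_zero.2 (by positivity)
  set K : ℝ := (Kn : ℝ) with hK
  set Q : ℝ := (Qn : ℝ) with hQ
  have hQ1' : (1 : ℝ) ≤ Q := by rw [hQ]; exact_mod_cast hQ1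
  have hcK : c = K⁻¹ := by rw [hc, hK, hKn]; push_cast; rfl
  have hk1 : (2 : ℝ) ≤ (k : ℝ) + 1 := by exact_mod_cast hr
  have hK1' : 8 * (2 * Q) ^ k ≤ K := by rw [hQ, hK]; exact_mod_cast hK1
  have hK2' : 128 * ((k : ℝ) + 1) ^ 2 * (2 * Q) ≤ K := by rw [hQ, hK]; exact_mod_cast hK2
  have hK3' : 8192 * ((k : ℝ) + 1) ^ 4 ≤ K := by rw [hK]; exact_mod_cast hK3
  have hKbig : 4 ≤ K := by
    have : (1 : ℝ) ≤ ((k : ℝ) + 1) ^ 4 := one_le_pow₀ (by linarith)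
    linarith
  have hKpos : 0 < K := by linarith
  have h2c : 2 / c = 2 * K := by rw [hcK, div_inv_eq_mul]
  rw [h2c] at hn
  have hnpos : (0 : ℝ) < n := lt_of_lt_of_le (Real.exp_pos _) hn
  have hlog : 2 * K ≤ Real.log n := by rwa [Real.le_log_iff_exp_le hnpos]
  set ℓ := Real.log n with hℓ
  have hKn' : K ≤ n := by
    have := Real.add_one_le_exp (2 * K)
    linarith
  subst hcard
  obtain ⟨W, _, _, H, ⟨f⟩, hmn, hθ, hfree⟩ := exists_dense_induced G hr
    (by exact_mod_cast hK3'.trans hKn') hmu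
  refine containsPlus_of_embedding f ?_
  -- `κ` is the density of cliques and `L ≈ ln n / 4` the size of the families of disjoint cliques
  set κ : ℝ := 1 / Q with hκ
  have hκ0 : 0 < κ := by positivity
  have hκ2 : κ / 2 = (2 * Q)⁻¹ := by rw [hκ]; field_simp
  set L : ℕ := ⌊ℓ / 4⌋₊ with hL
  have hLle : (L : ℝ) ≤ ℓ / 4 := Nat.floor_le (by linarith)
  have hLge : ℓ / 8 ≤ L := by
    have := Nat.lt_floor_add_one (ℓ / 4)
    rw [← hL] at this
    linarith
  refine containsPlus_of_minDegree H hk hθ hfree (κ := κ) (L := L) hκ0 ?_ ?_ ?_ ?_ ?_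
  · have : ((k : ℝ) + 1) ^ 3 * (k + 2) * (4 * (k + 1)) ^ k = Q := by rw [hQ, hQn]; push_cast; ring
    rw [this, hκ, one_div, inv_mul_cancel₀ (by positivity)]
  · have : (1 : ℝ) ≤ L := by linarith
    exact_mod_cast this
  · -- with `y = n ^ (1/4)`, both `L` and `2 ^ L` are at most `y`, and `y ^ 2 ≥ exp K`
    set y := Real.exp (ℓ / 4) with hy
    have h2L : (2 : ℝ) ^ L ≤ y := by
      calc (2 : ℝ) ^ L ≤ Real.exp 1 ^ L := by
            have := Real.add_one_le_exp 1
            gcongr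
            linarith
        _ = Real.exp L := by rw [← Real.exp_nat_mul]; simp
        _ ≤ y := Real.exp_le_exp.2 hLle
    have hLy : (L : ℝ) ≤ y := by
      have : L ≤ 2 ^ L := Nat.lt_two_pow_self.le
      have h' : (L : ℝ) ≤ 2 ^ L := by exact_mod_cast this
      exact h'.trans h2L
    have hy0 : 0 < y := Real.exp_pos _
    have hyK : K ≤ y ^ 2 := by
      rw [hy, ← Real.exp_nat_mul]
      have := Real.add_one_le_exp (((2 : ℕ) : ℝ) * (ℓ / 4))
      push_cast at this ⊢
      linarith
    have hyn : (Fintype.card V : ℝ) = y ^ 2 * y ^ 2 := by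
      rw [hy, ← Real.exp_nat_mul, ← Real.exp_add]
      push_cast
      rw [show (2 * (ℓ / 4) + 2 * (ℓ / 4)) = ℓ by ring, hℓ, Real.exp_log hnpos]
    calc (2 : ℝ) ^ L * L ≤ y * y := by gcongr
      _ = y ^ 2 := by ring
      _ = (128 * ((k : ℝ) + 1) ^ 2 * (2 * Q)) * (y ^ 2 / (128 * (k + 1) ^ 2 * (2 * Q))) := by
          field_simp
      _ ≤ y ^ 2 * (y ^ 2 / (128 * (k + 1) ^ 2 * (2 * Q))) := by
          gcongr
          exact hK2'.trans hyK
      _ = κ / 2 * ((Fintype.card V : ℝ) / (128 * (k + 1) ^ 2)) := by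
          rw [hyn, hκ2]; field_simp
      _ ≤ _ := by
          push_cast at hmn
          gcongr
  · refine Nat.le_floor ?_
    rw [hcK, inv_mul_eq_div, le_div_iff₀ hKpos]
    exact_mod_cast hlog
  · refine (Nat.floor_le (by rw [hcK]; have : 0 ≤ ℓ := by linarith
                             positivity)).trans ?_
    rw [hcK, hκ2, inv_pow]
    have hP : 0 < (2 * Q) ^ k := by positivity
    have h1 : K⁻¹ ≤ (8 * (2 * Q) ^ k)⁻¹ := inv_anti₀ (by positivity) hK1'
    calc K⁻¹ * ℓ ≤ (8 * (2 * Q) ^ k)⁻¹ * ℓ := by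
          have : 0 ≤ ℓ := by linarith
          gcongr
      _ = ℓ / 8 * ((2 * Q) ^ k)⁻¹ := by rw [mul_inv]; ring
      _ ≤ _ := by gcongr
end

section
/- Let r ≥ 2, 0 < b < 2^{-10} r^{-6}, n ≥ r^{20}, and let G be a graph of order n. If μ(G) > (1 − 1/r − b)n, then at least one of the following holds: (a) js_{r+1}(G) > n^{r-1} / r^{2r+5}; (b) G contains an induced r-partite subgraph G_0 of order at least (1 − 4b^{1/3})n with minimum degree δ(G_0) > (1 − 1/r − 7b^{1/3})n. -/
/-- The minimum degree of a finite simple graph. -/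
noncomputable def SimpleGraph.minDeg {V : Type*} [Fintype V] [DecidableEq V]
    (G : SimpleGraph V) : ℕ :=
  letI := Classical.decRel G.Adj
  G.minDegree

/-- `G.jointSize r` is the maximum size of an `r`-joint in `G`, i.e. the maximum number
of distinct `r`-cliques of `G` sharing a common edge. -/
noncomputable def SimpleGraph.jointSize {V : Type*} [Fintype V] (G : SimpleGraph V)
    (r : ℕ) : ℕ :=
  sSup {t : ℕ | ∃ u v : V, G.Adj u v ∧ ∃ S : Finset (Finset V),
    S.card = t ∧ ∀ s ∈ S, G.IsNClique r s ∧ u ∈ s ∧ v ∈ s}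

/-! ### Perron vectors -/

/-- The quadratic form `xᵀ A x` of the adjacency matrix `A` of `G`; every edge counts twice. -/
noncomputable def SimpleGraph.adjForm {V : Type*} [Fintype V] (G : SimpleGraph V)
    (x : V → ℝ) : ℝ :=
  open Classical in ∑ u, ∑ v, if G.Adj u v then x u * x v else 0

open Classical Matrix in
/-- Perron vector of a graph: the largest eigenvalue dominates the Rayleigh quotient, so the
entrywise absolute value of a top eigenvector is again a maximizer, hence again an eigenvector. -/
lemma exists_perron {V : Type*} [Fintype V] [DecidableEq V] [Nonempty V] (G : SimpleGraph V) :
    ∃ x : V → ℝ, (∀ u, 0 ≤ x u) ∧ ∑ u, x u ^ 2 = 1 ∧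
      (∀ u, ∑ v, (if G.Adj u v then x v else 0) = G.specMax * x u) ∧
      ∀ y, G.adjForm y ≤ G.specMax * ∑ u, y u ^ 2 := by
  set A : Matrix V V ℝ := G.adjMatrix ℝ with hAdef
  have hA : A.IsHermitian := by
    rw [Matrix.IsHermitian, Matrix.conjTranspose_eq_transpose_of_trivial]
    exact SimpleGraph.isSymm_adjMatrix G
  have hmu : G.specMax = ⨆ i, hA.eigenvalues i := by
    unfold SimpleGraph.specMax
    congr!
  set μ := G.specMax
  have hle : ∀ i, hA.eigenvalues i ≤ μ := fun i => by
    rw [hmu]; exact le_ciSup (Set.finite_range _).bddAbove i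
  obtain ⟨i₀, hi₀⟩ : ∃ i, hA.eigenvalues i = μ := by
    rw [hmu]; exact exists_eq_ciSup_of_finite
  have hform : ∀ y : V → ℝ, G.adjForm y = y ⬝ᵥ (A *ᵥ y) := fun y => by
    simp only [SimpleGraph.adjForm, dotProduct, Matrix.mulVec, Finset.mul_sum, hAdef,
      SimpleGraph.adjMatrix_apply]
    refine Finset.sum_congr rfl fun u _ => Finset.sum_congr rfl fun v _ => ?_
    split_ifs <;> simp
  -- `μ I - A` is positive semidefinite
  have hpsd : (μ • (1 : Matrix V V ℝ) - A).PosSemidef := by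
    set U := (hA.eigenvectorUnitary : Matrix V V ℝ) with hU
    have hUU : U * U.conjTranspose = 1 := by
      have := Unitary.mul_star_self_of_mem hA.eigenvectorUnitary.2
      simpa [Matrix.star_eq_conjTranspose] using this
    have hdec : A = U * Matrix.diagonal hA.eigenvalues * U.conjTranspose := by
      have := hA.spectral_theorem
      rw [Unitary.conjStarAlgAut_apply] at this
      exact this
    have : μ • (1 : Matrix V V ℝ) - A =
        U * Matrix.diagonal (fun i => μ - hA.eigenvalues i) * U.conjTranspose := by
      have h1 : Matrix.diagonal (fun i => μ - hA.eigenvalues i) =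
          μ • (1 : Matrix V V ℝ) - Matrix.diagonal hA.eigenvalues := by
        ext i j; by_cases h : i = j <;> simp [Matrix.diagonal, h]
      rw [h1, Matrix.mul_sub, Matrix.sub_mul, ← hdec]
      rw [Matrix.mul_smul, Matrix.smul_mul, Matrix.mul_one, hUU]
    rw [this]
    exact (Matrix.PosSemidef.diagonal (fun i => by simpa using hle i)).mul_mul_conjTranspose_same _
  have hsub : ∀ y : V → ℝ, y ⬝ᵥ ((μ • (1 : Matrix V V ℝ) - A) *ᵥ y) =
      μ * ∑ u, y u ^ 2 - G.adjForm y := fun y => by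
    rw [hform, Matrix.sub_mulVec, dotProduct_sub, Matrix.smul_mulVec, Matrix.one_mulVec,
      dotProduct_smul]
    simp [dotProduct, sq]
  have hray : ∀ y, G.adjForm y ≤ μ * ∑ u, y u ^ 2 := fun y => by
    have := hpsd.dotProduct_mulVec_nonneg y
    rw [star_trivial, hsub] at this
    linarith
  set z : V → ℝ := fun u => hA.eigenvectorBasis i₀ u with hz
  have hz1 : ∑ u, z u ^ 2 = 1 := by
    have := hA.eigenvectorBasis.orthonormal.1 i₀
    rw [EuclideanSpace.norm_eq, Real.sqrt_eq_one] at this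
    simpa using this
  have hzA : G.adjForm z = μ := by
    have : A *ᵥ z = μ • z := by rw [← hi₀]; exact hA.mulVec_eigenvectorBasis i₀
    rw [hform, this, dotProduct_smul]
    have : z ⬝ᵥ z = 1 := by rw [← hz1]; simp [dotProduct, sq]
    simp [this]
  refine ⟨fun u => |z u|, fun u => abs_nonneg _, by simpa using hz1, ?_, hray⟩
  have habs : μ ≤ G.adjForm (fun u => |z u|) := by
    rw [← hzA]
    refine Finset.sum_le_sum fun u _ => Finset.sum_le_sum fun v _ => ?_
    split_ifs
    · rw [← abs_mul]; exact le_abs_self _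
    · rfl
  have hzero : star (fun u => |z u|) ⬝ᵥ
      ((μ • (1 : Matrix V V ℝ) - A) *ᵥ (fun u => |z u|)) = 0 := by
    have h1 := hpsd.dotProduct_mulVec_nonneg (fun u => |z u|)
    rw [star_trivial, hsub] at h1 ⊢
    simp only [sq_abs, hz1] at h1 ⊢
    linarith
  rw [hpsd.dotProduct_mulVec_zero_iff] at hzero
  intro u
  have := congrFun hzero u
  rw [Matrix.sub_mulVec, Matrix.smul_mulVec, Matrix.one_mulVec] at this
  simp only [Pi.sub_apply, Pi.smul_apply, smul_eq_mul, Pi.zero_apply, Matrix.mulVec, dotProduct,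
    hAdef, SimpleGraph.adjMatrix_apply, ite_mul, one_mul, zero_mul] at this
  linarith

/-! ### Weighted Moon–Moser inequalities -/

open Classical in
/-- The cliques of order `s` of `G` whose vertices all lie in `U`. -/
noncomputable def SimpleGraph.cliquesIn {V : Type*} [Fintype V] (G : SimpleGraph V)
    (U : Finset V) (s : ℕ) : Finset (Finset V) :=
  U.powerset.filter (G.IsNClique s)

lemma mem_cliquesIn {V : Type*} [Fintype V] {G : SimpleGraph V} {U K : Finset V} {s : ℕ} :
    K ∈ G.cliquesIn U s ↔ K ⊆ U ∧ G.IsNClique s K := by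
  simp [SimpleGraph.cliquesIn]

/-- Double counting of the pairs `w ∈ K'`, where `K'` is a clique of order `s + 1` in `U`: such a
pair is the same as a vertex `w` with a clique of order `s` in its neighbourhood. -/
lemma sum_cliquesIn_nbr {V : Type*} [Fintype V] [DecidableEq V] (G : SimpleGraph V)
    [DecidableRel G.Adj] (U : Finset V) (s : ℕ) (F : Finset V → V → ℝ) :
    ∑ w ∈ U, ∑ K ∈ G.cliquesIn (U.filter (G.Adj w)) s, F K w =
      ∑ K ∈ G.cliquesIn U (s + 1), ∑ w ∈ K, F (K.erase w) w := by
  rw [Finset.sum_sigma', Finset.sum_sigma']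
  refine Finset.sum_bij' (fun p _ => ⟨insert p.1 p.2, p.1⟩) (fun p _ => ⟨p.2, p.1.erase p.2⟩)
    ?_ ?_ ?_ ?_ ?_
  · rintro ⟨w, K⟩ h
    simp only [Finset.mem_sigma, mem_cliquesIn, Finset.subset_iff, Finset.mem_filter] at h ⊢
    refine ⟨⟨?_, h.2.2.insert fun u hu => (h.2.1 hu).2⟩, Finset.mem_insert_self _ _⟩
    intro u hu
    rcases Finset.mem_insert.1 hu with rfl | hu
    · exact h.1
    · exact (h.2.1 hu).1
  · rintro ⟨K, w⟩ h
    simp only [Finset.mem_sigma, mem_cliquesIn, Finset.subset_iff, Finset.mem_filter] at h ⊢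
    refine ⟨h.1.1 h.2, ?_, by simpa using h.1.2.erase_of_mem h.2⟩
    intro u hu
    exact ⟨h.1.1 (Finset.mem_of_mem_erase hu),
      h.1.2.isClique h.2 (Finset.mem_of_mem_erase hu) (Finset.ne_of_mem_erase hu).symm⟩
  · rintro ⟨w, K⟩ h
    simp only [Finset.mem_sigma, mem_cliquesIn, Finset.subset_iff, Finset.mem_filter] at h
    have : w ∉ K := fun hw => G.loopless.irrefl w (h.2.1 hw).2
    simp [Finset.erase_insert this]
  · rintro ⟨K, w⟩ h
    simp only [Finset.mem_sigma] at h
    simp [Finset.insert_erase h.2]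
  · rintro ⟨w, K⟩ h
    simp only [Finset.mem_sigma, mem_cliquesIn, Finset.subset_iff, Finset.mem_filter] at h
    have : w ∉ K := fun hw => G.loopless.irrefl w (h.2.1 hw).2
    simp [Finset.erase_insert this]

/-- The total `y`-weight of the cliques of order `s`, a clique weighing the product of the weights
of its vertices. -/
noncomputable def SimpleGraph.cliqueWeight {V : Type*} [Fintype V] (G : SimpleGraph V)
    (y : V → ℝ) (s : ℕ) : ℝ :=
  ∑ K ∈ G.cliquesIn Finset.univ s, ∏ u ∈ K, y u

open Classical in
/-- The total `y`-weight of the vertices adjacent to all vertices of `K`. -/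
noncomputable def SimpleGraph.commonWeight {V : Type*} [Fintype V] (G : SimpleGraph V)
    (y : V → ℝ) (K : Finset V) : ℝ :=
  ∑ w, if ∀ u ∈ K, G.Adj w u then y w else 0

/-- The double counting identity, with the outer sum over the smaller cliques. -/
lemma sum_commonWeight {V : Type*} [Fintype V] [DecidableEq V] (G : SimpleGraph V)
    (y : V → ℝ) (s : ℕ) (f : Finset V → ℝ) :
    ∑ K ∈ G.cliquesIn Finset.univ s, (∏ u ∈ K, y u) * f K * G.commonWeight y K =
      ∑ K ∈ G.cliquesIn Finset.univ (s + 1), (∏ u ∈ K, y u) * ∑ w ∈ K, f (K.erase w) := by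
  classical
  have h := sum_cliquesIn_nbr G Finset.univ s (fun K w => (∏ u ∈ K, y u) * f K * y w)
  have hl : ∑ K ∈ G.cliquesIn Finset.univ s, (∏ u ∈ K, y u) * f K * G.commonWeight y K =
      ∑ w, ∑ K ∈ G.cliquesIn (Finset.univ.filter (G.Adj w)) s,
        (∏ u ∈ K, y u) * f K * y w := by
    simp only [SimpleGraph.commonWeight, Finset.mul_sum]
    rw [Finset.sum_comm]
    refine Finset.sum_congr rfl fun w _ => ?_
    simp only [mul_ite, mul_zero]
    rw [← Finset.sum_filter]
    refine Finset.sum_congr ?_ fun _ _ => rfl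
    ext K
    simp [mem_cliquesIn, Finset.subset_iff, and_comm]
  rw [hl, h]
  refine Finset.sum_congr rfl fun K _ => ?_
  rw [Finset.mul_sum]
  refine Finset.sum_congr rfl fun w hw => ?_
  rw [← Finset.prod_erase_mul K y hw]
  ring

lemma sum_mul_commonWeight {V : Type*} [Fintype V] [DecidableEq V] (G : SimpleGraph V)
    (y : V → ℝ) (s : ℕ) :
    ∑ K ∈ G.cliquesIn Finset.univ s, (∏ u ∈ K, y u) * G.commonWeight y K =
      (s + 1) * G.cliqueWeight y (s + 1) := by
  have := sum_commonWeight G y s (fun _ => 1)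
  simp only [mul_one] at this
  rw [this, SimpleGraph.cliqueWeight, Finset.mul_sum]
  refine Finset.sum_congr rfl fun K hK => ?_
  rw [Finset.sum_const, (mem_cliquesIn.1 hK).2.card_eq]
  simp [mul_comm]

lemma commonWeight_nonneg {V : Type*} [Fintype V] (G : SimpleGraph V)
    {y : V → ℝ} (hy : ∀ u, 0 ≤ y u) (K : Finset V) : 0 ≤ G.commonWeight y K :=
  Finset.sum_nonneg fun _ _ => by split_ifs <;> simp [hy]

lemma cliqueWeight_nonneg {V : Type*} [Fintype V] (G : SimpleGraph V)
    {y : V → ℝ} (hy : ∀ u, 0 ≤ y u) (s : ℕ) : 0 ≤ G.cliqueWeight y s :=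
  Finset.sum_nonneg fun _ _ => Finset.prod_nonneg fun u _ => hy u

/-- A vertex that is not adjacent to all of `K` is adjacent to all of `K \ {w}` for at most one
`w ∈ K`. -/
lemma sum_commonWeight_erase_le {V : Type*} [Fintype V] [DecidableEq V] (G : SimpleGraph V)
    {y : V → ℝ} (hy : ∀ u, 0 ≤ y u) (hy1 : ∑ u, y u = 1) (K : Finset V) :
    ∑ w ∈ K, G.commonWeight y (K.erase w) ≤ 1 + ((K.card : ℝ) - 1) * G.commonWeight y K := by
  classical
  suffices h : ∑ w ∈ K, G.commonWeight y (K.erase w) ≤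
      ∑ u, y u + ((K.card : ℝ) - 1) * G.commonWeight y K by rwa [hy1] at h
  simp only [SimpleGraph.commonWeight]
  rw [Finset.sum_comm, Finset.mul_sum, ← Finset.sum_add_distrib]
  refine Finset.sum_le_sum fun v _ => ?_
  by_cases h : ∀ u ∈ K, G.Adj v u
  · refine (Finset.sum_congr rfl (g := fun _ => y v) fun w _ =>
      if_pos fun u hu => h u (Finset.mem_of_mem_erase hu)).le.trans ?_
    rw [if_pos h, Finset.sum_const, nsmul_eq_mul]
    linarith
  · rw [if_neg h, mul_zero, add_zero]
    push Not at h
    obtain ⟨u, hu, hvu⟩ := h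
    rw [Finset.sum_eq_single_of_mem u hu]
    · split_ifs <;> simp [hy]
    · intro w hw hwu
      exact if_neg fun h => hvu (h u (Finset.mem_erase.2 ⟨hwu.symm, hu⟩))

/-- Weighted Moon–Moser inequality, from the Cauchy–Schwarz inequality for `commonWeight`. -/
lemma moon_moser {V : Type*} [Fintype V] [DecidableEq V] (G : SimpleGraph V)
    {y : V → ℝ} (hy : ∀ u, 0 ≤ y u) (hy1 : ∑ u, y u = 1) (s : ℕ) :
    ((s + 1) * G.cliqueWeight y (s + 1)) ^ 2 ≤ G.cliqueWeight y s *
      (G.cliqueWeight y (s + 1) + s * ((s + 2) * G.cliqueWeight y (s + 2))) := by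
  have hcs := Finset.sum_sq_le_sum_mul_sum_of_sq_le_mul (G.cliquesIn Finset.univ s)
    (r := fun K => (∏ u ∈ K, y u) * G.commonWeight y K)
    (f := fun K => ∏ u ∈ K, y u)
    (g := fun K => (∏ u ∈ K, y u) * G.commonWeight y K * G.commonWeight y K)
    (fun _ _ => Finset.prod_nonneg fun u _ => hy u)
    (fun _ _ => mul_nonneg (mul_nonneg (Finset.prod_nonneg fun u _ => hy u)
      (commonWeight_nonneg G hy _)) (commonWeight_nonneg G hy _))
    (fun K _ => le_of_eq (by ring))
  rw [sum_mul_commonWeight, sum_commonWeight] at hcs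
  refine hcs.trans (mul_le_mul_of_nonneg_left ?_ (cliqueWeight_nonneg G hy s))
  have h2 := sum_mul_commonWeight G y (s + 1)
  have : (s : ℝ) * ((s + 2) * G.cliqueWeight y (s + 2)) =
      ∑ K ∈ G.cliquesIn Finset.univ (s + 1), s * ((∏ u ∈ K, y u) * G.commonWeight y K) := by
    rw [← Finset.mul_sum, h2]; push_cast; ring
  rw [this, SimpleGraph.cliqueWeight, ← Finset.sum_add_distrib]
  refine Finset.sum_le_sum fun K hK => ?_
  have h3 := sum_commonWeight_erase_le G hy hy1 K
  rw [(mem_cliquesIn.1 hK).2.card_eq] at h3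
  have h4 := mul_le_mul_of_nonneg_left h3 (Finset.prod_nonneg fun u (_ : u ∈ K) => hy u)
  push_cast at h4
  linarith

lemma cliqueWeight_zero {V : Type*} [Fintype V] [DecidableEq V] (G : SimpleGraph V)
    (y : V → ℝ) : G.cliqueWeight y 0 = 1 := by
  have : G.cliquesIn Finset.univ 0 = {∅} := by
    ext K; simp [mem_cliquesIn, SimpleGraph.isNClique_zero]
  simp [SimpleGraph.cliqueWeight, this]

lemma cliqueWeight_one {V : Type*} [Fintype V] [DecidableEq V] (G : SimpleGraph V)
    {y : V → ℝ} (hy1 : ∑ u, y u = 1) : G.cliqueWeight y 1 = 1 := by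
  have := sum_mul_commonWeight G y 0
  have h0 : G.cliquesIn Finset.univ 0 = {∅} := by
    ext K; simp [mem_cliquesIn, SimpleGraph.isNClique_zero]
  rw [h0] at this
  simpa [SimpleGraph.commonWeight, hy1] using this.symm

lemma two_mul_cliqueWeight_two {V : Type*} [Fintype V] [DecidableEq V] (G : SimpleGraph V)
    (y : V → ℝ) : 2 * G.cliqueWeight y 2 = G.adjForm y := by
  classical
  have := sum_mul_commonWeight G y 1
  have h1 : G.cliquesIn Finset.univ 1 = Finset.univ.image fun v => {v} := by
    ext K
    simp [mem_cliquesIn, SimpleGraph.isNClique_one, eq_comm]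
  rw [h1, Finset.sum_image (fun a _ b _ h => by simpa using h)] at this
  simp only [Finset.prod_singleton, SimpleGraph.commonWeight,
    Finset.mem_singleton, forall_eq, Finset.mul_sum, mul_ite, mul_zero] at this
  norm_num at this
  rw [← this, SimpleGraph.adjForm]
  refine Finset.sum_congr rfl fun u _ => Finset.sum_congr rfl fun v _ => ?_
  simp only [G.adj_comm]

/-- If the weighted edge density exceeds `1 - 1/r` by `c`, then each step of the Moon–Moser chain
is bounded below: `(s + 2) w_{s+2} / w_{s+1} ≥ 1 - (s + 1) (1 - d)` with `d = 1 - 1/r + c`. -/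
lemma cliqueWeight_step {V : Type*} [Fintype V] [DecidableEq V] (G : SimpleGraph V)
    {y : V → ℝ} (hy : ∀ u, 0 ≤ y u) (hy1 : ∑ u, y u = 1) {r : ℕ} {c : ℝ} (hr : 1 ≤ r)
    (hc : 0 < c) (hd : 1 - 1 / (r : ℝ) + c ≤ G.adjForm y) (s : ℕ) (hs : s < r) :
    0 < G.cliqueWeight y (s + 1) ∧
      (1 - (s + 1) * (1 / (r : ℝ) - c)) * G.cliqueWeight y (s + 1) ≤
        (s + 2) * G.cliqueWeight y (s + 2) := by
  have hr0 : (0 : ℝ) < r := by exact_mod_cast hr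
  induction s with
  | zero =>
    rw [zero_add, cliqueWeight_one G hy1]
    have := two_mul_cliqueWeight_two G y
    refine ⟨one_pos, ?_⟩
    push_cast
    rw [zero_add, zero_add]
    linarith
  | succ s ih =>
    obtain ⟨h1, h2⟩ := ih (by omega)
    have hsr : (s : ℝ) + 1 ≤ r := by exact_mod_cast hs.le
    have ha : 0 < 1 - ((s : ℝ) + 1) * (1 / (r : ℝ) - c) := by
      have : ((s : ℝ) + 1) * (1 / r) ≤ 1 := by
        rw [mul_one_div, div_le_one hr0]; exact hsr
      nlinarith [mul_pos (by positivity : (0:ℝ) < s + 1) hc]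
    have hpos : 0 < G.cliqueWeight y (s + 2) := by
      have := mul_pos ha h1
      have h3 : 0 < ((s : ℝ) + 2) * G.cliqueWeight y (s + 2) := this.trans_le h2
      exact pos_of_mul_pos_right h3 (by positivity)
    refine ⟨hpos, ?_⟩
    have hmm := moon_moser G hy hy1 (s + 1)
    push_cast at hmm ⊢
    rw [show s + 1 + 1 = s + 2 from rfl, show s + 1 + 2 = s + 3 from rfl] at *
    set P := G.cliqueWeight y (s + 1)
    set Q := G.cliqueWeight y (s + 2)
    set R := G.cliqueWeight y (s + 3)
    set t := 1 / (r : ℝ) - c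
    have h4 : (1 - (s + 1) * t) * P * ((s + 2) * Q) ≤ ((s + 2) * Q) * ((s + 2) * Q) :=
      mul_le_mul_of_nonneg_right h2 (by positivity)
    have h5 : ((s : ℝ) + 2) * (1 - (s + 1) * t) - 1 = (s + 1) * (1 - (s + 2) * t) := by ring
    have h6 : P * (s + 1) * ((1 - (s + 2) * t) * Q) ≤ P * (s + 1) * ((s + 3) * R) := by
      have : P * (s + 1) * ((1 - (s + 2) * t) * Q) =
        (1 - (s + 1) * t) * P * ((s + 2) * Q) - P * Q := by linear_combination -P * Q * h5
      rw [this]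
      have e : ((s : ℝ) + 1 + 1) = s + 2 := by ring
      have e' : ((s : ℝ) + 1 + 2) = s + 3 := by ring
      rw [e, e'] at hmm
      nlinarith
    have h7 := le_of_mul_le_mul_left h6 (by positivity)
    linarith

/-- Supersaturation: `w_r ≥ r^{-r}` and `(r + 1) w_{r+1} ≥ r c w_r`. -/
lemma cliqueWeight_succ_ge {V : Type*} [Fintype V] [DecidableEq V] (G : SimpleGraph V)
    {y : V → ℝ} (hy : ∀ u, 0 ≤ y u) (hy1 : ∑ u, y u = 1) {r : ℕ} {c : ℝ} (hr : 1 ≤ r)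
    (hc : 0 < c) (hd : 1 - 1 / (r : ℝ) + c ≤ G.adjForm y) :
    r * c / (r : ℝ) ^ r ≤ (r + 1) * G.cliqueWeight y (r + 1) := by
  have hr0 : (0 : ℝ) < r := by exact_mod_cast hr
  have key : ∀ s : ℕ, s < r → (r.choose (s + 1) : ℝ) / (r : ℝ) ^ (s + 1) ≤
      G.cliqueWeight y (s + 1) := by
    intro s
    induction s with
    | zero =>
      intro _
      rw [zero_add, cliqueWeight_one G hy1]
      simp [hr0.ne']
    | succ s ih =>
      intro hs
      have h0 := ih (by omega)
      obtain ⟨h1, h2⟩ := cliqueWeight_step G hy hy1 hr hc hd s (by omega)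
      have h3 : (r.choose (s + 2) : ℝ) * (s + 2) = r.choose (s + 1) * (r - (s + 1)) := by
        have := Nat.choose_succ_right_eq r (s + 1)
        have h := congrArg (Nat.cast (R := ℝ)) this
        push_cast [Nat.cast_sub (show s + 1 ≤ r by omega)] at h
        linarith
      have hsr : (s : ℝ) + 1 < r := by exact_mod_cast hs
      have h4 : (r - (s + 1)) / r * G.cliqueWeight y (s + 1) ≤
          (s + 2) * G.cliqueWeight y (s + 2) := by
        refine le_trans (mul_le_mul_of_nonneg_right ?_ h1.le) h2
        rw [sub_div, div_self hr0.ne']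
        have : ((s : ℝ) + 1) * c ≥ 0 := by positivity
        have e : ((s : ℝ) + 1) * (1 / r) = (s + 1) / r := by ring
        linarith
      have h5 : (r - (s + 1)) / r * ((r.choose (s + 1) : ℝ) / (r : ℝ) ^ (s + 1)) ≤
          (s + 2) * G.cliqueWeight y (s + 2) :=
        (mul_le_mul_of_nonneg_left h0 (div_nonneg (by linarith) hr0.le)).trans h4
      have h6 : (r - (s + 1)) / r * ((r.choose (s + 1) : ℝ) / (r : ℝ) ^ (s + 1)) =
          (s + 2) * ((r.choose (s + 2) : ℝ) / (r : ℝ) ^ (s + 2)) := by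
        rw [pow_succ (r : ℝ) (s + 1)]
        field_simp
        linarith
      rw [h6] at h5
      exact le_of_mul_le_mul_left h5 (by positivity)
  obtain ⟨k, rfl⟩ : ∃ k, r = k + 1 := ⟨r - 1, by omega⟩
  have h1 := key k (by omega)
  obtain ⟨-, h2⟩ := cliqueWeight_step G hy hy1 hr hc hd k (by omega)
  rw [Nat.choose_self] at h1
  push_cast at *
  have e : (1 : ℝ) - (k + 1) * (1 / (k + 1) - c) = (k + 1) * c := by field_simp; ring
  rw [e] at h2
  have h3 := mul_le_mul_of_nonneg_left h1 (by positivity : 0 ≤ ((k : ℝ) + 1) * c)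
  calc _ = ((k : ℝ) + 1) * c * (1 / (k + 1) ^ (k + 1)) := by ring
    _ ≤ _ := h3
    _ ≤ _ := h2
    _ = _ := by ring

/-! ### Large joints -/

open Classical in
/-- The defining bound of `jointSize`: an edge lies in at most `jointSize` cliques. -/
lemma card_cliques_le_jointSize {V : Type*} [Fintype V] (G : SimpleGraph V) (s : ℕ)
    {u v : V} (h : G.Adj u v) :
    ((G.cliquesIn Finset.univ s).filter fun K => u ∈ K ∧ v ∈ K).card ≤ G.jointSize s := by
  refine le_csSup ⟨Fintype.card (Finset V), ?_⟩ ⟨u, v, h, _, rfl, ?_⟩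
  · rintro t ⟨_, _, _, S, rfl, _⟩
    exact Finset.card_le_univ S
  · intro K hK
    rw [Finset.mem_filter, mem_cliquesIn] at hK
    exact ⟨hK.1.2, hK.2⟩

/-- Double counting of the pairs formed by a clique and an ordered edge inside it. -/
lemma sum_offDiag_cliques_le {V : Type*} [Fintype V] [DecidableEq V] {G H : SimpleGraph V}
    (hH : H ≤ G) (s : ℕ) {f : V → V → ℝ} (hf : ∀ u v, 0 ≤ f u v) [DecidableRel H.Adj] :
    ∑ K ∈ H.cliquesIn Finset.univ s, ∑ p ∈ K.offDiag, f p.1 p.2 ≤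
      G.jointSize s * ∑ u, ∑ v, if H.Adj u v then f u v else 0 := by
  classical
  have h1 : ∀ K ∈ H.cliquesIn Finset.univ s, ∑ p ∈ K.offDiag, f p.1 p.2 =
      ∑ u, ∑ v, if H.Adj u v then (if u ∈ K ∧ v ∈ K then f u v else 0) else 0 := by
    intro K hK
    rw [← Finset.sum_product']
    refine Eq.trans ?_ (Finset.sum_subset (Finset.subset_univ K.offDiag) ?_)
    · refine Finset.sum_congr rfl fun p hp => ?_
      rw [Finset.mem_offDiag] at hp
      rw [if_pos ((mem_cliquesIn.1 hK).2.isClique hp.1 hp.2.1 hp.2.2), if_pos ⟨hp.1, hp.2.1⟩]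
    · intro p _ hp
      rw [Finset.mem_offDiag] at hp
      split_ifs with h2 h3
      · exact absurd ⟨h3.1, h3.2, h2.ne⟩ hp
      · rfl
      · rfl
  rw [Finset.sum_congr rfl h1, Finset.sum_comm, Finset.mul_sum]
  refine Finset.sum_le_sum fun u _ => ?_
  rw [Finset.sum_comm, Finset.mul_sum]
  refine Finset.sum_le_sum fun v _ => ?_
  split_ifs with h
  · rw [← Finset.sum_filter, Finset.sum_const, nsmul_eq_mul]
    refine mul_le_mul_of_nonneg_right ?_ (hf u v)
    refine le_trans ?_ (Nat.cast_le.2 (card_cliques_le_jointSize G s (hH h)))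
    refine Nat.cast_le.2 (Finset.card_le_card ?_)
    intro K hK
    simp only [Finset.mem_filter, mem_cliquesIn] at hK ⊢
    exact ⟨⟨hK.1.1, hK.1.2.mono hH⟩, hK.2⟩
  · simp

/-- A graph whose spectral radius exceeds `(1 - 1/r) m` by a constant proportion has a large
joint. The clique weights for `y = x / ∑ x`, with `x` the Perron vector, have edge density
at least `μ / m`, and `y ≤ 1/μ` entrywise turns weights into counts. -/
lemma joint_of_spectral {V : Type*} [Fintype V] [DecidableEq V] {G H : SimpleGraph V}
    (hH : H ≤ G) [DecidableRel H.Adj] {r : ℕ} (hr : 1 ≤ r) {c μ : ℝ} (hc : 0 < c) (hμ : 0 < μ)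
    (S : Finset V) {x : V → ℝ} (hx : ∀ u, 0 ≤ x u) (hx1 : ∑ u, x u ^ 2 = 1)
    (heig : ∀ u, ∑ v, (if H.Adj u v then x v else 0) = μ * x u)
    (hS : ∀ u, u ∉ S → x u = 0) (hcμ : (1 - 1 / (r : ℝ) + c) * S.card ≤ μ) :
    c * (r : ℝ) ^ 2 / (r : ℝ) ^ r * μ ^ (r - 1) ≤ G.jointSize (r + 1) := by
  set X := ∑ u, x u with hX
  have hX0 : 0 < X := by
    refine lt_of_le_of_ne (Finset.sum_nonneg fun u _ => hx u) fun h => ?_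
    have h0 := (Finset.sum_eq_zero_iff_of_nonneg fun u _ => hx u).1 h.symm
    rw [Finset.sum_eq_zero fun u hu => by rw [h0 u hu]; norm_num] at hx1
    exact zero_ne_one hx1
  have hXm : X ^ 2 ≤ S.card := by
    have h1 : X = ∑ u ∈ S, x u :=
      (Finset.sum_subset (Finset.subset_univ S) fun u _ hu => hS u hu).symm
    have h2 : ∑ u ∈ S, x u ^ 2 ≤ 1 := by
      rw [← hx1]
      exact Finset.sum_le_sum_of_subset_of_nonneg (Finset.subset_univ S) fun u _ _ => sq_nonneg _
    have h3 := sq_sum_le_card_mul_sum_sq (s := S) (f := x)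
    rw [h1]
    nlinarith [(Nat.cast_nonneg S.card : (0 : ℝ) ≤ S.card)]
  set y : V → ℝ := fun u => x u / X with hydef
  have hy : ∀ u, 0 ≤ y u := fun u => div_nonneg (hx u) hX0.le
  have hy1 : ∑ u, y u = 1 := by rw [← Finset.sum_div, ← hX, div_self hX0.ne']
  have hform : H.adjForm y = μ / X ^ 2 := by
    have : H.adjForm y = ∑ u, x u / X ^ 2 * ∑ v, (if H.Adj u v then x v else 0) := by
      simp only [SimpleGraph.adjForm, Finset.mul_sum]
      refine Finset.sum_congr rfl fun u _ => Finset.sum_congr rfl fun v _ => ?_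
      split_ifs
      · simp only [hydef]; field_simp
      · simp
    rw [this]
    simp only [heig]
    rw [div_eq_mul_one_div μ, ← hx1, Finset.sum_div, Finset.mul_sum]
    exact Finset.sum_congr rfl fun u _ => by ring
  have hd : 1 - 1 / (r : ℝ) + c ≤ H.adjForm y := by
    rw [hform, le_div_iff₀ (by positivity)]
    refine le_trans (mul_le_mul_of_nonneg_left hXm ?_) hcμ
    have : 1 / (r : ℝ) ≤ 1 := by
      rw [div_le_one (by exact_mod_cast hr)]; exact_mod_cast hr
    linarith
  have hyμ : ∀ u, y u ≤ 1 / μ := fun u => by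
    rw [div_le_div_iff₀ hX0 hμ, mul_comm, ← heig u, one_mul]
    refine Finset.sum_le_sum fun v _ => ?_
    split_ifs
    · rfl
    · exact hx v
  have hsuper := cliqueWeight_succ_ge H hy hy1 hr hc hd
  have hcount := sum_offDiag_cliques_le hH (r + 1) (f := fun u v => y u * y v * (1 / μ) ^ (r - 1))
    (fun u v => by have := hy u; have := hy v; positivity)
  have hleft : ((r : ℝ) + 1) * r * H.cliqueWeight y (r + 1) ≤
      ∑ K ∈ H.cliquesIn Finset.univ (r + 1), ∑ p ∈ K.offDiag,
        y p.1 * y p.2 * (1 / μ) ^ (r - 1) := by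
    rw [SimpleGraph.cliqueWeight, Finset.mul_sum]
    refine Finset.sum_le_sum fun K hK => ?_
    have hcard := (mem_cliquesIn.1 hK).2.card_eq
    have : ∑ p ∈ K.offDiag, ∏ u ∈ K, y u = (r + 1) * r * ∏ u ∈ K, y u := by
      rw [Finset.sum_const, Finset.offDiag_card, hcard, nsmul_eq_mul]
      congr 1
      have : (r + 1) * (r + 1) - (r + 1) = (r + 1) * r := by
        rw [Nat.mul_succ]; omega
      rw [this]; push_cast; ring
    rw [← this]
    refine Finset.sum_le_sum fun p hp => ?_
    rw [Finset.mem_offDiag] at hp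
    have hp2 : p.2 ∈ K.erase p.1 := Finset.mem_erase.2 ⟨hp.2.2.symm, hp.2.1⟩
    rw [← Finset.mul_prod_erase K y hp.1, ← Finset.mul_prod_erase _ y hp2, ← mul_assoc]
    refine mul_le_mul_of_nonneg_left ?_ (mul_nonneg (hy _) (hy _))
    have h5 : ((K.erase p.1).erase p.2).card = r - 1 := by
      rw [Finset.card_erase_of_mem hp2, Finset.card_erase_of_mem hp.1, hcard]; rfl
    rw [← h5]
    refine (Finset.prod_le_prod (fun u _ => hy u) (fun u _ => hyμ u)).trans (le_of_eq ?_)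
    rw [Finset.prod_const]
  have hright : ∑ u, ∑ v, (if H.Adj u v then y u * y v * (1 / μ) ^ (r - 1) else 0) ≤
      (1 / μ) ^ (r - 1) := by
    calc _ ≤ ∑ u, ∑ v, y u * y v * (1 / μ) ^ (r - 1) := by
          refine Finset.sum_le_sum fun u _ => Finset.sum_le_sum fun v _ => ?_
          split_ifs
          · rfl
          · have := hy u; have := hy v; positivity
      _ = _ := by
          simp only [← Finset.sum_mul, ← Finset.mul_sum, hy1]; ring
  have hfin : (r : ℝ) * (r * c / (r : ℝ) ^ r) ≤ G.jointSize (r + 1) * (1 / μ) ^ (r - 1) := by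
    refine le_trans (mul_le_mul_of_nonneg_left hsuper (by positivity)) ?_
    refine le_trans (le_of_eq (by ring)) (hleft.trans (hcount.trans ?_))
    exact mul_le_mul_of_nonneg_left hright (by positivity)
  rw [one_div_pow, mul_one_div, le_div_iff₀ (by positivity)] at hfin
  refine le_trans (le_of_eq ?_) hfin
  ring

/-- Joints from minimum degree. If every vertex of `U` has at most `D` non-neighbours in `U`
(itself included) and `L` is a clique of order `s + 1` in `U`, then summing over the ordered pairs
of distinct vertices of `L` the number of cliques of order `s + 1` in `U` through that pair gives
at least `2 q ^ (s - 1)`. The sum is written as `∑ K, k (k - 1)` with `k = |L ∩ K|`. At least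
`|U| - (s + 1) D / 2` vertices `w` miss at most one vertex of `L`; the neighbourhood of each of
them inherits the hypotheses with `s` in place of `s + 1`, and each clique counted arises from
`s - 1` choices of `w`. -/
lemma sum_clique_pairs_ge {V : Type*} [Fintype V] [DecidableEq V] (G : SimpleGraph V)
    [DecidableRel G.Adj] {r : ℕ} {m D q : ℝ} (hq : 0 ≤ q)
    (hmD : ∀ s : ℕ, 2 ≤ s → s ≤ r → ((s : ℝ) - 1) * q ≤ m - (2 * r - s + 1) * D / 2)
    (s : ℕ) (hs : 1 ≤ s) (hsr : s ≤ r) (U L : Finset V) (hLU : L ⊆ U)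
    (hL : G.IsNClique (s + 1) L) (hU : m - (r - s) * D ≤ U.card)
    (hD : ∀ v ∈ U, ((U.filter fun w => ¬ G.Adj v w).card : ℝ) ≤ D) :
    2 * q ^ (s - 1) ≤ ∑ K ∈ G.cliquesIn U (s + 1),
      ((L ∩ K).card : ℝ) * ((L ∩ K).card - 1) := by
  have hφ : ∀ k : ℕ, (0 : ℝ) ≤ k * (k - 1) := fun k => by
    rcases k.eq_zero_or_pos with rfl | h
    · simp
    · have : (1 : ℝ) ≤ k := by exact_mod_cast h
      exact mul_nonneg (by positivity) (by linarith)
  have hφm : ∀ j k : ℕ, j ≤ k → (j : ℝ) * (j - 1) ≤ k * (k - 1) := fun j k h => by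
    rcases j.eq_zero_or_pos with rfl | h'
    · simpa using hφ k
    · have : (1 : ℝ) ≤ j := by exact_mod_cast h'
      have : (j : ℝ) ≤ k := by exact_mod_cast h
      nlinarith
  induction s, hs using Nat.le_induction generalizing U L with
  | base =>
    have hLm : L ∈ G.cliquesIn U (1 + 1) := mem_cliquesIn.2 ⟨hLU, hL⟩
    refine le_trans ?_ (Finset.single_le_sum (fun K _ => hφ _) hLm)
    rw [Finset.inter_self, hL.card_eq]
    norm_num
  | succ s hs ih =>
    -- `W`: the vertices of `U` missing at most one vertex of `L`
    set W := U.filter fun w => (L.filter fun v => ¬ G.Adj w v).card ≤ 1 with hW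
    have hWcard : (s : ℝ) * q ≤ W.card := by
      have h1 : ∑ w ∈ U, ((L.filter fun v => ¬ G.Adj w v).card : ℝ) ≤ (s + 2) * D := by
        have : ∑ w ∈ U, ((L.filter fun v => ¬ G.Adj w v).card : ℝ) =
            ∑ v ∈ L, ((U.filter fun w => ¬ G.Adj v w).card : ℝ) := by
          simp only [Finset.card_filter, Nat.cast_sum]
          rw [Finset.sum_comm]
          simp only [G.adj_comm]
        rw [this]
        refine (Finset.sum_le_sum fun v hv => hD v (hLU hv)).trans (le_of_eq ?_)
        rw [Finset.sum_const, hL.card_eq, nsmul_eq_mul]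
        push_cast; ring
      have h2 : 2 * ((U.card : ℝ) - W.card) ≤
          ∑ w ∈ U, ((L.filter fun v => ¬ G.Adj w v).card : ℝ) := by
        have hc : (U.card : ℝ) - W.card =
            ∑ w ∈ U, if (L.filter fun v => ¬ G.Adj w v).card ≤ 1 then (0 : ℝ) else 1 := by
          have : (W.card : ℝ) = ∑ w ∈ U,
              if (L.filter fun v => ¬ G.Adj w v).card ≤ 1 then (1 : ℝ) else 0 := by
            rw [hW, Finset.card_filter]; push_cast; rfl
          rw [this, Finset.card_eq_sum_ones, Nat.cast_sum, ← Finset.sum_sub_distrib]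
          refine Finset.sum_congr rfl fun w _ => ?_
          split_ifs <;> simp
        rw [hc, Finset.mul_sum]
        refine Finset.sum_le_sum fun w _ => ?_
        split_ifs with h
        · simp
        · have : 2 ≤ (L.filter fun v => ¬ G.Adj w v).card := by omega
          have : (2 : ℝ) ≤ (L.filter fun v => ¬ G.Adj w v).card := by exact_mod_cast this
          linarith
      have h3 := hmD (s + 1) (by omega) hsr
      push_cast at h3 hU
      linarith
    have hdc := sum_cliquesIn_nbr G U (s + 1)
      (fun K _ => ((L ∩ K).card : ℝ) * ((L ∩ K).card - 1))
    have hright : ∀ K ∈ G.cliquesIn U (s + 1 + 1),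
        ∑ w ∈ K, ((L ∩ K.erase w).card : ℝ) * ((L ∩ K.erase w).card - 1) =
          s * (((L ∩ K).card : ℝ) * ((L ∩ K).card - 1)) := by
      intro K hK
      have hcard := (mem_cliquesIn.1 hK).2.card_eq
      have h1 : ∀ w ∈ K, ((L ∩ K.erase w).card : ℝ) * ((L ∩ K.erase w).card - 1) =
          ((L ∩ K).card : ℝ) * ((L ∩ K).card - 1) -
            if w ∈ L then 2 * (((L ∩ K).card : ℝ) - 1) else 0 := by
        intro w hw
        rw [Finset.inter_erase]
        split_ifs with h
        · rw [Finset.cast_card_erase_of_mem (Finset.mem_inter.2 ⟨h, hw⟩)]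
          ring
        · rw [Finset.erase_eq_of_notMem fun h' => h (Finset.mem_inter.1 h').1, sub_zero]
      rw [Finset.sum_congr rfl h1, Finset.sum_sub_distrib, Finset.sum_const, hcard,
        ← Finset.sum_filter (· ∈ L), Finset.sum_const, Finset.filter_mem_eq_inter (s := K) (t := L), Finset.inter_comm K L]
      simp only [nsmul_eq_mul]
      push_cast
      ring
    rw [Finset.sum_congr rfl hright, ← Finset.mul_sum] at hdc
    have hleft : (W.card : ℝ) * (2 * q ^ (s - 1)) ≤ ∑ w ∈ U,
        ∑ K ∈ G.cliquesIn (U.filter (G.Adj w)) (s + 1),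
          ((L ∩ K).card : ℝ) * ((L ∩ K).card - 1) := by
      rw [← nsmul_eq_mul, ← Finset.sum_const]
      refine le_trans ?_ (Finset.sum_le_sum_of_subset_of_nonneg (show W ⊆ U from Finset.filter_subset _ U)
        fun w _ _ => Finset.sum_nonneg fun K _ => hφ _)
      refine Finset.sum_le_sum fun w hw => ?_
      rw [hW, Finset.mem_filter] at hw
      obtain ⟨L', hL'sub, hL'card⟩ : ∃ L' ⊆ L.filter (G.Adj w), L'.card = s + 1 := by
        refine Finset.exists_subset_card_eq ?_
        have := Finset.card_filter_add_card_filter_not (s := L) (G.Adj w)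
        rw [hL.card_eq] at this
        omega
      have hL'L : L' ⊆ L := hL'sub.trans (Finset.filter_subset _ _)
      refine (ih (by omega) (U.filter (G.Adj w)) L' ?_ ?_ ?_ ?_).trans ?_
      · intro u hu
        have := Finset.mem_filter.1 (hL'sub hu)
        exact Finset.mem_filter.2 ⟨hLU this.1, this.2⟩
      · exact ⟨hL.isClique.subset (by exact_mod_cast hL'L), hL'card⟩
      · have h1 := Finset.card_filter_add_card_filter_not (s := U) (G.Adj w)
        have h1' : ((U.filter (G.Adj w)).card : ℝ) + (U.filter fun v => ¬ G.Adj w v).card =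
          U.card := by exact_mod_cast h1
        have h2 := hD w hw.1
        push_cast at hU
        linarith
      · intro v hv
        refine le_trans ?_ (hD v (Finset.mem_filter.1 hv).1)
        refine Nat.cast_le.2 (Finset.card_le_card ?_)
        exact Finset.filter_subset_filter _ (Finset.filter_subset _ _)
      · refine Finset.sum_le_sum fun K _ => hφm _ _ ?_
        exact Finset.card_le_card (Finset.inter_subset_inter_right hL'L)
    rw [hdc] at hleft
    have hs0 : (0 : ℝ) < s := by exact_mod_cast hs
    have h7 : (s : ℝ) * (2 * q ^ s) ≤ W.card * (2 * q ^ (s - 1)) := by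
      obtain ⟨k, rfl⟩ : ∃ k, s = k + 1 := ⟨s - 1, by omega⟩
      rw [Nat.add_sub_cancel, pow_succ]
      have := mul_le_mul_of_nonneg_right hWcard (by positivity : 0 ≤ 2 * q ^ k)
      linarith
    exact le_of_mul_le_mul_left (h7.trans hleft) hs0

/-- Large minimum degree together with one clique of order `r + 1` forces a large joint. -/
lemma joint_of_minDegree {V : Type*} [Fintype V] [DecidableEq V] (G : SimpleGraph V)
    [DecidableRel G.Adj] {r : ℕ} (hr : 2 ≤ r) (S L : Finset V) (hLS : L ⊆ S)
    (hL : G.IsNClique (r + 1) L)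
    (hdeg : ∀ v ∈ S, (1 - 1 / (r : ℝ) - 1 / (4 * (r : ℝ) ^ 2)) * S.card ≤
      (S.filter (G.Adj v)).card) :
    2 * ((S.card : ℝ) / (4 * r)) ^ (r - 1) ≤ G.jointSize (r + 1) * ((r + 1) * r) := by
  have hr0 : (2 : ℝ) ≤ r := by exact_mod_cast hr
  set m : ℝ := (S.card : ℝ) with hm
  have hm0 : 0 ≤ m := Nat.cast_nonneg _
  have h1 := sum_clique_pairs_ge G (r := r) (m := m)
    (D := (1 / (r : ℝ) + 1 / (4 * (r : ℝ) ^ 2)) * m) (q := m / (4 * r)) (by positivity) ?_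
    r (by omega) le_rfl S L hLS hL ?_ ?_
  · refine h1.trans ?_
    have h2 := sum_offDiag_cliques_le (G := G) (H := G) le_rfl (r + 1)
      (f := fun u v => if u ∈ L ∧ v ∈ L then 1 else 0) (fun u v => by split_ifs <;> simp)
    have h3 : ∑ K ∈ G.cliquesIn S (r + 1), ((L ∩ K).card : ℝ) * ((L ∩ K).card - 1) ≤
        ∑ K ∈ G.cliquesIn Finset.univ (r + 1), ∑ p ∈ K.offDiag,
          (if p.1 ∈ L ∧ p.2 ∈ L then (1 : ℝ) else 0) := by
      have hsub : G.cliquesIn S (r + 1) ⊆ G.cliquesIn Finset.univ (r + 1) := fun K hK => by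
        rw [mem_cliquesIn] at hK ⊢; exact ⟨Finset.subset_univ _, hK.2⟩
      refine le_trans (Finset.sum_le_sum fun K _ => le_of_eq ?_)
        (Finset.sum_le_sum_of_subset_of_nonneg hsub fun K _ _ =>
          Finset.sum_nonneg fun p _ => by split_ifs <;> simp)
      rw [Finset.sum_boole]
      have : K.offDiag.filter (fun p => p.1 ∈ L ∧ p.2 ∈ L) = (L ∩ K).offDiag := by
        ext p
        simp only [Finset.mem_filter, Finset.mem_offDiag, Finset.mem_inter]
        tauto
      rw [this, Finset.offDiag_card, Nat.cast_sub (Nat.le_mul_self _)]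
      push_cast; ring
    refine h3.trans (h2.trans (mul_le_mul_of_nonneg_left ?_ (Nat.cast_nonneg _)))
    rw [← Finset.sum_product']
    have h4 : ∑ p ∈ (Finset.univ ×ˢ Finset.univ : Finset (V × V)),
        (if G.Adj p.1 p.2 then (if p.1 ∈ L ∧ p.2 ∈ L then (1 : ℝ) else 0) else 0) ≤
        (L.offDiag.card : ℝ) := by
      simp only [← ite_and]
      rw [Finset.sum_boole]
      refine Nat.cast_le.2 (Finset.card_le_card fun p hp => ?_)
      rw [Finset.mem_filter] at hp
      exact Finset.mem_offDiag.2 ⟨hp.2.2.1, hp.2.2.2, hp.2.1.ne⟩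
    refine h4.trans (le_of_eq ?_)
    rw [Finset.offDiag_card, hL.card_eq, Nat.cast_sub (Nat.le_mul_self _)]
    push_cast; ring
  · intro s hs hsr
    have hs2 : (2 : ℝ) ≤ s := by exact_mod_cast hs
    have hsr' : (s : ℝ) ≤ r := by exact_mod_cast hsr
    have key : ((s : ℝ) - 1) / (4 * r) ≤
        1 - (2 * r - s + 1) * (1 / (r : ℝ) + 1 / (4 * (r : ℝ) ^ 2)) / 2 := by
      rw [← sub_nonneg]
      have : 1 - (2 * r - s + 1) * (1 / (r : ℝ) + 1 / (4 * (r : ℝ) ^ 2)) / 2 -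
          ((s : ℝ) - 1) / (4 * r) =
          (2 * r * ((s : ℝ) - 1) - (2 * r - s + 1)) / (8 * r ^ 2) := by
        field_simp; ring
      rw [this]
      exact div_nonneg (by nlinarith) (by positivity)
    have := mul_le_mul_of_nonneg_right key hm0
    calc _ = ((s : ℝ) - 1) / (4 * r) * m := by ring
      _ ≤ _ := this
      _ = _ := by ring
  · simp [hm]
  · intro v hv
    have h5 := Finset.card_filter_add_card_filter_not (s := S) (G.Adj v)
    have h5' : ((S.filter (G.Adj v)).card : ℝ) + (S.filter fun w => ¬ G.Adj v w).card = m := by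
      rw [hm]; exact_mod_cast h5
    have := hdeg v hv
    linarith

/-! ### Spectral radii of induced subgraphs -/

/-- The graph `G` with all edges leaving `S` deleted, kept on the full vertex set so that its
spectral radius can be compared for different `S`. -/
def SimpleGraph.within {V : Type*} (G : SimpleGraph V) (S : Finset V) : SimpleGraph V where
  Adj u v := G.Adj u v ∧ u ∈ S ∧ v ∈ S
  symm := ⟨fun _ _ h => ⟨h.1.symm, h.2.2, h.2.1⟩⟩
  loopless := ⟨fun v h => G.loopless.irrefl v h.1⟩

lemma within_le {V : Type*} (G : SimpleGraph V) (S : Finset V) : G.within S ≤ G :=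
  fun _ _ h => h.1

lemma within_univ {V : Type*} [Fintype V] (G : SimpleGraph V) : G.within Finset.univ = G := by
  ext u v; simp [SimpleGraph.within]

open Classical in
/-- Perron vector of `G.within S`, which vanishes outside `S`. -/
lemma exists_perron_within {V : Type*} [Fintype V] [DecidableEq V] [Nonempty V]
    (G : SimpleGraph V) (S : Finset V) (hμ : 0 < (G.within S).specMax) :
    ∃ x : V → ℝ, (∀ u, 0 ≤ x u) ∧ ∑ u, x u ^ 2 = 1 ∧
      (∀ u, ∑ v, (if (G.within S).Adj u v then x v else 0) = (G.within S).specMax * x u) ∧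
      (∀ u, u ∉ S → x u = 0) ∧ ∑ u ∈ S, x u ^ 2 = 1 := by
  obtain ⟨x, hx, hx1, heig, -⟩ := exists_perron (G.within S)
  have h0 : ∀ u, u ∉ S → x u = 0 := fun u hu => by
    have h := heig u
    rw [Finset.sum_eq_zero fun v _ => if_neg fun h => hu h.2.1] at h
    exact (mul_eq_zero.1 h.symm).resolve_left hμ.ne'
  refine ⟨x, hx, hx1, heig, h0, ?_⟩
  rw [← hx1]
  exact Finset.sum_subset (Finset.subset_univ S) fun u _ hu => by rw [h0 u hu]; norm_num

open Classical in
/-- Deleting the vertex `v` of smallest Perron entry, `t = x_v²`: the Perron vector with `x_v`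
replaced by `0` shows that the spectral radius drops by at most `μ t / (1 - t)`, and `t` is small
when `S` has a vertex of small degree `δ`. -/
lemma exists_erase {V : Type*} [Fintype V] [DecidableEq V] [Nonempty V]
    (G : SimpleGraph V) (S : Finset V) (hμ : 0 < (G.within S).specMax) {w : V} (hw : w ∈ S)
    {δ : ℝ} (hδ : ((S.filter (G.Adj w)).card : ℝ) = δ) :
    ∃ v ∈ S, ∃ t : ℝ, 0 ≤ t ∧ t * S.card ≤ 1 ∧
      t * ((G.within S).specMax ^ 2 + δ * (S.card - δ)) ≤ δ ∧
      (G.within S).specMax * (1 - 2 * t) ≤ (G.within (S.erase v)).specMax * (1 - t) := by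
  obtain ⟨x, hx, hx1, heig, h0, hxS⟩ := exists_perron_within G S hμ
  set μ := (G.within S).specMax
  obtain ⟨v, hv, hmin⟩ := Finset.exists_min_image S x ⟨w, hw⟩
  have hsq : ∀ u ∈ S, x v ^ 2 ≤ x u ^ 2 := fun u hu => pow_le_pow_left₀ (hx v) (hmin u hu) 2
  have hδ0 : 0 ≤ δ := hδ ▸ Nat.cast_nonneg _
  refine ⟨v, hv, x v ^ 2, sq_nonneg _, ?_, ?_, ?_⟩
  · have := Finset.card_nsmul_le_sum S (fun u => x u ^ 2) _ hsq
    rw [hxS, nsmul_eq_mul] at this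
    linarith
  · set N := S.filter (G.Adj w) with hN
    have h1 : μ * x w = ∑ u ∈ N, x u := by
      rw [← heig w, ← Finset.sum_filter]
      refine Finset.sum_congr ?_ fun _ _ => rfl
      ext u
      simp [SimpleGraph.within, hN, hw, and_comm]
    have h2 : (μ * x w) ^ 2 ≤ δ * ∑ u ∈ N, x u ^ 2 := by
      rw [h1, ← hδ]; exact sq_sum_le_card_mul_sum_sq
    have h3 : ∑ u ∈ N, x u ^ 2 + (S.card - δ) * x v ^ 2 ≤ 1 := by
      rw [← hxS, ← Finset.sum_filter_add_sum_filter_not S (G.Adj w)]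
      refine add_le_add le_rfl ?_
      have h4 := Finset.card_nsmul_le_sum (S.filter fun u => ¬ G.Adj w u) (fun u => x u ^ 2) _
        fun u hu => hsq u (Finset.mem_filter.1 hu).1
      have h5 := Finset.card_filter_add_card_filter_not (s := S) (G.Adj w)
      have h5' : ((S.filter (G.Adj w)).card : ℝ) + (S.filter fun w' => ¬ G.Adj w w').card =
        S.card := by exact_mod_cast h5
      rw [nsmul_eq_mul] at h4
      rw [← hδ]
      refine le_trans (le_of_eq ?_) h4
      rw [← h5']; ring
    have h6 := mul_le_mul_of_nonneg_left h3 hδ0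
    have h7 := mul_le_mul_of_nonneg_left (hsq w hw) (sq_nonneg μ)
    rw [mul_pow] at h2
    linarith
  · obtain ⟨-, -, -, -, hray⟩ := exists_perron (G.within (S.erase v))
    set y : V → ℝ := fun u => if u = v then 0 else x u with hy
    have hyx : ∀ u, y u = x u - if u = v then x v else 0 := fun u => by
      simp only [hy]; split_ifs with h
      · rw [h]; ring
      · ring
    have hy2 : ∑ u, y u ^ 2 = 1 - x v ^ 2 := by
      have : ∀ u, y u ^ 2 = x u ^ 2 - if u = v then x v ^ 2 else 0 := fun u => by
        simp only [hy]; split_ifs with h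
        · rw [h]; ring
        · ring
      simp only [this, Finset.sum_sub_distrib, hx1, Finset.sum_ite_eq', Finset.mem_univ, if_true]
    have hyx2 : ∑ u, y u * x u = 1 - x v ^ 2 := by
      rw [← hy2]
      refine Finset.sum_congr rfl fun u _ => ?_
      simp only [hy]; split_ifs <;> ring
    have hrow : ∀ u, ∑ u', (if (G.within S).Adj u u' then y u' else 0) =
        μ * x u - if (G.within S).Adj u v then x v else 0 := fun u => by
      rw [← heig u]
      have : ∀ u', (if (G.within S).Adj u u' then y u' else 0) =
          (if (G.within S).Adj u u' then x u' else 0) -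
            if u' = v then (if (G.within S).Adj u v then x v else 0) else 0 := fun u' => by
        rw [hyx]
        by_cases h : u' = v
        · subst h; split_ifs <;> simp
        · simp [h]
      simp only [this, Finset.sum_sub_distrib, Finset.sum_ite_eq', Finset.mem_univ, if_true]
    have hform : (G.within (S.erase v)).adjForm y = μ * (1 - 2 * x v ^ 2) := by
      have h1 : (G.within (S.erase v)).adjForm y =
          ∑ u, y u * ∑ u', (if (G.within S).Adj u u' then y u' else 0) := by
        simp only [SimpleGraph.adjForm, Finset.mul_sum]
        refine Finset.sum_congr rfl fun u _ => Finset.sum_congr rfl fun u' _ => ?_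
        by_cases hu : u = v
        · simp [hy, hu]
        by_cases hu' : u' = v
        · simp [hy, hu']
        have hA : (G.within (S.erase v)).Adj u u' ↔ (G.within S).Adj u u' := by
          simp [SimpleGraph.within, hu, hu']
        by_cases h : (G.within S).Adj u u'
        · rw [if_pos h, if_pos (hA.2 h)]
        · rw [if_neg h, if_neg (mt hA.1 h), mul_zero]
      have h2 : ∑ u, y u * (if (G.within S).Adj u v then x v else 0) = μ * x v ^ 2 := by
        have h3 := hrow v
        rw [if_neg ((G.within S).loopless.irrefl v), sub_zero] at h3
        rw [sq, ← mul_assoc, ← h3, Finset.sum_mul]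
        refine Finset.sum_congr rfl fun u _ => ?_
        rw [(G.within S).adj_comm]
        split_ifs <;> ring
      rw [h1]
      simp only [hrow, mul_sub, Finset.sum_sub_distrib, h2]
      have h4 : ∑ u, y u * (μ * x u) = μ * (1 - x v ^ 2) := by
        rw [← hyx2, Finset.mul_sum]
        exact Finset.sum_congr rfl fun u _ => by ring
      rw [h4]; ring
    have := hray y
    rwa [hform, hy2] at this

/-- The (multipartite) Motzkin–Straus bound: weights `z` on the vertices of an `r`-coloured graph
have edge weight at most `(1 - 1/r) (∑ z)²`. -/
lemma adjForm_le_of_coloring {V : Type*} [Fintype V] [DecidableEq V] {H : SimpleGraph V} {r : ℕ}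
    (hr : 1 ≤ r) (f : V → Fin r) (hf : ∀ u v, H.Adj u v → f u ≠ f v) {z : V → ℝ}
    (hz : ∀ u, 0 ≤ z u) : H.adjForm z ≤ (1 - 1 / (r : ℝ)) * (∑ u, z u) ^ 2 := by
  classical
  have hr0 : (0 : ℝ) < r := by exact_mod_cast hr
  have h1 : H.adjForm z ≤ ∑ u, ∑ v, (z u * z v - if f v = f u then z u * z v else 0) := by
    refine Finset.sum_le_sum fun u _ => Finset.sum_le_sum fun v _ => ?_
    have := mul_nonneg (hz u) (hz v)
    split_ifs with h h' h'
    · exact absurd h'.symm (hf u v h)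
    · simp
    · simp
    · simpa using this
  have h2 : ∑ u, ∑ v, (if f v = f u then z u * z v else 0) =
      ∑ i : Fin r, (∑ u, if f u = i then z u else 0) ^ 2 := by
    have : ∀ i : Fin r, (∑ u, if f u = i then z u else 0) ^ 2 =
        ∑ u, if f u = i then (∑ v, if f v = f u then z u * z v else 0) else 0 := fun i => by
      rw [sq, Finset.sum_mul]
      refine Finset.sum_congr rfl fun u _ => ?_
      split_ifs with h
      · rw [Finset.mul_sum]
        refine Finset.sum_congr rfl fun v _ => ?_
        rw [h]; split_ifs <;> simp
      · simp
    rw [Finset.sum_congr rfl fun i _ => this i]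
    symm
    rw [Finset.sum_comm]
    simp
  have h3 : ∑ i : Fin r, (∑ u, if f u = i then z u else 0) = ∑ u, z u := by
    rw [Finset.sum_comm]; simp
  have h4 := sq_sum_le_card_mul_sum_sq (s := (Finset.univ : Finset (Fin r)))
    (f := fun i => ∑ u, if f u = i then z u else 0)
  rw [h3, Finset.card_univ, Fintype.card_fin] at h4
  simp only [Finset.sum_sub_distrib, h2] at h1
  have h5 : ∑ u, ∑ v, z u * z v = (∑ u, z u) ^ 2 := by rw [sq, Finset.sum_mul_sum]
  rw [h5] at h1
  have h6 : (∑ u, z u) ^ 2 / r ≤ ∑ i : Fin r, (∑ u, if f u = i then z u else 0) ^ 2 := by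
    rw [div_le_iff₀ hr0]; linarith
  have : (1 - 1 / (r : ℝ)) * (∑ u, z u) ^ 2 = (∑ u, z u) ^ 2 - (∑ u, z u) ^ 2 / r := by ring
  linarith

open Classical in
/-- Bounds for the spectral radius `μ` of an `r`-partite graph on `S`: `μ ≤ (1 - 1/r) |S|`, and
`μ² ≤ (1 - 1/r) · 2e` by Cauchy–Schwarz and the Motzkin–Straus bound for the weights `x²`. -/
lemma specMax_le_of_coloring_s3 {V : Type*} [Fintype V] [DecidableEq V] [Nonempty V]
    (G : SimpleGraph V) (S : Finset V) (hμ : 0 < (G.within S).specMax) {r : ℕ} (hr : 1 ≤ r)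
    (f : V → Fin r) (hf : ∀ u v, (G.within S).Adj u v → f u ≠ f v) :
    (G.within S).specMax ≤ (1 - 1 / (r : ℝ)) * S.card ∧
    (G.within S).specMax ^ 2 ≤
      (1 - 1 / (r : ℝ)) * ∑ u ∈ S, ((S.filter (G.Adj u)).card : ℝ) := by
  obtain ⟨x, hx, hx1, heig, h0, hxS⟩ := exists_perron_within G S hμ
  set μ := (G.within S).specMax
  have hθ : 0 ≤ 1 - 1 / (r : ℝ) := by
    rw [sub_nonneg, div_le_one (by exact_mod_cast hr)]; exact_mod_cast hr
  have hform : (G.within S).adjForm x = μ := by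
    have : (G.within S).adjForm x =
        ∑ u, x u * ∑ v, (if (G.within S).Adj u v then x v else 0) := by
      simp only [SimpleGraph.adjForm, Finset.mul_sum, mul_ite, mul_zero]
    rw [this]
    simp only [heig]
    have h2 : ∑ u, x u * (μ * x u) = μ * ∑ u, x u ^ 2 := by
      rw [Finset.mul_sum]
      exact Finset.sum_congr rfl fun u _ => by ring
    rw [h2, hx1, mul_one]
  constructor
  · rw [← hform]
    refine (adjForm_le_of_coloring hr f hf hx).trans (mul_le_mul_of_nonneg_left ?_ hθ)
    have h1 : ∑ u, x u = ∑ u ∈ S, x u :=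
      (Finset.sum_subset (Finset.subset_univ S) fun u _ hu => h0 u hu).symm
    have h3 := sq_sum_le_card_mul_sum_sq (s := S) (f := x)
    rw [hxS, mul_one] at h3
    rwa [h1]
  · have hsq := adjForm_le_of_coloring hr f hf (fun u => sq_nonneg (x u))
    rw [hx1, one_pow, mul_one] at hsq
    have hedges : ∑ p ∈ (Finset.univ ×ˢ Finset.univ : Finset (V × V)),
        (if (G.within S).Adj p.1 p.2 then (1 : ℝ) else 0) =
        ∑ u ∈ S, ((S.filter (G.Adj u)).card : ℝ) := by
      rw [Finset.sum_product]
      rw [← Finset.sum_subset (Finset.subset_univ S)]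
      · refine Finset.sum_congr rfl fun u hu => ?_
        rw [Finset.sum_boole]
        congr 2
        ext v
        simp [SimpleGraph.within, hu, and_comm]
      · intro u _ hu
        exact Finset.sum_eq_zero fun v _ => if_neg fun h => hu h.2.1
    have hcs := Finset.sum_sq_le_sum_mul_sum_of_sq_le_mul
      (Finset.univ ×ˢ Finset.univ : Finset (V × V))
      (r := fun p => if (G.within S).Adj p.1 p.2 then x p.1 * x p.2 else 0)
      (f := fun p => if (G.within S).Adj p.1 p.2 then (1 : ℝ) else 0)
      (g := fun p => if (G.within S).Adj p.1 p.2 then x p.1 ^ 2 * x p.2 ^ 2 else 0)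
      (fun p _ => by split_ifs <;> simp) (fun p _ => by split_ifs <;> positivity)
      (fun p _ => by
        by_cases h : (G.within S).Adj p.1 p.2
        · simp only [if_pos h]; exact le_of_eq (by ring)
        · simp only [if_neg h]; norm_num)
    rw [hedges, Finset.sum_product, Finset.sum_product] at hcs
    have e1 : (∑ u, ∑ v, if (G.within S).Adj u v then x u * x v else 0) = μ := hform
    simp only [e1] at hcs
    refine hcs.trans ?_
    rw [mul_comm]
    exact mul_le_mul_of_nonneg_right hsq (Finset.sum_nonneg fun _ _ => Nat.cast_nonneg _)

/-! ### Consequences of having few joints -/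

open Classical in
/-- Few joints force `μ(G[S])` to stay close to the Turán value on every `S` containing at least
half of the vertices. -/
lemma specMax_within_lt {V : Type*} [Fintype V] [DecidableEq V] [Nonempty V] (G : SimpleGraph V)
    {r n : ℕ} (hr : 2 ≤ r) (hn : 0 < n)
    (hJ : (G.jointSize (r + 1) : ℝ) ≤ (n : ℝ) ^ (r - 1) / (r : ℝ) ^ (2 * r + 5))
    (S : Finset V) (hS : n ≤ 2 * S.card) :
    (G.within S).specMax < (1 - 1 / (r : ℝ) + 3 / (64 * (r : ℝ) ^ 2)) * S.card := by
  by_contra! h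
  set μ := (G.within S).specMax with hμdef
  obtain ⟨k, rfl⟩ : ∃ k, r = k + 1 := ⟨r - 1, by omega⟩
  have hk : (1 : ℝ) ≤ k := by exact_mod_cast (by omega : 1 ≤ k)
  have hn0 : (0 : ℝ) < n := by exact_mod_cast hn
  have hS' : (n : ℝ) ≤ 2 * S.card := by exact_mod_cast hS
  push_cast at *
  have hθ : 1 - 1 / ((k : ℝ) + 1) = k / (k + 1) := by field_simp; ring
  have hμ1 : (k : ℝ) / (2 * (k + 1)) * n ≤ μ := by
    refine le_trans ?_ h
    rw [hθ]
    have h1 : (k : ℝ) / (k + 1) * (n / 2) ≤ k / (k + 1) * S.card :=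
      mul_le_mul_of_nonneg_left (by linarith) (by positivity)
    have h2 : (0 : ℝ) ≤ 3 / (64 * ((k : ℝ) + 1) ^ 2) * S.card := by positivity
    have h3 : (k : ℝ) / (2 * (k + 1)) * n = k / (k + 1) * (n / 2) := by field_simp
    rw [add_mul, h3]; linarith
  have hμ0 : 0 < μ := lt_of_lt_of_le (by positivity) hμ1
  obtain ⟨x, hx, hx1, heig, h0, -⟩ := exists_perron_within G S hμ0
  have hj := joint_of_spectral (within_le G S) (r := k + 1) (by omega)
    (c := 3 / (64 * ((k : ℝ) + 1) ^ 2)) (by positivity) hμ0 S hx hx1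
    (fun u => by convert heig u) h0 (by push_cast; exact h)
  push_cast at hj
  have h1 := mul_le_mul_of_nonneg_left (pow_le_pow_left₀ (by positivity) hμ1 k)
    (by positivity : 0 ≤ 3 / (64 * ((k : ℝ) + 1) ^ 2) * ((k : ℝ) + 1) ^ 2 / ((k : ℝ) + 1) ^ (k + 1))
  have h2 := h1.trans (hj.trans hJ)
  rw [le_div_iff₀ (by positivity)] at h2
  have h3 : 3 / (64 * ((k : ℝ) + 1) ^ 2) * ((k : ℝ) + 1) ^ 2 / ((k : ℝ) + 1) ^ (k + 1) *
      ((k : ℝ) / (2 * (k + 1)) * n) ^ k * ((k : ℝ) + 1) ^ (2 * (k + 1) + 5) =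
      3 / 64 * ((k : ℝ) / 2) ^ k * ((k : ℝ) + 1) ^ 6 * (n : ℝ) ^ k := by
    have : ((k : ℝ) + 1) ^ (2 * (k + 1) + 5) =
        ((k : ℝ) + 1) ^ (k + 1) * ((k : ℝ) + 1) ^ k * ((k : ℝ) + 1) ^ 6 := by ring
    rw [this, mul_pow, div_pow, div_pow, mul_pow]
    field_simp
  rw [h3] at h2
  have hnk : (0 : ℝ) < (n : ℝ) ^ k := by positivity
  have h4 : 3 / 64 * ((k : ℝ) / 2) ^ k * ((k : ℝ) + 1) ^ 6 ≤ 1 := by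
    by_contra! h5
    have := mul_lt_mul_of_pos_right h5 hnk
    linarith
  rcases (by omega : k = 1 ∨ 2 ≤ k) with rfl | hk2
  · norm_num at h4
  · have hk2' : (2 : ℝ) ≤ k := by exact_mod_cast hk2
    have h5 : 1 ≤ ((k : ℝ) / 2) ^ k := one_le_pow₀ (by linarith)
    have h6 : (3 : ℝ) ^ 6 ≤ ((k : ℝ) + 1) ^ 6 := pow_le_pow_left₀ (by norm_num) (by linarith) 6
    nlinarith

/-- Few joints and large minimum degree on `S` leave no clique of order `r + 1` in `S`. -/
lemma no_clique_of_minDegree {V : Type*} [Fintype V] [DecidableEq V] (G : SimpleGraph V)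
    [DecidableRel G.Adj] {r n : ℕ} (hr : 2 ≤ r) (hn : 0 < n)
    (hJ : (G.jointSize (r + 1) : ℝ) ≤ (n : ℝ) ^ (r - 1) / (r : ℝ) ^ (2 * r + 5))
    (S : Finset V) (hS : n ≤ 2 * S.card)
    (hdeg : ∀ v ∈ S, (1 - 1 / (r : ℝ) - 1 / (4 * (r : ℝ) ^ 2)) * S.card ≤
      (S.filter (G.Adj v)).card) (L : Finset V) (hLS : L ⊆ S) : ¬ G.IsNClique (r + 1) L := by
  intro hL
  have h1 := joint_of_minDegree G hr S L hLS hL hdeg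
  have hr0 : (2 : ℝ) ≤ r := by exact_mod_cast hr
  have hr1 : (0 : ℝ) < r := by linarith
  have hn0 : (0 : ℝ) < n := by exact_mod_cast hn
  have hS' : (n : ℝ) ≤ 2 * S.card := by exact_mod_cast hS
  have h2 : ((n : ℝ) / (8 * r)) ^ (r - 1) ≤ ((S.card : ℝ) / (4 * r)) ^ (r - 1) := by
    refine pow_le_pow_left₀ (by positivity) ?_ _
    rw [div_le_div_iff₀ (by positivity) (by positivity)]
    nlinarith
  have h3 := mul_le_mul_of_nonneg_right hJ (by positivity : 0 ≤ ((r : ℝ) + 1) * r)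
  have h4 : 2 * ((n : ℝ) / (8 * r)) ^ (r - 1) ≤
      (n : ℝ) ^ (r - 1) / (r : ℝ) ^ (2 * r + 5) * ((r + 1) * r) := by linarith
  have hnat : 8 ^ (r - 1) * (r + 1) < 2 * r ^ (r + 5) := by
    rcases lt_or_ge r 8 with h8 | h8
    · interval_cases r <;> norm_num
    · have e1 : 8 ^ (r - 1) ≤ r ^ (r - 1) := Nat.pow_le_pow_left h8 _
      have e2 : r + 1 < 2 * r ^ 6 := by
        have : r ^ 1 ≤ r ^ 6 := Nat.pow_le_pow_right (by omega) (by omega)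
        rw [pow_one] at this; omega
      calc 8 ^ (r - 1) * (r + 1) ≤ r ^ (r - 1) * (r + 1) := Nat.mul_le_mul_right _ e1
        _ < r ^ (r - 1) * (2 * r ^ 6) := Nat.mul_lt_mul_of_pos_left e2 (by positivity)
        _ = 2 * r ^ (r - 1 + 6) := by ring
        _ = 2 * r ^ (r + 5) := by congr 2; omega
  have hreal : (8 : ℝ) ^ (r - 1) * (r + 1) < 2 * (r : ℝ) ^ (r + 5) := by exact_mod_cast hnat
  obtain ⟨k, rfl⟩ : ∃ k, r = k + 1 := ⟨r - 1, by omega⟩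
  rw [Nat.add_sub_cancel] at h4 hreal
  rw [div_pow, mul_pow, div_mul_eq_mul_div, mul_div_assoc', div_le_div_iff₀ (by positivity)
    (by positivity)] at h4
  have hnk : (0 : ℝ) < (n : ℝ) ^ k * ((k + 1 : ℕ) : ℝ) ^ (k + 1) := by positivity
  have h5 := mul_lt_mul_of_pos_right hreal hnk
  refine absurd h4 (not_le.2 ?_)
  calc _ = (8 : ℝ) ^ k * (((k + 1 : ℕ) : ℝ) + 1) * ((n : ℝ) ^ k * ((k + 1 : ℕ) : ℝ) ^ (k + 1)) := by
        ring
    _ < _ := h5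
    _ = _ := by ring

/-! ### Minimum degree of an extremal set -/

/-- The computation showing that a vertex of degree ratio `d ≤ θ - s / 4` is too light: here
`θ = 1 - 1/r`, `s = 1/r²`, `θ + y = μ/m`, `T = t m` and `p = 1/m`, with `m = |S|` and `t` as in
`exists_erase`. The conclusion reads `μ t < α (1 - t)` with `α = θ (1 - s / 8)`. -/
lemma erase_numeric {s θ y d T p : ℝ} (hs0 : 0 < s) (hs : s ≤ 1 / 4) (hθ : 1 / 2 ≤ θ)
    (hθ1 : θ ≤ 1) (hy : -(s / 2 ^ 13) ≤ y) (hd0 : 0 ≤ d) (hd : d ≤ θ - s / 4)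
    (hT1 : T ≤ 1) (hT : T * ((θ + y) ^ 2 + d * (1 - d)) ≤ d)
    (hp0 : 0 ≤ p) (hp : p ≤ s / 2 ^ 17) :
    (θ + y) * T < θ * (1 - s / 8) * (1 - T * p) := by
  set e := θ - s / 4 with he
  have he0 : 0 < e := by linarith
  have hq0 : 0 < θ + y := by linarith
  have he1 : e < 1 := by linarith
  have hB : 0 ≤ 2 * θ ^ 2 * (1 - 9 * s / 64) - e := by
    nlinarith [mul_nonneg hs0.le (sub_nonneg.2 hθ), mul_nonneg hs0.le (sub_nonneg.2 hθ1),
      mul_nonneg (mul_nonneg hs0.le (sub_nonneg.2 hθ1)) (by linarith : 0 ≤ θ),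
      mul_nonneg (sub_nonneg.2 hs) (sub_nonneg.2 hθ), mul_nonneg (sub_nonneg.2 hθ) (sub_nonneg.2 hθ)]
  have hA0 : 159 / 512 * s * θ ≤ (1 - 9 * s / 64) * (θ ^ 2 + e - e ^ 2) - e := by
    have h1 : θ ^ 2 - e ^ 2 = s * θ / 2 - s ^ 2 / 16 := by rw [he]; ring
    have h2 : (1 - 9 * s / 64) * (θ ^ 2 + e - e ^ 2) - e =
        (s * θ / 2 - s ^ 2 / 16) * (1 - 9 * s / 64) - 9 * s / 64 * (θ - s / 4) := by
      rw [← h1, he]; ring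
    rw [h2]
    have hsθ : s ^ 2 * θ ≤ s * θ / 4 := by nlinarith [mul_pos hs0 (by linarith : 0 < θ)]
    have hs2 : s ^ 2 ≤ s * θ / 2 := by nlinarith
    have hs3 : 0 < s ^ 3 := by positivity
    nlinarith
  -- The value at the extremal degree ratio `e`.
  have hF : (θ + y) * e < θ * (1 - 9 * s / 64) * ((θ + y) ^ 2 + e - e ^ 2) := by
    have hy2 : 0 ≤ θ * (1 - 9 * s / 64) * y ^ 2 :=
      mul_nonneg (mul_nonneg (by linarith) (by linarith)) (sq_nonneg y)
    have hBy : -(2 * (s / 2 ^ 13)) ≤ (2 * θ ^ 2 * (1 - 9 * s / 64) - e) * y := by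
      have h1 : (2 * θ ^ 2 * (1 - 9 * s / 64) - e) * (-(s / 2 ^ 13)) ≤
          (2 * θ ^ 2 * (1 - 9 * s / 64) - e) * y := mul_le_mul_of_nonneg_left hy hB
      have h2 : 2 * θ ^ 2 * (1 - 9 * s / 64) - e ≤ 2 := by
        nlinarith [mul_nonneg (sq_nonneg θ) hs0.le]
      have h3 := mul_le_mul_of_nonneg_right h2 (by positivity : 0 ≤ s / 2 ^ 13)
      linarith
    have hA : 159 / 512 * s * θ * θ ≤ θ * ((1 - 9 * s / 64) * (θ ^ 2 + e - e ^ 2) - e) := by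
      linarith [mul_le_mul_of_nonneg_right hA0 (by linarith : 0 ≤ θ)]
    have hθ2 : s / 4 ≤ s * θ * θ := by nlinarith [mul_nonneg hs0.le (sub_nonneg.2 hθ)]
    have hid : θ * (1 - 9 * s / 64) * ((θ + y) ^ 2 + e - e ^ 2) - (θ + y) * e =
        θ * ((1 - 9 * s / 64) * (θ ^ 2 + e - e ^ 2) - e) +
        (2 * θ ^ 2 * (1 - 9 * s / 64) - e) * y + θ * (1 - 9 * s / 64) * y ^ 2 := by ring
    linarith
  have hD : 0 < (θ + y) ^ 2 + e - e ^ 2 := by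
    linarith [pow_pos hq0 2, mul_pos he0 (sub_pos.2 he1)]
  have hDd : 0 < (θ + y) ^ 2 + d * (1 - d) := by
    linarith [pow_pos hq0 2, mul_nonneg hd0 (by linarith : 0 ≤ 1 - d)]
  have hTe : T * ((θ + y) ^ 2 + e - e ^ 2) ≤ e := by
    have h1 : d * ((θ + y) ^ 2 + e - e ^ 2) ≤ e * ((θ + y) ^ 2 + d * (1 - d)) := by
      have := mul_nonneg (sub_nonneg.2 hd) (add_nonneg (sq_nonneg (θ + y)) (mul_nonneg hd0 he0.le))
      linarith
    have h2 := mul_le_mul_of_nonneg_right hT hD.le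
    by_contra! h3
    have h4 := mul_lt_mul_of_pos_right h3 hDd
    linarith
  have h1 : (θ + y) * T < θ * (1 - 9 * s / 64) := by
    have h2 := mul_le_mul_of_nonneg_left hTe hq0.le
    by_contra! h3
    have h4 := mul_le_mul_of_nonneg_right h3 hD.le
    linarith
  have h2 : 1 - p ≤ 1 - T * p := by linarith [mul_le_mul_of_nonneg_right hT1 hp0]
  have h3 : 1 - 9 * s / 64 ≤ (1 - s / 8) * (1 - p) := by
    have := mul_nonneg hs0.le hp0
    linarith
  have h4 : (1 - s / 8) * (1 - p) ≤ (1 - s / 8) * (1 - T * p) :=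
    mul_le_mul_of_nonneg_left h2 (by linarith)
  have h5 := mul_le_mul_of_nonneg_left (h3.trans h4) (by linarith : 0 ≤ θ)
  linarith

/-- If deleting any vertex of `S` lowers the spectral radius of `G[S]` by at least
`θ (1 - s / 8)`, then `G[S]` has minimum degree at least `(θ - s / 4) |S|`. -/
lemma le_degree_of_maximal {V : Type*} [Fintype V] [DecidableEq V] [Nonempty V]
    (G : SimpleGraph V) [DecidableRel G.Adj] (S : Finset V) {θ s : ℝ} (hs0 : 0 < s)
    (hs4 : s ≤ 1 / 4) (hθ0 : 1 / 2 ≤ θ) (hθ1 : θ ≤ 1) (hsm : 2 ^ 17 ≤ s * S.card)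
    (hμθ : (θ - s / 2 ^ 13) * S.card ≤ (G.within S).specMax)
    (hmax : ∀ v ∈ S, (G.within (S.erase v)).specMax ≤ (G.within S).specMax - θ * (1 - s / 8)) :
    ∀ v ∈ S, (θ - s / 4) * S.card ≤ ((S.filter (G.Adj v)).card : ℝ) := by
  intro w hw
  by_contra! hlt
  set δ : ℝ := ((S.filter (G.Adj w)).card : ℝ) with hδ
  set m : ℝ := (S.card : ℝ) with hm
  have hm1 : 1 ≤ m := by
    rw [hm, Nat.one_le_cast, Nat.one_le_iff_ne_zero]
    exact Finset.card_ne_zero_of_mem hw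
  have hm0 : 0 < m := by linarith
  have hμ0 : 0 < (G.within S).specMax := lt_of_lt_of_le (mul_pos (by linarith) hm0) hμθ
  obtain ⟨v, hv, t, ht0, ht1, ht2, ht3⟩ := exists_erase G S hμ0 hw (δ := δ) (by rw [hδ]; congr!)
  set μ := (G.within S).specMax
  rw [← hm] at ht1 ht2
  have hp : 1 / m ≤ s / 2 ^ 17 := by
    rw [div_le_iff₀ hm0]; linarith
  have hnum := erase_numeric (s := s) (θ := θ) (y := μ / m - θ) (d := δ / m) (T := t * m)
    (p := 1 / m) hs0 hs4 hθ0 hθ1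
    (by have := (le_div_iff₀ hm0).2 hμθ; linarith) (by positivity)
    ((div_le_iff₀ hm0).2 hlt.le) ht1
    (by
      have e : t * m * ((θ + (μ / m - θ)) ^ 2 + δ / m * (1 - δ / m)) =
          t * (μ ^ 2 + δ * (m - δ)) / m := by
        rw [add_sub_cancel]; field_simp
      rw [e]
      exact div_le_div_of_nonneg_right ht2 hm0.le) (by positivity) hp
  have e1 : (θ + (μ / m - θ)) * (t * m) = μ * t := by rw [add_sub_cancel]; field_simp
  have e2 : t * m * (1 / m) = t := by field_simp
  rw [e1, e2] at hnum
  have ht : 0 ≤ 1 - t := by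
    have := mul_le_mul_of_nonneg_left hm1 ht0
    linarith
  have h3 := mul_le_mul_of_nonneg_right (hmax v hv) ht
  linarith

/-! ### Coloured subgraphs -/

/-- An `r`-coloured induced subgraph on `S` with almost the Turán number of edges has almost
balanced colour classes; removing the few vertices that miss many vertices of the other classes
leaves an induced subgraph of large minimum degree. Here `β³` plays the role of `b`. -/
lemma exists_minDegree_of_coloring {V : Type*} [Fintype V] [DecidableEq V] (G : SimpleGraph V)
    [DecidableRel G.Adj] (S : Finset V) {r : ℕ} (hr : 2 ≤ r) (f : V → Fin r)
    (hf : ∀ u ∈ S, ∀ v ∈ S, G.Adj u v → f u ≠ f v) {n β : ℝ} (hn : 0 < n) (hβ0 : 0 < β)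
    (hβ : β * (r : ℝ) ^ 2 ≤ 1 / 10) (hSm : (S.card : ℝ) ≤ n)
    (hSn : n - S.card ≤ 16 * (r : ℝ) ^ 2 * β ^ 3 * n)
    (hE : (1 - 1 / (r : ℝ)) * (S.card : ℝ) ^ 2 - 2 * β ^ 3 * n ^ 2 ≤
      ∑ u ∈ S, ((S.filter (G.Adj u)).card : ℝ)) :
    ∃ T ⊆ S, (1 - 4 * β) * n ≤ T.card ∧
      ∀ v ∈ T, (1 - 1 / (r : ℝ) - 7 * β) * n < (T.filter (G.Adj v)).card := by
  have hr0 : (2 : ℝ) ≤ r := by exact_mod_cast hr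
  have hr1 : (0 : ℝ) < r := by linarith
  have hβ40 : β ≤ 1 / 40 := by
    have := mul_le_mul_of_nonneg_left (pow_le_pow_left₀ (by norm_num) hr0 2) hβ0.le
    linarith
  set m : ℝ := (S.card : ℝ) with hm
  set N : Fin r → ℝ := fun i => ((S.filter fun u => f u = i).card : ℝ) with hN
  set D : V → ℝ := fun u => ((S.filter (G.Adj u)).card : ℝ) with hD
  set miss : V → ℝ := fun u => m - N (f u) - D u with hmiss
  have hmiss0 : ∀ u ∈ S, 0 ≤ miss u := fun u hu => by
    have hdisj : Disjoint (S.filter fun v => f v = f u) (S.filter (G.Adj u)) := by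
      rw [Finset.disjoint_filter]
      intro v hv h1 h2
      exact hf u hu v hv h2 h1.symm
    have h := Finset.card_le_card (Finset.union_subset
      (Finset.filter_subset (fun v => f v = f u) S) (Finset.filter_subset (G.Adj u) S))
    rw [Finset.card_union_of_disjoint hdisj] at h
    have h' : N (f u) + D u ≤ m := by simp only [hN, hD, hm]; exact_mod_cast h
    simp only [hmiss]; linarith
  have hNsum : ∑ i, N i = m := by
    simp only [hN, hm]
    exact_mod_cast (Finset.card_eq_sum_card_fiberwise (s := S) (t := Finset.univ) (f := f)
      fun _ _ => Finset.mem_coe.2 (Finset.mem_univ _)).symm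
  have hNsq : ∑ u ∈ S, N (f u) = ∑ i, N i ^ 2 := by
    rw [← Finset.sum_fiberwise_of_maps_to (s := S) (t := Finset.univ) (g := f)
      fun _ _ => Finset.mem_univ _]
    refine Finset.sum_congr rfl fun i _ => ?_
    rw [Finset.sum_congr rfl fun u hu => by rw [(Finset.mem_filter.1 hu).2], Finset.sum_const,
      nsmul_eq_mul, sq]
  have hmsum : ∑ u ∈ S, miss u = m ^ 2 - ∑ i, N i ^ 2 - ∑ u ∈ S, D u := by
    simp only [hmiss, Finset.sum_sub_distrib, hNsq, Finset.sum_const, nsmul_eq_mul]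
    rw [sq]
  have hvar : ∑ i, (N i - m / r) ^ 2 = ∑ i, N i ^ 2 - m ^ 2 / r := by
    have : ∀ i, (N i - m / r) ^ 2 = N i ^ 2 - 2 * (m / r) * N i + (m / r) ^ 2 := fun i => by ring
    simp only [this, Finset.sum_add_distrib, Finset.sum_sub_distrib, ← Finset.mul_sum, hNsum,
      Finset.sum_const, Finset.card_univ, Fintype.card_fin, nsmul_eq_mul]
    field_simp; ring
  have hE' : m ^ 2 - m ^ 2 / r - 2 * β ^ 3 * n ^ 2 ≤ ∑ u ∈ S, D u := by
    refine le_trans (le_of_eq ?_) hE; ring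
  have hmiss_le : ∑ u ∈ S, miss u ≤ 2 * β ^ 3 * n ^ 2 := by
    have : 0 ≤ ∑ i, (N i - m / r) ^ 2 := Finset.sum_nonneg fun _ _ => sq_nonneg _
    linarith
  have hvar_le : ∑ i, (N i - m / r) ^ 2 ≤ 2 * β ^ 3 * n ^ 2 := by
    have := Finset.sum_nonneg hmiss0
    linarith
  have hNi : ∀ i, N i ≤ m / r + β * n / 2 := fun i => by
    have h1 : (N i - m / r) ^ 2 ≤ 2 * β ^ 3 * n ^ 2 :=
      (Finset.single_le_sum (f := fun i => (N i - m / r) ^ 2) (fun _ _ => sq_nonneg _)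
        (Finset.mem_univ i)).trans hvar_le
    have h2 : 2 * β ^ 3 * n ^ 2 ≤ (β * n / 2) ^ 2 := by
      have : 0 ≤ (1 / 8 - β) * (2 * (β * n) ^ 2) :=
        mul_nonneg (by linarith) (by positivity)
      nlinarith
    have h3 := abs_le_of_sq_le_sq (h1.trans h2) (by positivity)
    linarith [(abs_le.1 h3).2]
  set L := S.filter fun u => β * n < miss u with hL
  have hLcard : (L.card : ℝ) ≤ 2 * β ^ 2 * n := by
    have h1 : (L.card : ℝ) * (β * n) ≤ ∑ u ∈ L, miss u := by
      rw [← nsmul_eq_mul]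
      exact Finset.card_nsmul_le_sum _ _ _ fun u hu => (Finset.mem_filter.1 hu).2.le
    have h2 : ∑ u ∈ L, miss u ≤ ∑ u ∈ S, miss u :=
      Finset.sum_le_sum_of_subset_of_nonneg (Finset.filter_subset _ _) fun u hu _ => hmiss0 u hu
    have h3 : (L.card : ℝ) * (β * n) ≤ 2 * β ^ 2 * n * (β * n) := by
      refine (h1.trans (h2.trans hmiss_le)).trans (le_of_eq ?_); ring
    exact le_of_mul_le_mul_right h3 (by positivity)
  have hLβ : (L.card : ℝ) ≤ β * n / 20 := by
    have : 0 ≤ (1 / 40 - β) * (β * n) := mul_nonneg (by linarith) (by positivity)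
    nlinarith
  have hmn : n - m ≤ β * n / 25 := by
    have h1 : 16 * (r : ℝ) ^ 2 * β ^ 3 * n ≤ 16 / 10 * β ^ 2 * n := by
      have := mul_le_mul_of_nonneg_right hβ (by positivity : 0 ≤ 16 * β ^ 2 * n)
      linarith
    have : 0 ≤ (1 / 40 - β) * (β * n) := mul_nonneg (by linarith) (by positivity)
    nlinarith
  have hβn : 0 < β * n := by positivity
  refine ⟨S \ L, Finset.sdiff_subset, ?_, fun v hv => ?_⟩
  · have h := Finset.card_sdiff_add_card_eq_card (Finset.filter_subset _ _ : L ⊆ S)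
    have h' : ((S \ L).card : ℝ) + L.card = m := by rw [hm]; exact_mod_cast h
    linarith
  · obtain ⟨hvS, hvL⟩ := Finset.mem_sdiff.1 hv
    have hv1 : miss v ≤ β * n := by
      by_contra! h
      exact hvL (Finset.mem_filter.2 ⟨hvS, h⟩)
    have hsub : S.filter (G.Adj v) ⊆ (S \ L).filter (G.Adj v) ∪ L := fun w hw => by
      rw [Finset.mem_filter] at hw
      by_cases hwL : w ∈ L
      · exact Finset.mem_union_right _ hwL
      · exact Finset.mem_union_left _
          (Finset.mem_filter.2 ⟨Finset.mem_sdiff.2 ⟨hw.1, hwL⟩, hw.2⟩)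
    have h1 := (Finset.card_le_card hsub).trans (Finset.card_union_le _ _)
    have h1' : D v ≤ (((S \ L).filter (G.Adj v)).card : ℝ) + L.card := by
      simp only [hD]; exact_mod_cast h1
    have h2 := hNi (f v)
    have hθm : (1 - 1 / (r : ℝ)) * n - (n - m) ≤ m - m / r := by
      have h : 0 ≤ 1 / (r : ℝ) * (n - m) := mul_nonneg (by positivity) (by linarith)
      have e : m - m / r = (1 - 1 / (r : ℝ)) * m := by ring
      rw [e]; linarith
    simp only [hmiss] at hv1
    linarith

lemma degree_induce_eq_card {V : Type*} [Fintype V] [DecidableEq V] (G : SimpleGraph V)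
    [DecidableRel G.Adj] (S : Finset V) (v : ((S : Set V) : Type _))
    [Fintype ((G.induce (S : Set V)).neighborSet v)] :
    (G.induce (S : Set V)).degree v = (S.filter (G.Adj v)).card := by
  rw [← SimpleGraph.card_neighborFinset_eq_degree,
    ← Finset.card_map (Function.Embedding.subtype _)]
  congr 1
  ext w
  simp [and_comm]

/-- Consequence of the Andrásfai–Erdős–Sós theorem. -/
lemma exists_coloring_of_minDegree {V : Type*} [Fintype V] [DecidableEq V] (G : SimpleGraph V)
    [DecidableRel G.Adj] {r : ℕ} (hr : 2 ≤ r) (S : Finset V) (hne : S.Nonempty)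
    (hdeg : ∀ v ∈ S, (1 - 1 / (r : ℝ) - 1 / (4 * (r : ℝ) ^ 2)) * S.card ≤
      (S.filter (G.Adj v)).card) (hL : ∀ L ⊆ S, ¬ G.IsNClique (r + 1) L) :
    ∃ f : V → Fin r, ∀ u ∈ S, ∀ v ∈ S, G.Adj u v → f u ≠ f v := by
  have hr0 : (2 : ℝ) ≤ r := by exact_mod_cast hr
  have hm0 : (0 : ℝ) < S.card := by exact_mod_cast hne.card_pos
  have : Nonempty ((S : Set V) : Type _) := hne.to_subtype
  have hfree : (G.induce (S : Set V)).CliqueFree (r + 1) := by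
    rw [SimpleGraph.cliqueFree_induce_iff]
    intro L hLS
    exact hL L (by exact_mod_cast hLS)
  have hcol : (G.induce (S : Set V)).Colorable r := by
    refine SimpleGraph.colorable_of_cliqueFree_lt_minDegree hfree (Nat.div_lt_of_lt_mul ?_)
    obtain ⟨v, hv⟩ := (G.induce (S : Set V)).exists_minimal_degree_vertex
    rw [hv, degree_induce_eq_card]
    have hc : Fintype.card ((S : Set V) : Type _) = S.card := by simp
    rw [hc]
    have h1 := hdeg v v.2
    have h2 : (3 * (r : ℝ) - 4) * (S.card : ℝ) < (3 * r - 1) * ((1 - 1 / (r : ℝ) - 1 / (4 * (r : ℝ) ^ 2)) * S.card) := by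
      have e : (3 * (r : ℝ) - 1) * ((1 - 1 / (r : ℝ) - 1 / (4 * (r : ℝ) ^ 2)) * S.card) =
          (3 * (r : ℝ) - 4) * (S.card : ℝ) + (1 / (4 * r) + 1 / (4 * (r : ℝ) ^ 2)) * (S.card : ℝ) := by
        field_simp; ring
      rw [e]
      have : 0 < (1 / (4 * (r : ℝ)) + 1 / (4 * (r : ℝ) ^ 2)) * (S.card : ℝ) := by positivity
      linarith
    have h3 := h2.trans_le (mul_le_mul_of_nonneg_left h1 (by linarith : 0 ≤ 3 * (r : ℝ) - 1))
    have e1 : ((3 * r - 4 : ℕ) : ℝ) = 3 * r - 4 := by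
      rw [Nat.cast_sub (by omega)]; push_cast; ring
    have e2 : ((3 * r - 1 : ℕ) : ℝ) = 3 * r - 1 := by
      rw [Nat.cast_sub (by omega)]; push_cast; ring
    rw [← e1, ← e2] at h3
    exact_mod_cast h3
  obtain ⟨C⟩ := hcol
  refine ⟨fun v => if h : v ∈ S then C ⟨v, h⟩ else ⟨0, by omega⟩, fun u hu v hv huv => ?_⟩
  simp only [dif_pos hu, dif_pos hv]
  exact C.valid huv

/-! ### The extremal set and the conclusion -/

/-- The core of the argument. `S` maximizes `μ(G[S]) - α |S|`, with `α` slightly below `1 - 1/r`,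
among the sets containing at least half of the vertices. Then every vertex of `G[S]` has large
degree, so that `G[S]` is `K_{r+1}`-free for lack of joints, and hence `r`-colourable by the
Andrásfai–Erdős–Sós theorem. -/
lemma exists_colored_subset {V : Type*} [Fintype V] [DecidableEq V] [Nonempty V]
    (G : SimpleGraph V) {r n : ℕ} (hr : 2 ≤ r) {b : ℝ}
    (hb1 : b < 1 / (2 ^ 10 * (r : ℝ) ^ 6)) (hn : r ^ 20 ≤ n) (hcard : Fintype.card V = n)
    (hmu : (1 - 1 / (r : ℝ) - b) * n < G.specMax)
    (hJ : (G.jointSize (r + 1) : ℝ) ≤ (n : ℝ) ^ (r - 1) / (r : ℝ) ^ (2 * r + 5)) :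
    ∃ (S : Finset V) (f : V → Fin r), n ≤ 2 * S.card ∧
      (∀ u ∈ S, ∀ v ∈ S, G.Adj u v → f u ≠ f v) ∧
      (1 - 1 / (r : ℝ)) * S.card + (1 - 1 / (r : ℝ)) * (1 / (r : ℝ) ^ 2) / 8 * (n - S.card) - b * n
        ≤ (G.within S).specMax := by
  classical
  have hr0 : (2 : ℝ) ≤ r := by exact_mod_cast hr
  have hr1 : (0 : ℝ) < r := by linarith
  set θ : ℝ := 1 - 1 / (r : ℝ) with hθdef
  set s : ℝ := 1 / (r : ℝ) ^ 2 with hsdef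
  set α : ℝ := θ * (1 - s / 8) with hα
  have hs0 : 0 < s := by positivity
  have hsr : s * (r : ℝ) ^ 2 = 1 := by rw [hsdef]; field_simp
  have hs4 : s ≤ 1 / 4 := by
    rw [hsdef]; exact one_div_le_one_div_of_le (by norm_num) (by nlinarith)
  have hθ0 : 1 / 2 ≤ θ := by
    have := one_div_le_one_div_of_le (by norm_num) hr0
    rw [hθdef]; linarith
  have hθ1 : θ ≤ 1 := by
    have : 0 < 1 / (r : ℝ) := by positivity
    rw [hθdef]; linarith
  have hbs : b < s / 2 ^ 14 := by
    refine hb1.trans_le ?_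
    rw [hsdef, div_div]
    refine one_div_le_one_div_of_le (by positivity) ?_
    have : (2 : ℝ) ^ 4 ≤ (r : ℝ) ^ 4 := pow_le_pow_left₀ (by norm_num) hr0 4
    have := mul_le_mul_of_nonneg_left this (by positivity : 0 ≤ 2 ^ 10 * (r : ℝ) ^ 2)
    linarith
  have hns : 2 ^ 18 ≤ s * n := by
    have h1 : (2 : ℝ) ^ 18 * (r : ℝ) ^ 2 ≤ n := by
      have h2 : (r : ℝ) ^ 20 ≤ n := by exact_mod_cast hn
      have h3 : (2 : ℝ) ^ 18 ≤ (r : ℝ) ^ 18 := pow_le_pow_left₀ (by norm_num) hr0 18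
      have := mul_le_mul_of_nonneg_right h3 (by positivity : 0 ≤ (r : ℝ) ^ 2)
      linarith
    have := mul_le_mul_of_nonneg_left h1 hs0.le
    calc (2 : ℝ) ^ 18 = s * (2 ^ 18 * (r : ℝ) ^ 2) := by rw [mul_left_comm, hsr, mul_one]
      _ ≤ _ := this
  have hn0 : 0 < n := lt_of_lt_of_le (by positivity) hn
  have hn0' : (0 : ℝ) < n := by exact_mod_cast hn0
  obtain ⟨S, hS, hmax⟩ := Finset.exists_max_image
    (Finset.univ.filter fun S : Finset V => n ≤ 2 * S.card)
    (fun S => (G.within S).specMax - α * S.card)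
    ⟨Finset.univ, by rw [Finset.mem_filter, Finset.card_univ, hcard]; exact ⟨Finset.mem_univ _, by omega⟩⟩
  have hSn : n ≤ 2 * S.card := (Finset.mem_filter.1 hS).2
  have hmax' : ∀ S' : Finset V, n ≤ 2 * S'.card →
      (G.within S').specMax - α * S'.card ≤ (G.within S).specMax - α * S.card :=
    fun S' h => hmax S' (Finset.mem_filter.2 ⟨Finset.mem_univ _, h⟩)
  set μ := (G.within S).specMax with hμdef
  set m : ℝ := (S.card : ℝ) with hm
  have hSn' : (n : ℝ) ≤ 2 * m := by rw [hm]; exact_mod_cast hSn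
  have hmn : m ≤ n := by rw [hm, ← hcard]; exact_mod_cast Finset.card_le_univ S
  have hm0 : 0 < m := by linarith
  have hμ : θ * m + θ * s / 8 * (n - m) - b * n ≤ μ := by
    have h := hmax' Finset.univ (by rw [Finset.card_univ, hcard]; omega)
    rw [within_univ, Finset.card_univ, hcard] at h
    have e : θ * m + θ * s / 8 * (n - m) - b * n = (θ - b) * n - α * n + α * m := by
      rw [hα]; ring
    rw [e]; linarith
  have hnm0 : 0 ≤ θ * s / 8 * (n - m) :=
    mul_nonneg (by positivity) (by linarith)
  have hbn : b * n ≤ s / 2 ^ 14 * n := mul_le_mul_of_nonneg_right hbs.le hn0'.le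
  have hsm : s * n ≤ s * (2 * m) := mul_le_mul_of_nonneg_left hSn' hs0.le
  have hμθ : (θ - s / 2 ^ 13) * m ≤ μ := by linarith
  have hμ0 : 0 < μ := lt_of_lt_of_le (mul_pos (by linarith) hm0) hμθ
  -- Maximality keeps `S` away from the boundary of the range of admissible sizes.
  have hS2 : n + 2 ≤ 2 * S.card := by
    by_contra! hlt
    have hlt' : 2 * m ≤ n + 2 := by rw [hm]; exact_mod_cast hlt.le
    have h1 := specMax_within_lt G hr hn0 hJ S hSn
    have h2 : (1 - 1 / (r : ℝ) + 3 / (64 * (r : ℝ) ^ 2)) * S.card = θ * m + 3 / 64 * (s * m) := by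
      rw [hθdef, hsdef, hm]; field_simp
    rw [h2] at h1
    have h3 := mul_le_mul_of_nonneg_left hlt' hs0.le
    have h4 : 1 / 16 * (s * (n - m)) ≤ θ * s / 8 * (n - m) := by
      have := mul_le_mul_of_nonneg_right hθ0 (mul_nonneg hs0.le (sub_nonneg.2 hmn))
      linarith
    linarith
  have hdeg : ∀ v ∈ S, (θ - s / 4) * S.card ≤ ((S.filter (G.Adj v)).card : ℝ) := by
    refine le_degree_of_maximal G S hs0 hs4 hθ0 hθ1 (by linarith) hμθ fun v hv => ?_
    have hcard' : (S.erase v).card + 1 = S.card := Finset.card_erase_add_one hv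
    have hcard'' : ((S.erase v).card : ℝ) = m - 1 := by
      rw [hm, ← hcard']; push_cast; ring
    have h1 := hmax' (S.erase v) (by omega)
    rw [hcard''] at h1
    linarith
  have hdeg' : ∀ v ∈ S, (1 - 1 / (r : ℝ) - 1 / (4 * (r : ℝ) ^ 2)) * S.card ≤
      (S.filter (G.Adj v)).card := fun v hv => by
    refine le_trans (le_of_eq ?_) (hdeg v hv)
    rw [hθdef, hsdef, div_div, mul_comm ((r : ℝ) ^ 2) 4]
  obtain ⟨f, hf⟩ := exists_coloring_of_minDegree G hr S (Finset.card_pos.1 (by omega)) hdeg'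
    (no_clique_of_minDegree G hr hn0 hJ S hSn hdeg')
  exact ⟨S, f, hSn, hf, hμ⟩

/-- **Theorem 4** (Nikiforov, "Spectral saturation"). Let `r ≥ 2`, `0 < b < 2^(-10) r^(-6)`,
`n ≥ r^20`, and `G` be a graph of order `n`. If `μ(G) > (1 - 1/r - b)n`, then either
(a) `js_(r+1)(G) > n^(r-1)/r^(2r+5)`, or (b) `G` contains an induced `r`-partite subgraph
`G₀` of order at least `(1 - 4b^(1/3))n` with `δ(G₀) > (1 - 1/r - 7b^(1/3))n`. -/
theorem spectral_joints_stability {V : Type*} [Fintype V] [DecidableEq V] (r n : ℕ)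
    (hr : 2 ≤ r) (b : ℝ) (hb0 : 0 < b) (hb1 : b < 1 / (2 ^ 10 * (r : ℝ) ^ 6))
    (hn : r ^ 20 ≤ n) (G : SimpleGraph V) (hcard : Fintype.card V = n)
    (hmu : (1 - 1 / (r : ℝ) - b) * n < G.specMax) :
    ((n : ℝ) ^ (r - 1) / (r : ℝ) ^ (2 * r + 5) < (G.jointSize (r + 1) : ℝ)) ∨
    (∃ s : Finset V, (SimpleGraph.induce (↑s) G).Colorable r ∧
      (1 - 4 * b ^ ((1 : ℝ) / 3)) * n ≤ (s.card : ℝ) ∧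
      (1 - 1 / (r : ℝ) - 7 * b ^ ((1 : ℝ) / 3)) * n < ((SimpleGraph.induce (↑s) G).minDeg : ℝ)) := by
  classical
  by_cases hJ : (n : ℝ) ^ (r - 1) / (r : ℝ) ^ (2 * r + 5) < (G.jointSize (r + 1) : ℝ)
  · exact Or.inl hJ
  refine Or.inr ?_
  rw [not_lt] at hJ
  have hr0 : (2 : ℝ) ≤ r := by exact_mod_cast hr
  have hr1 : (0 : ℝ) < r := by linarith
  have hn0 : 0 < n := lt_of_lt_of_le (by positivity) hn
  have hn0' : (0 : ℝ) < n := by exact_mod_cast hn0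
  have : Nonempty V := Fintype.card_pos_iff.1 (by omega)
  obtain ⟨S, f, hSn, hf, hμ⟩ := exists_colored_subset G hr hb1 hn hcard hmu hJ
  set β := b ^ ((1 : ℝ) / 3) with hβdef
  have hβ0 : 0 < β := Real.rpow_pos_of_pos hb0 _
  have hβ3 : β ^ 3 = b := by
    rw [hβdef, ← Real.rpow_natCast, ← Real.rpow_mul hb0.le]; norm_num
  have hβr : β * (r : ℝ) ^ 2 ≤ 1 / 10 := by
    by_contra! h
    have h1 := pow_lt_pow_left₀ h (by norm_num) (by norm_num : 3 ≠ 0)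
    have h2 : (β * (r : ℝ) ^ 2) ^ 3 = b * (r : ℝ) ^ 6 := by rw [← hβ3]; ring
    rw [h2] at h1
    rw [lt_div_iff₀ (by positivity)] at hb1
    linarith
  have hSm : (S.card : ℝ) ≤ n := by rw [← hcard]; exact_mod_cast Finset.card_le_univ S
  have hSn' : (n : ℝ) ≤ 2 * S.card := by exact_mod_cast hSn
  set θ : ℝ := 1 - 1 / (r : ℝ) with hθdef
  have hθ0 : 1 / 2 ≤ θ := by
    have := one_div_le_one_div_of_le (by norm_num) hr0
    rw [hθdef]; linarith
  have hθS : b * n < θ * S.card := by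
    have h1 : b < 1 / 4 := hb1.trans_le (one_div_le_one_div_of_le (by norm_num) (by
      have := one_le_pow₀ (by linarith : (1 : ℝ) ≤ r) (n := 6)
      linarith))
    have h2 := mul_lt_mul_of_pos_right h1 hn0'
    have h3 := mul_le_mul_of_nonneg_right hθ0 (Nat.cast_nonneg S.card : (0 : ℝ) ≤ S.card)
    linarith
  have hnm0 : 0 ≤ θ * (1 / (r : ℝ) ^ 2) / 8 * (n - S.card) :=
    mul_nonneg (by positivity) (by linarith)
  have hμ0 : 0 < (G.within S).specMax := by linarith
  obtain ⟨hμ1, hμ2⟩ := specMax_le_of_coloring_s3 G S hμ0 (by omega) f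
    fun u v h => hf u h.2.1 v h.2.2 h.1
  rw [← hθdef] at hμ1 hμ2
  have hnm : n - S.card ≤ 16 * (r : ℝ) ^ 2 * β ^ 3 * n := by
    have h1 : θ * (1 / (r : ℝ) ^ 2) / 8 * (n - S.card) ≤ b * n := by linarith
    have h2 : 1 / 2 * (1 / (r : ℝ) ^ 2 / 8 * (n - S.card)) ≤
        θ * (1 / (r : ℝ) ^ 2 / 8 * (n - S.card)) :=
      mul_le_mul_of_nonneg_right hθ0 (mul_nonneg (by positivity) (by linarith))
    have h3 : 1 / 2 * (1 / (r : ℝ) ^ 2 / 8 * (n - S.card)) ≤ b * n := by linarith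
    have h4 := mul_le_mul_of_nonneg_left h3 (by positivity : 0 ≤ 16 * (r : ℝ) ^ 2)
    have h5 : 16 * (r : ℝ) ^ 2 * (1 / 2 * (1 / (r : ℝ) ^ 2 / 8 * (n - S.card))) = n - S.card := by
      field_simp; norm_num
    rw [hβ3]; linarith
  have hE : θ * (S.card : ℝ) ^ 2 - 2 * β ^ 3 * (n : ℝ) ^ 2 ≤
      ∑ u ∈ S, ((S.filter (G.Adj u)).card : ℝ) := by
    have h1 : (θ * S.card - b * n) ^ 2 ≤ (G.within S).specMax ^ 2 :=
      pow_le_pow_left₀ (by linarith) (by linarith) 2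
    have h2 : θ * (θ * (S.card : ℝ) ^ 2 - 2 * β ^ 3 * (n : ℝ) ^ 2) ≤ (θ * S.card - b * n) ^ 2 := by
      have h3 := mul_le_mul_of_nonneg_left hSm (by positivity : 0 ≤ 2 * θ * b * n)
      have h4 := sq_nonneg (b * n)
      rw [hβ3]; linarith
    have h3 := (h2.trans h1).trans hμ2
    exact le_of_mul_le_mul_left (by convert h3) (by linarith : 0 < θ)
  obtain ⟨T, hTS, hTcard, hTdeg⟩ :=
    exists_minDegree_of_coloring G S hr f hf hn0' hβ0 hβr hSm hnm hE
  have hβ1 : β < 1 / 4 := by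
    have := mul_le_mul_of_nonneg_left (pow_le_pow_left₀ (by norm_num) hr0 2) hβ0.le
    linarith
  have hTne : T.Nonempty := by
    rw [← Finset.card_pos, ← Nat.cast_pos (α := ℝ)]
    exact lt_of_lt_of_le (mul_pos (by linarith) hn0') hTcard
  refine ⟨T, ⟨⟨fun v => f v, fun {u v} h => hf u (hTS u.2) v (hTS v.2) h⟩⟩, hTcard, ?_⟩
  have : Nonempty ((T : Set V) : Type _) := hTne.to_subtype
  let _ := Classical.decRel (SimpleGraph.induce (T : Set V) G).Adj
  obtain ⟨v, hv⟩ := (SimpleGraph.induce (T : Set V) G).exists_minimal_degree_vertex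
  have h := hTdeg v v.2
  rw [← degree_induce_eq_card G T v, ← hv] at h
  exact h
end
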